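/- Let M be an o-minimal structure, let A ⊆ M be an infinite definable set, and fix a formula φ(x;y). For a definable type p(x) over M, let p|_{φ,A}(x) = {φ(x;a) : a ∈ A^{|y|}, φ(x;a) ∈ p(x)} denote its restriction to instances of φ with parameters from A. Then the set {p|_{φ,A}(x) : p(x) ∈ S_x^def(M)} of all such restrictions has cardinality at most |A|. -/

import Mathlib

open FirstOrder FirstOrder.Language Set Cardinal Filter Topology

universe u

/-- A subset of a linear order is a finite union of points and open intervals
with endpoints in `M ∪ {-∞, +∞}` (lower endpoints in `WithBot M = M ∪ {-∞}`,
upper endpoints in `WithTop M = M ∪ {+∞}`). -/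
def IsFinUnionPointsIntervals {M : Type*} [LinearOrder M] (s : Set M) : Prop :=
  ∃ (P : Finset M) (I : Finset (WithBot M × WithTop M)),
    s = ↑P ∪ ⋃ p ∈ I, {x : M | p.1 < (x : WithBot M) ∧ (x : WithTop M) < p.2}

/-- `M` is an o-minimal `L`-structure: the language defines the linear order of `M`,
which is dense and without endpoints, and every subset of `M` definable with parameters
is a finite union of points and open intervals with endpoints in `M ∪ {-∞, +∞}`. -/
structure IsOMinimal (L : FirstOrder.Language) (M : Type*) [L.Structure M] [LinearOrder M] :
    Prop where
  denselyOrdered : DenselyOrdered M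
  noMinOrder : NoMinOrder M
  noMaxOrder : NoMaxOrder M
  definable_lt : (∅ : Set M).Definable L {x : Fin 2 → M | x 0 < x 1}
  tame : ∀ s : Set M, (Set.univ : Set M).Definable₁ L s → IsFinUnionPointsIntervals s

/-- Given a formula `φ(x;y)` of `L` (with `x` an `m`-tuple and `y` an `n`-tuple) and a tuple
`b ∈ M^n` of parameters, the sentence `φ(x;b)` of the language `L[[M]][[Fin m]]` obtained by
substituting the constants `b` for the variables `y` (complete types over `M` in variables
`x` are maximal consistent sets of such sentences). -/
noncomputable def paramSentence {L : FirstOrder.Language} {M : Type*} [L.Structure M]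
    {m n : ℕ} (φ : L.Formula (Fin m ⊕ Fin n)) (b : Fin n → M) :
    (L[[M]])[[Fin m]].Sentence :=
  Formula.equivSentence
    (((L.lhomWithConstants M).onFormula φ).subst
      (Sum.elim Term.var fun j => (L.con (b j)).term))

/-- A complete type `p(x)` over `M` is definable if, for every formula `φ(x;y)`, there are a
formula `ψ(y;z)` and a tuple `c ∈ M^|z|` with `{b ∈ M^|y| : φ(x;b) ∈ p} = ψ(M^|y|; c)`. -/
def IsDefinableType {L : FirstOrder.Language} {M : Type*} [L.Structure M] {m : ℕ}
    (p : (L[[M]].completeTheory M).CompleteType (Fin m)) : Prop :=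
  ∀ (n : ℕ) (φ : L.Formula (Fin m ⊕ Fin n)),
    ∃ (k : ℕ) (ψ : L.Formula (Fin n ⊕ Fin k)) (c : Fin k → M),
      {b : Fin n → M | paramSentence φ b ∈ p} =
        {b : Fin n → M | ψ.Realize (Sum.elim b c)}

/-- The restriction `p|_{φ,A}` of a type `p(x)` over `M` to the instances of `φ(x;y)` with
parameters from `A`: the set of sentences `φ(x;a)` with `a ∈ A^|y|` and `φ(x;a) ∈ p`. -/
noncomputable def restrictTo {L : FirstOrder.Language} {M : Type*} [L.Structure M] (A : Set M)
    {m n : ℕ} (φ : L.Formula (Fin m ⊕ Fin n))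
    (p : (L[[M]].completeTheory M).CompleteType (Fin m)) :
    Set ((L[[M]])[[Fin m]].Sentence) :=
  {σ | ∃ b : Fin n → M, (∀ i, b i ∈ A) ∧ σ = paramSentence φ b ∧ σ ∈ p}

namespace OM
set_option linter.unusedSectionVars false
set_option linter.unusedSimpArgs false

/-- finite-dimensional contexts -/
class Ctx (M : Type u) (Γ : Type u) where
  idx : Type
  fin : Finite idx
  eqv : Γ ≃ (idx → M)

attribute [instance] Ctx.fin

instance ctxSelf (M : Type u) : Ctx M M := ⟨Unit, inferInstance, (Equiv.funUnique Unit M).symm⟩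
instance ctxUnit (M : Type u) : Ctx M PUnit.{u+1} :=
  ⟨Empty, inferInstance, ⟨fun _ e => e.elim, fun _ => ⟨⟩, fun _ => rfl, fun _ => funext fun e => e.elim⟩⟩
instance ctxProd (M Γ Δ : Type u) [a : Ctx M Γ] [b : Ctx M Δ] : Ctx M (Γ × Δ) :=
  ⟨a.idx ⊕ b.idx, inferInstance,
    (Equiv.prodCongr a.eqv b.eqv).trans (Equiv.sumArrowEquivProdArrow _ _ _).symm⟩

/-- iterated products -/
def Tup (M : Type u) : ℕ → Type u
  | 0 => PUnit
  | n+1 => M × Tup M n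

@[reducible] def ctxTupAux (M : Type u) : (n : ℕ) → Ctx M (Tup M n)
  | 0 => ctxUnit M
  | n+1 => @ctxProd M M (Tup M n) (ctxSelf M) (ctxTupAux M n)

instance ctxTup (M : Type u) (n : ℕ) : Ctx M (Tup M n) := ctxTupAux M n

section
variable (L : FirstOrder.Language.{u,u}) (M : Type u) [L.Structure M]
variable {Γ Δ Θ : Type u} [Ctx M Γ] [Ctx M Δ] [Ctx M Θ]

def Def (P : Γ → Prop) : Prop :=
  (univ : Set M).Definable L {v : Ctx.idx M Γ → M | P (Ctx.eqv.symm v)}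

def CM (f : Γ → Δ) : Prop :=
  (univ : Set M).DefinableMap L
    (fun (v : Ctx.idx M Γ → M) (j : Ctx.idx M Δ) => Ctx.eqv (f (Ctx.eqv.symm v)) j)

variable {L M}

theorem CM.id : CM L M (fun g : Γ => g) := by
  intro j; simpa using DefinableFun.proj L

theorem CM.const (d : Δ) : CM L M (fun _ : Γ => d) := by
  intro j; exact definableFun_const L _ (mem_univ _)

theorem CM.fst {f : Γ → Δ × Θ} (h : CM L M f) : CM L M (fun g => (f g).1) := by
  intro j; exact h (Sum.inl j)

theorem CM.snd {f : Γ → Δ × Θ} (h : CM L M f) : CM L M (fun g => (f g).2) := by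
  intro j; exact h (Sum.inr j)

theorem CM.pair {f : Γ → Δ} {f' : Γ → Θ} (h : CM L M f) (h' : CM L M f') :
    CM L M (fun g => (f g, f' g)) := by
  rintro (j | j)
  · exact h j
  · exact h' j

theorem Def.comp {P : Δ → Prop} {f : Γ → Δ} (h : Def L M P) (hf : CM L M f) :
    Def L M (fun g => P (f g)) := by
  have := Definable.preimage_map hf h
  unfold Def
  convert this using 1
  ext v
  simp

theorem Def.mem {S : Set Δ} {f : Γ → Δ} (h : Def L M (· ∈ S)) (hf : CM L M f) :
    Def L M (fun g => f g ∈ S) := h.comp hf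

theorem Def.and {P Q : Γ → Prop} (h : Def L M P) (h' : Def L M Q) :
    Def L M (fun g => P g ∧ Q g) := Definable.inter h h'
theorem Def.or {P Q : Γ → Prop} (h : Def L M P) (h' : Def L M Q) :
    Def L M (fun g => P g ∨ Q g) := Definable.union h h'
theorem Def.not {P : Γ → Prop} (h : Def L M P) :
    Def L M (fun g => ¬ P g) := Definable.compl h
theorem Def.congr {P Q : Γ → Prop} (h : Def L M P) (e : ∀ g, Q g ↔ P g) : Def L M Q := by
  have : Q = P := funext fun g => propext (e g)
  rw [this]; exact h
theorem Def.imp {P Q : Γ → Prop} (h : Def L M P) (h' : Def L M Q) :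
    Def L M (fun g => P g → Q g) := (h.not.or h').congr fun g => by tauto
theorem Def.iff {P Q : Γ → Prop} (h : Def L M P) (h' : Def L M Q) :
    Def L M (fun g => P g ↔ Q g) := ((h.imp h').and (h'.imp h)).congr fun g => by tauto
theorem Def.tt : Def L M (fun _ : Γ => True) := definable_univ
theorem Def.ff : Def L M (fun _ : Γ => False) := definable_empty
theorem Def.cst (p : Prop) : Def L M (fun _ : Γ => p) := by
  by_cases h : p
  · exact Def.tt.congr (by simp [h])
  · exact Def.ff.congr (by simp [h])
theorem Def.ex {P : Γ → Δ → Prop} (h : Def L M (fun p : Γ × Δ => P p.1 p.2)) :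
    Def L M (fun g => ∃ d, P g d) := by
  have h1 := Definable.exists_of_finite (β := Ctx.idx M Δ) h
  unfold Def
  convert h1 using 1
  ext v
  constructor
  · rintro ⟨d, hd⟩
    exact ⟨Ctx.eqv d, by
      change P (Ctx.eqv.symm fun i => v i) (Ctx.eqv.symm (Ctx.eqv d)); simpa using hd⟩
  · rintro ⟨d, hd⟩
    exact ⟨Ctx.eqv.symm d, hd⟩
theorem Def.all {P : Γ → Δ → Prop} (h : Def L M (fun p : Γ × Δ => P p.1 p.2)) :
    Def L M (fun g => ∀ d, P g d) :=
  (Def.ex (P := fun g d => ¬ P g d) h.not).not.congr fun g => by simp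
theorem Def.eq {f f' : Γ → Δ} (h : CM L M f) (h' : CM L M f') :
    Def L M (fun g => f g = f' g) := by
  have : Def L M (fun g => ∀ j : Ctx.idx M Δ, Ctx.eqv (f g) j = Ctx.eqv (f' g) j) := by
    unfold Def
    have h2 := definable_iInter_of_finite (L := L) (A := (univ : Set M))
      (f := fun j : Ctx.idx M Δ => {v : Ctx.idx M Γ → M |
        Ctx.eqv (f (Ctx.eqv.symm v)) j = Ctx.eqv (f' (Ctx.eqv.symm v)) j})
      (fun j => DefinableFun.ofPred_eq (h j) (h' j))
    convert h2 using 1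
    ext v; simp
  refine this.congr fun g => ?_
  rw [← funext_iff]; simp
/-- order definability -/
class DLT (L : FirstOrder.Language.{u,u}) (M : Type u) [L.Structure M] [LinearOrder M] : Prop where
  lt' : Def L M (fun p : M × M => p.1 < p.2)

variable [LinearOrder M] [DLT L M]
theorem Def.lt {f f' : Γ → M} (h : CM L M f) (h' : CM L M f') :
    Def L M (fun g => f g < f' g) := (DLT.lt' (L := L) (M := M)).comp (h.pair h')
theorem Def.le {f f' : Γ → M} (h : CM L M f) (h' : CM L M f') :
    Def L M (fun g => f g ≤ f' g) := (Def.lt h' h).not.congr fun g => by simp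
theorem Def.Ioo {f f' f'' : Γ → M} (h : CM L M f) (h' : CM L M f') (h'' : CM L M f'') :
    Def L M (fun g => f'' g ∈ Set.Ioo (f g) (f' g)) := (Def.lt h h'').and (Def.lt h'' h')

theorem mkDef {P : Γ → Prop} (h : Def L M P := by
    try simp only [Set.mem_ofPred_eq, Set.mem_inter_iff, Set.mem_union, Set.mem_compl_iff, Set.mem_sdiff,
      Set.mem_Iio, Set.mem_Ioi, Set.mem_Iic, Set.mem_Ici, Set.mem_Ioo, Set.mem_Icc, Set.mem_Ico,
      Set.mem_Ioc, Set.mem_singleton_iff, Set.mem_univ, ne_eq, gt_iff_lt, ge_iff_le, Set.Nonempty, Set.subset_def]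
    repeat' first
      | with_reducible assumption
      | with_reducible exact Def.cst _
      | with_reducible exact CM.id
      | with_reducible exact CM.const _
      | with_reducible apply CM.fst
      | with_reducible apply CM.snd
      | with_reducible apply CM.pair
      | with_reducible apply Def.and
      | with_reducible apply Def.or
      | with_reducible apply Def.not
      | with_reducible apply Def.iff
      | with_reducible apply Def.ex
      | with_reducible apply Def.imp
      | with_reducible apply Def.all
      | with_reducible apply Def.lt
      | with_reducible apply Def.le
      | with_reducible apply Def.eq
      | (with_reducible refine Def.mem (by with_reducible assumption) ?_)) : Def L M P := h

set_option maxHeartbeats 50000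
end
end OM

namespace OM
set_option linter.unusedSectionVars false
set_option linter.unusedSimpArgs false

section
variable {M : Type u} [LinearOrder M]

/-- right germs -/
def RN [NoMaxOrder M] (x : M) : Filter M where
  sets := {s | ∃ b, x < b ∧ ∀ y, x < y → y < b → y ∈ s}
  univ_sets := by obtain ⟨b, hb⟩ := exists_gt x; exact ⟨b, hb, fun _ _ _ => trivial⟩
  sets_of_superset := fun ⟨b, hb, h⟩ hs => ⟨b, hb, fun y h1 h2 => hs (h y h1 h2)⟩
  inter_sets := fun ⟨b, hb, h⟩ ⟨b', hb', h'⟩ => ⟨min b b', lt_min hb hb', fun y h1 h2 =>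
    ⟨h y h1 (lt_of_lt_of_le h2 (min_le_left _ _)), h' y h1 (lt_of_lt_of_le h2 (min_le_right _ _))⟩⟩

/-- left germs -/
def LN [NoMinOrder M] (x : M) : Filter M where
  sets := {s | ∃ b, b < x ∧ ∀ y, y < x → b < y → y ∈ s}
  univ_sets := by obtain ⟨b, hb⟩ := exists_lt x; exact ⟨b, hb, fun _ _ _ => trivial⟩
  sets_of_superset := fun ⟨b, hb, h⟩ hs => ⟨b, hb, fun y h1 h2 => hs (h y h1 h2)⟩
  inter_sets := fun ⟨b, hb, h⟩ ⟨b', hb', h'⟩ => ⟨max b b', max_lt hb hb', fun y h1 h2 =>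
    ⟨h y h1 (lt_of_le_of_lt (le_max_left _ _) h2), h' y h1 (lt_of_le_of_lt (le_max_right _ _) h2)⟩⟩

theorem ev_RN [NoMaxOrder M] {x : M} {P : M → Prop} :
    (∀ᶠ y in RN x, P y) ↔ ∃ b, x < b ∧ ∀ y, x < y → y < b → P y := Iff.rfl
end

class OMin (L : FirstOrder.Language.{u,u}) (M : Type u) [L.Structure M] [LinearOrder M] : Prop
    extends DLT L M where
  t1 : ∀ s : Set M, Def L M (· ∈ s) → ∀ x, (∃ b, x < b ∧ ∀ y, x < y → y < b → y ∈ s) ∨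
    (∃ b, x < b ∧ ∀ y, x < y → y < b → y ∉ s)
  t1' : ∀ s : Set M, Def L M (· ∈ s) → ∀ x, (∃ b, b < x ∧ ∀ y, y < x → b < y → y ∈ s) ∨
    (∃ b, b < x ∧ ∀ y, y < x → b < y → y ∉ s)
  t2 : ∀ s : Set M, Def L M (· ∈ s) → s.Infinite → ∃ a b, a < b ∧ ∀ y, a < y → y < b → y ∈ s
  t3 : ∀ s : Set M, Def L M (· ∈ s) → s.Nonempty → BddAbove s → ∃ c, IsLUB s c
  t3' : ∀ s : Set M, Def L M (· ∈ s) → s.Nonempty → BddBelow s → ∃ c, IsGLB s c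
  t4 : ∀ s : Set M, Def L M (· ∈ s) → (∃ a, ∀ y, a < y → y ∈ s) ∨ (∃ a, ∀ y, a < y → y ∉ s)
  t4' : ∀ s : Set M, Def L M (· ∈ s) → (∃ a, ∀ y, y < a → y ∈ s) ∨ (∃ a, ∀ y, y < a → y ∉ s)

section der
variable {M : Type u} [LinearOrder M]

def Dcd (F : Filter M) (s : Set M) : Prop := (∀ᶠ y in F, y ∈ s) ∨ (∀ᶠ y in F, y ∉ s)

theorem Dcd.compl {F : Filter M} {s : Set M} (h : Dcd F s) : Dcd F sᶜ := by
  rcases h with h | h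
  · exact Or.inr (by simpa using h)
  · exact Or.inl (by simpa using h)
theorem Dcd.union {F : Filter M} {s t : Set M} (h : Dcd F s) (h' : Dcd F t) : Dcd F (s ∪ t) := by
  rcases h with h | h
  · exact Or.inl (h.mono fun _ => Or.inl)
  rcases h' with h' | h'
  · exact Or.inl (h'.mono fun _ => Or.inr)
  · exact Or.inr ((h.and h').mono fun y hy hy' => hy'.elim hy.1 hy.2)
theorem Dcd.inter {F : Filter M} {s t : Set M} (h : Dcd F s) (h' : Dcd F t) : Dcd F (s ∩ t) := by
  have := (h.compl.union h'.compl).compl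
  rwa [← compl_inter, compl_compl] at this

theorem dcd_of (F : Filter M) (h1 : ∀ c, Dcd F (Iio c)) (h2 : ∀ c, Dcd F (Ioi c)) {s : Set M}
    (hs : IsFinUnionPointsIntervals s) : Dcd F s := by
  classical
  obtain ⟨P, I, rfl⟩ := hs
  refine Dcd.union ?_ ?_
  · induction P using Finset.induction_on with
    | empty => exact Or.inr (by simp)
    | insert a P _ ih =>
      rw [Finset.coe_insert, insert_eq]
      refine Dcd.union ?_ ih
      have : ({a} : Set M) = (Iio a ∪ Ioi a)ᶜ := by ext; simp
      rw [this]
      exact ((h1 a).union (h2 a)).compl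
  · induction I using Finset.induction_on with
    | empty => exact Or.inr (by simp)
    | insert p I _ ih =>
      rw [Finset.set_biUnion_insert]
      refine Dcd.union ?_ ih
      have e : {x : M | p.1 < (x : WithBot M) ∧ (x : WithTop M) < p.2} =
        {x : M | p.1 < (x : WithBot M)} ∩ {x : M | (x : WithTop M) < p.2} := rfl
      rw [e]
      refine Dcd.inter ?_ ?_
      · rcases p with ⟨_ | l, r⟩
        · left; exact Eventually.of_forall fun y => WithBot.bot_lt_coe y
        · have : {x : M | (WithBot.some l) < (x : WithBot M)} = Ioi l := by ext; simp
          change Dcd F {x : M | (WithBot.some l) < (x : WithBot M)}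
          rw [this]; exact h2 l
      · rcases p with ⟨l, _ | r⟩
        · left; exact Eventually.of_forall fun y => WithTop.coe_lt_top y
        · have : {x : M |  (x : WithTop M) < WithTop.some r} = Iio r := by ext; simp
          change Dcd F {x : M |  (x : WithTop M) < WithTop.some r}
          rw [this]; exact h1 r

theorem finU_ind (Q : Set M → Prop) (h0 : Q ∅) (hu : ∀ s t, Q s → Q t → Q (s ∪ t))
    (hp : ∀ a, Q {a}) (hi : ∀ p : WithBot M × WithTop M,
      Q {x : M | p.1 < (x : WithBot M) ∧ (x : WithTop M) < p.2}) {s : Set M}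
    (hs : IsFinUnionPointsIntervals s) : Q s := by
  classical
  obtain ⟨P, I, rfl⟩ := hs
  refine hu _ _ ?_ ?_
  · induction P using Finset.induction_on with
    | empty => simpa using h0
    | insert a P _ ih =>
      rw [Finset.coe_insert, insert_eq]
      exact hu _ _ (hp a) ih
  · induction I using Finset.induction_on with
    | empty => simpa using h0
    | insert p I _ ih =>
      rw [Finset.set_biUnion_insert]
      exact hu _ _ (hi p) ih

variable [DenselyOrdered M] [NoMinOrder M] [NoMaxOrder M]

theorem ioo_of_fin {s : Set M} (hs : IsFinUnionPointsIntervals s) :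
    s.Infinite → ∃ a b, a < b ∧ ∀ y, a < y → y < b → y ∈ s := by
  refine finU_ind (fun s => s.Infinite → ∃ a b, a < b ∧ ∀ y, a < y → y < b → y ∈ s) ?_ ?_ ?_ ?_ hs
  · intro h; simp at h
  · intro s t h1 h2 h
    rcases infinite_union.1 h with h | h
    · obtain ⟨a, b, h, h'⟩ := h1 h; exact ⟨a, b, h, fun y hy hy' => Or.inl (h' y hy hy')⟩
    · obtain ⟨a, b, h, h'⟩ := h2 h; exact ⟨a, b, h, fun y hy hy' => Or.inr (h' y hy hy')⟩
  · intro a h; simp at h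
  · rintro ⟨l, r⟩ h
    obtain ⟨x, h1, h2⟩ := h.nonempty
    dsimp only at h1 h2
    rcases r with _ | r
    · obtain ⟨b, hb⟩ := exists_gt x
      exact ⟨x, b, hb, fun y hy _ => ⟨h1.trans (WithBot.coe_lt_coe.2 hy), WithTop.coe_lt_top y⟩⟩
    · exact ⟨x, r, WithTop.coe_lt_coe.1 h2, fun y hy hy' => ⟨h1.trans (WithBot.coe_lt_coe.2 hy), WithTop.coe_lt_coe.2 hy'⟩⟩

theorem lub_of_fin {s : Set M} (hs : IsFinUnionPointsIntervals s) :
    s.Nonempty → BddAbove s → ∃ c, IsLUB s c := by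
  refine finU_ind (fun s => s.Nonempty → BddAbove s → ∃ c, IsLUB s c) ?_ ?_ ?_ ?_ hs
  · intro h; simp at h
  · intro s t h1 h2 h hb
    have hb1 : BddAbove s := hb.mono subset_union_left
    have hb2 : BddAbove t := hb.mono subset_union_right
    rcases s.eq_empty_or_nonempty with rfl | hs
    · simp only [empty_union] at h ⊢; exact h2 h hb2
    rcases t.eq_empty_or_nonempty with rfl | ht
    · simp only [union_empty] at h ⊢; exact h1 h hb1
    obtain ⟨c, hc⟩ := h1 hs hb1
    obtain ⟨d, hd⟩ := h2 ht hb2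
    exact ⟨_, hc.union hd⟩
  · intro a _ _; exact ⟨a, isLUB_singleton⟩
  · rintro ⟨l, r⟩ ⟨x, h1, h2⟩ ⟨u, hu⟩
    dsimp only at h1 h2
    rcases r with _ | r
    · exfalso
      obtain ⟨v, hv⟩ := exists_gt (max x u)
      have := hu (show v ∈ _ from ⟨h1.trans (WithBot.coe_lt_coe.2 (lt_of_le_of_lt (le_max_left _ _) hv)), WithTop.coe_lt_top v⟩)
      exact absurd (lt_of_le_of_lt (le_max_right x u) hv) (not_lt.2 this)
    · refine ⟨r, fun y hy => (WithTop.coe_lt_coe.1 hy.2).le, fun w hw => ?_⟩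
      by_contra hlt
      push Not at hlt
      obtain ⟨v, hv, hv'⟩ := exists_between (max_lt hlt (WithTop.coe_lt_coe.1 h2))
      have := hw (show v ∈ _ from ⟨h1.trans (WithBot.coe_lt_coe.2 (lt_of_le_of_lt (le_max_right _ _) hv)), WithTop.coe_lt_coe.2 hv'⟩)
      exact absurd (lt_of_le_of_lt (le_max_left w x) hv) (not_lt.2 this)

theorem glb_of_fin {s : Set M} (hs : IsFinUnionPointsIntervals s) :
    s.Nonempty → BddBelow s → ∃ c, IsGLB s c := by
  refine finU_ind (fun s => s.Nonempty → BddBelow s → ∃ c, IsGLB s c) ?_ ?_ ?_ ?_ hs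
  · intro h; simp at h
  · intro s t h1 h2 h hb
    have hb1 : BddBelow s := hb.mono subset_union_left
    have hb2 : BddBelow t := hb.mono subset_union_right
    rcases s.eq_empty_or_nonempty with rfl | hs
    · simp only [empty_union] at h ⊢; exact h2 h hb2
    rcases t.eq_empty_or_nonempty with rfl | ht
    · simp only [union_empty] at h ⊢; exact h1 h hb1
    obtain ⟨c, hc⟩ := h1 hs hb1
    obtain ⟨d, hd⟩ := h2 ht hb2
    exact ⟨_, hc.union hd⟩
  · intro a _ _; exact ⟨a, isGLB_singleton⟩
  · rintro ⟨l, r⟩ ⟨x, h1, h2⟩ ⟨u, hu⟩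
    dsimp only at h1 h2
    rcases l with _ | l
    · exfalso
      obtain ⟨v, hv⟩ := exists_lt (min x u)
      have := hu (show v ∈ _ from ⟨WithBot.bot_lt_coe v, (WithTop.coe_lt_coe.2 (lt_of_lt_of_le hv (min_le_left _ _))).trans h2⟩)
      exact absurd (lt_of_lt_of_le hv (min_le_right x u)) (not_lt.2 this)
    · refine ⟨l, fun y hy => (WithBot.coe_lt_coe.1 hy.1).le, fun w hw => ?_⟩
      by_contra hlt
      push Not at hlt
      obtain ⟨v, hv, hv'⟩ := exists_between (lt_min hlt (WithBot.coe_lt_coe.1 h1))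
      have := hw (show v ∈ _ from ⟨WithBot.coe_lt_coe.2 hv, (WithTop.coe_lt_coe.2 (lt_of_lt_of_le hv' (min_le_right _ _))).trans h2⟩)
      exact absurd (lt_of_lt_of_le hv' (min_le_left w x)) (not_lt.2 this)

theorem dcd_RN (x : M) {s : Set M} (hs : IsFinUnionPointsIntervals s) : Dcd (RN x) s := by
  refine dcd_of _ (fun c => ?_) (fun c => ?_) hs
  · rcases lt_or_ge x c with h | h
    · exact Or.inl ⟨c, h, fun y _ h => h⟩
    · obtain ⟨b, hb⟩ := exists_gt x
      exact Or.inr ⟨b, hb, fun y hy _ h' => absurd (hy.trans h') (not_lt.2 h)⟩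
  · rcases lt_or_ge x c with h | h
    · exact Or.inr ⟨c, h, fun y _ h h' => absurd h (lt_asymm h')⟩
    · obtain ⟨b, hb⟩ := exists_gt x
      exact Or.inl ⟨b, hb, fun y hy _ => lt_of_le_of_lt h hy⟩

theorem dcd_LN (x : M) {s : Set M} (hs : IsFinUnionPointsIntervals s) : Dcd (LN x) s := by
  refine dcd_of _ (fun c => ?_) (fun c => ?_) hs
  · rcases lt_or_ge c x with h | h
    · exact Or.inr ⟨c, h, fun y _ h h' => absurd h (lt_asymm h')⟩
    · obtain ⟨b, hb⟩ := exists_lt x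
      exact Or.inl ⟨b, hb, fun y hy _ => lt_of_lt_of_le hy h⟩
  · rcases lt_or_ge c x with h | h
    · exact Or.inl ⟨c, h, fun y _ h => h⟩
    · obtain ⟨b, hb⟩ := exists_lt x
      exact Or.inr ⟨b, hb, fun y hy _ h' => absurd (hy.trans_le h) (lt_asymm h')⟩

variable {L : FirstOrder.Language.{u,u}} [L.Structure M]

theorem def_iff₁ {s : Set M} : Def L M (· ∈ s) ↔ (univ : Set M).Definable₁ L s := by
  constructor
  · intro h
    exact Definable.preimage_comp (fun _ : Unit => (0 : Fin 1)) h
  · intro h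
    exact Definable.preimage_comp (fun _ : Fin 1 => ()) h

theorem omin_of [Nonempty M] (hM : IsOMinimal L M) : OMin L M where
  lt' := by
    have := hM.definable_lt.mono (empty_subset (univ : Set M))
    exact Definable.preimage_comp (β := Unit ⊕ Unit) ![Sum.inl (), Sum.inr ()] this
  t1 := fun s hs x => dcd_RN x (hM.tame s (def_iff₁.1 hs))
  t1' := fun s hs x => dcd_LN x (hM.tame s (def_iff₁.1 hs))
  t2 := fun s hs => ioo_of_fin (hM.tame s (def_iff₁.1 hs))
  t3 := fun s hs => lub_of_fin (hM.tame s (def_iff₁.1 hs))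
  t3' := fun s hs => glb_of_fin (hM.tame s (def_iff₁.1 hs))
  t4 := fun s hs => by
    have := dcd_of atTop (fun c => Or.inr ?_) (fun c => Or.inl (eventually_gt_atTop c)) (hM.tame s (def_iff₁.1 hs))
    · rcases this with h | h
      · obtain ⟨a, ha⟩ := eventually_atTop.1 h; exact Or.inl ⟨a, fun y hy => ha y hy.le⟩
      · obtain ⟨a, ha⟩ := eventually_atTop.1 h; exact Or.inr ⟨a, fun y hy => ha y hy.le⟩
    · filter_upwards [eventually_ge_atTop c] with y hy using by simpa using hy
  t4' := fun s hs => by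
    have := dcd_of atBot (fun c => Or.inl (eventually_lt_atBot c)) (fun c => Or.inr ?_) (hM.tame s (def_iff₁.1 hs))
    · rcases this with h | h
      · obtain ⟨a, ha⟩ := eventually_atBot.1 h; exact Or.inl ⟨a, fun y hy => ha y hy.le⟩
      · obtain ⟨a, ha⟩ := eventually_atBot.1 h; exact Or.inr ⟨a, fun y hy => ha y hy.le⟩
    · filter_upwards [eventually_le_atBot c] with y hy using by simpa using hy
end der
end OM

namespace OM
set_option linter.unusedSectionVars false
set_option linter.unusedSimpArgs false
set_option linter.unusedVariables false
@[reducible] def dualO (M : Type u) [LinearOrder M] : LinearOrder M := inferInstanceAs (LinearOrder Mᵒᵈ)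

section
variable {L : FirstOrder.Language.{u,u}} {M : Type u} [L.Structure M]
variable [LinearOrder M] [DenselyOrdered M] [NoMinOrder M] [NoMaxOrder M] [OMin L M]
variable {Γ Δ Θ : Type u} [Ctx M Γ] [Ctx M Δ] [Ctx M Θ]

theorem dDense : @DenselyOrdered M (dualO M).toLT := inferInstanceAs (DenselyOrdered Mᵒᵈ)
theorem dMin : @NoMinOrder M (dualO M).toLT := inferInstanceAs (NoMinOrder Mᵒᵈ)
theorem dMax : @NoMaxOrder M (dualO M).toLT := inferInstanceAs (NoMaxOrder Mᵒᵈ)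

theorem dOMin : @OMin L M _ (dualO M) := by
  have h1 : Def L M (fun p : M × M => p.2 < p.1) := Def.lt (CM.snd CM.id) (CM.fst CM.id)
  have h2 := OMin.t2 (L := L) (M := M)
  exact @OMin.mk L M _ (dualO M) (@DLT.mk L M _ (dualO M) h1) (OMin.t1' (L := L) (M := M))
    (OMin.t1 (L := L) (M := M)) (fun s hs h => by
      obtain ⟨a, b, hab, h⟩ := h2 s hs h
      exact ⟨b, a, hab, fun y h1 h2 => h y h2 h1⟩) (OMin.t3' (L := L) (M := M))
      (OMin.t3 (L := L) (M := M)) (OMin.t4' (L := L) (M := M)) (OMin.t4 (L := L) (M := M))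
theorem Def.slice {S : Set (Γ × Δ)} (h : Def L M (· ∈ S)) (g : Γ) : Def L M (fun d => (g, d) ∈ S) :=
  h.mem ((CM.const g).pair CM.id)
theorem Def.slice' {S : Set (Γ × Δ)} (h : Def L M (· ∈ S)) (d : Δ) : Def L M (fun g => (g, d) ∈ S) :=
  h.mem (CM.id.pair (CM.const d))

theorem Def.evR {P : Γ → M → Prop} {f : Γ → M} (h : Def L M (fun p : Γ × M => P p.1 p.2)) (hf : CM L M f) :
    Def L M (fun g => ∀ᶠ y in RN (f g), P g y) := by
  let S : Set (Γ × M) := {p | P p.1 p.2}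
  have hS : Def L M (· ∈ S) := h
  have hT : Def L M (fun p : Γ × M => ∃ b, p.2 < b ∧ ∀ y, p.2 < y → y < b → (p.1,y) ∈ S) := mkDef
  exact hT.comp (CM.id.pair hf)

theorem Def.evL {P : Γ → M → Prop} {f : Γ → M} (h : Def L M (fun p : Γ × M => P p.1 p.2)) (hf : CM L M f) :
    Def L M (fun g => ∀ᶠ y in LN (f g), P g y) := by
  let S : Set (Γ × M) := {p | P p.1 p.2}
  have hS : Def L M (· ∈ S) := h
  have hT : Def L M (fun p : Γ × M => ∃ b, b < p.2 ∧ ∀ y, y < p.2 → b < y → (p.1,y) ∈ S) := mkDef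
  exact hT.comp (CM.id.pair hf)

theorem infinite_iff {P : M → Prop} (h : Def L M P) :
    {y | P y}.Infinite ↔ ∃ a b, a < b ∧ ∀ y, a < y → y < b → P y := by
  constructor
  · exact OMin.t2 {y | P y} h
  · rintro ⟨a, b, hab, h⟩
    exact (Set.Ioo_infinite hab).mono fun y hy => h y hy.1 hy.2

theorem Def.infi {P : Γ → M → Prop} (h : Def L M (fun p : Γ × M => P p.1 p.2)) :
    Def L M (fun g => {y | P g y}.Infinite) := by
  let S : Set (Γ × M) := {p | P p.1 p.2}
  have hS : Def L M (· ∈ S) := h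
  have : Def L M (fun g : Γ => ∃ a b, a < b ∧ ∀ y, a < y → y < b → (g,y) ∈ S) := mkDef
  exact this.congr fun g => infinite_iff (hS.slice g)

theorem Def.fini {P : Γ → M → Prop} (h : Def L M (fun p : Γ × M => P p.1 p.2)) :
    Def L M (fun g => {y | P g y}.Finite) := by
  refine (Def.infi h).not.congr fun g => by rw [Set.not_infinite]

theorem md {P : Γ → Prop} (h : Def L M P := by
    try simp +zetaDelta only [Set.mem_ofPred_eq, Set.mem_inter_iff, Set.mem_union, Set.mem_compl_iff, Set.mem_sdiff,
      Set.mem_Iio, Set.mem_Ioi, Set.mem_Iic, Set.mem_Ici, Set.mem_Ioo, Set.mem_Icc, Set.mem_Ico,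
      Set.mem_Ioc, Set.mem_singleton_iff, Set.mem_univ, ne_eq, gt_iff_lt, ge_iff_le, Set.Nonempty, Set.subset_def]
    repeat' first
      | with_reducible assumption
      | with_reducible exact Def.cst _
      | with_reducible exact CM.id
      | with_reducible exact CM.const _
      | with_reducible apply CM.fst
      | with_reducible apply CM.snd
      | with_reducible apply CM.pair
      | with_reducible apply Def.and
      | with_reducible apply Def.or
      | with_reducible apply Def.not
      | with_reducible apply Def.iff
      | with_reducible apply Def.ex
      | with_reducible apply Def.imp
      | with_reducible apply Def.all
      | with_reducible apply Def.lt
      | with_reducible apply Def.le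
      | with_reducible apply Def.eq
      | (with_reducible refine Def.mem (by with_reducible assumption) ?_)
      | with_reducible apply Def.evR
      | with_reducible apply Def.evL
      | with_reducible apply Def.infi
      | with_reducible apply Def.fini
      | (with_reducible refine Def.comp (by with_reducible assumption) ?_)) : Def L M P := h

theorem rnd {P : M → Prop} (h : Def L M P) (x : M) :
    (∀ᶠ y in RN x, P y) ∨ (∀ᶠ y in RN x, ¬ P y) := OMin.t1 {y | P y} h x
theorem lnd {P : M → Prop} (h : Def L M P) (x : M) :
    (∀ᶠ y in LN x, P y) ∨ (∀ᶠ y in LN x, ¬ P y) := OMin.t1' {y | P y} h x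

instance (x : M) : NeBot (RN x) := by
  rw [← empty_mem_iff_bot.not.trans neBot_iff.symm]
  rintro ⟨b, hb, h⟩
  obtain ⟨c, h1, h2⟩ := exists_between hb
  exact h c h1 h2
instance (x : M) : NeBot (LN x) := by
  rw [← empty_mem_iff_bot.not.trans neBot_iff.symm]
  rintro ⟨b, hb, h⟩
  obtain ⟨c, h1, h2⟩ := exists_between hb
  exact h c h2 h1

theorem rn_gt (x : M) : ∀ᶠ y in RN x, x < y := by
  obtain ⟨b, hb⟩ := exists_gt x
  exact ⟨b, hb, fun y h _ => h⟩
theorem rn_lt {x b : M} (h : x < b) : ∀ᶠ y in RN x, y < b := ⟨b, h, fun y _ h => h⟩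
theorem ln_lt (x : M) : ∀ᶠ y in LN x, y < x := by
  obtain ⟨b, hb⟩ := exists_lt x
  exact ⟨b, hb, fun y h _ => h⟩
theorem ln_gt {x b : M} (h : b < x) : ∀ᶠ y in LN x, b < y := ⟨b, h, fun y _ h => h⟩
theorem rn_of {a b x : M} {P : M → Prop} (h : ∀ y, a < y → y < b → P y) (h1 : a ≤ x) (h2 : x < b) :
    ∀ᶠ y in RN x, P y := ⟨b, h2, fun y hy hy' => h y (lt_of_le_of_lt h1 hy) hy'⟩
theorem ln_of {a b x : M} {P : M → Prop} (h : ∀ y, a < y → y < b → P y) (h1 : a < x) (h2 : x ≤ b) :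
    ∀ᶠ y in LN x, P y := ⟨a, h1, fun y hy hy' => h y hy' (lt_of_lt_of_le hy h2)⟩

theorem switch {P : M → Prop} (hP : Def L M P) {u v : M} (huv : u < v)
    (h1 : ∀ᶠ y in RN u, ¬ P y) (h2 : ∀ᶠ y in LN v, P y) :
    ∃ e, u < e ∧ e < v ∧ (∀ᶠ y in LN e, ¬ P y) ∧ ∀ᶠ y in RN e, P y := by
  let S : Set M := {y | P y}
  have hS : Def L M (· ∈ S) := hP
  have hE : Def L M (fun e : M => u < e ∧ e < v ∧ ∀ᶠ y in RN e, y ∈ S) := md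
  let E : Set M := {e | u < e ∧ e < v ∧ ∀ᶠ y in RN e, y ∈ S}
  have hne : E.Nonempty := by
    obtain ⟨b, hb, h⟩ := h2
    obtain ⟨e, he1, he2⟩ := exists_between (max_lt hb huv)
    refine ⟨e, lt_of_le_of_lt (le_max_right _ _) he1, he2, v, he2, fun y hy hy' => h y hy' ?_⟩
    exact lt_of_le_of_lt (le_max_left _ _) (he1.trans hy)
  obtain ⟨e, he⟩ := OMin.t3' E hE hne ⟨u, fun x hx => hx.1.le⟩
  have hue : u < e := by
    obtain ⟨c, hc, h⟩ := h1
    refine lt_of_lt_of_le hc (he.2 fun e' h' => ?_)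
    by_contra hlt
    push Not at hlt
    obtain ⟨y, h3, h4, h5⟩ := (h'.2.2.and ((rn_gt e').and (rn_lt hlt))).exists
    exact h y (h'.1.trans h4) h5 h3
  have hev : e < v := by
    obtain ⟨e', h'⟩ := hne
    exact lt_of_le_of_lt (he.1 h') h'.2.1
  refine ⟨e, hue, hev, ?_, ?_⟩
  · rcases lnd hP e with h | h
    · exfalso
      obtain ⟨b, hb, h⟩ := h
      obtain ⟨e', h3, h4⟩ := exists_between (max_lt hb hue)
      have : e' ∈ E := ⟨lt_of_le_of_lt (le_max_right _ _) h3, h4.trans hev, e, h4, fun y hy hy' => h y hy' (lt_of_le_of_lt (le_max_left _ _) (h3.trans hy))⟩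
      exact absurd (he.1 this) (not_le.2 h4)
    · exact h
  · rcases rnd hP e with h | h
    · exact h
    · exfalso
      obtain ⟨d, hd, h⟩ := h
      refine absurd (he.2 (show d ∈ lowerBounds E from fun e' h' => ?_)) (not_le.2 hd)
      by_contra hlt
      push Not at hlt
      obtain ⟨y, h3, h4, h5⟩ := (h'.2.2.and ((rn_gt e').and (rn_lt hlt))).exists
      exact h y (lt_of_le_of_lt (he.1 h') h4) h5 h3

theorem switch' {P : M → Prop} (hP : Def L M P) {u v : M} (huv : u < v)
    (h1 : ∀ᶠ y in RN u, P y) (h2 : ∀ᶠ y in LN v, ¬ P y) :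
    ∃ e, u < e ∧ e < v ∧ (∀ᶠ y in LN e, P y) ∧ ∀ᶠ y in RN e, ¬ P y := by
  obtain ⟨e, a, b, c, d⟩ := switch hP.not huv (by simpa using h1) h2
  exact ⟨e, a, b, by simpa using c, d⟩

theorem infinite_of_dense {P : M → Prop} {a b : M} (hab : a < b) (hP : Def L M P)
    (h : ∀ a' b', a ≤ a' → a' < b' → b' ≤ b → ∃ e, a' < e ∧ e < b' ∧ P e) : {e | P e ∧ a < e ∧ e < b}.Infinite := by
  intro hf
  have h1 : Def L M (fun y : M => (a < y ∧ y < b) ∧ ¬ P y) := by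
    refine Def.and md hP.not
  have h2 : {y | (a < y ∧ y < b) ∧ ¬ P y}.Infinite := by
    refine ((Set.Ioo_infinite hab).sdiff hf).mono ?_
    rintro y ⟨h3, h4⟩
    exact ⟨h3, fun h5 => h4 ⟨h5, h3⟩⟩
  obtain ⟨p, q, hpq, h3⟩ := (infinite_iff h1).1 h2
  obtain ⟨r, hr, hr'⟩ := exists_between hpq
  obtain ⟨r', h1r, h1r'⟩ := exists_between hr'
  obtain ⟨e, h4, h5, h6⟩ := h r r' (h3 r hr hr').1.1.le h1r (h3 r' (hr.trans h1r) h1r').1.2.le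
  exact (h3 e (hr.trans h4) (h5.trans h1r')).2 h6

end
end OM

namespace OM
set_option linter.unusedSectionVars false
set_option linter.unusedSimpArgs false
set_option linter.unusedVariables false
section
variable {L : FirstOrder.Language.{u,u}} {M : Type u} [L.Structure M]
variable [LinearOrder M] [DenselyOrdered M] [NoMinOrder M] [NoMaxOrder M] [OMin L M]
variable {Γ Δ Θ : Type u} [Ctx M Γ] [Ctx M Δ] [Ctx M Θ]

theorem incr_of_finite {W : Set (M × M)} (hW : Def L M (· ∈ W))
    (tr : ∀ x y z, (x, y) ∈ W → (y, z) ∈ W → (x, z) ∈ W) {a b : M} (hab : a < b)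
    (hf : ∀ c, a < c → c < b → {y | c < y ∧ y < b ∧ (y, c) ∈ W}.Finite) :
    ∃ p q, p < q ∧ ∀ x y, p < x → x < y → y < q → a < x ∧ y < b ∧ (y, x) ∉ W := by
  have hB : Def L M (fun c : M => a < c ∧ c < b ∧ ∀ y, c < y → y < b → (y, c) ∉ W) := md
  have hex : ∀ c, a < c → c < b → ∃ d, c ≤ d ∧ (a < d ∧ d < b ∧ ∀ y, d < y → y < b → (y, d) ∉ W) := by
    intro c hc hc'
    by_cases hne : {y | c < y ∧ y < b ∧ (y, c) ∈ W}.Nonempty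
    · obtain ⟨d, hd, hmax⟩ := (hf c hc hc').exists_maximal hne
      refine ⟨d, hd.1.le, hc.trans hd.1, hd.2.1, fun y h1 h2 h3 => ?_⟩
      exact absurd (hmax (show y ∈ _ from ⟨hd.1.trans h1, h2, tr _ _ _ h3 hd.2.2⟩) h1.le) (not_le.2 h1)
    · exact ⟨c, le_rfl, hc, hc', fun y h1 h2 h3 => hne ⟨y, h1, h2, h3⟩⟩
  have hinf : {c : M | a < c ∧ c < b ∧ ∀ y, c < y → y < b → (y, c) ∉ W}.Infinite := by
    intro hfin
    obtain ⟨m, hm, hm'⟩ := exists_between hab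
    obtain ⟨d0, _, h0⟩ := hex m hm hm'
    obtain ⟨d, hd, hmax⟩ := hfin.exists_maximal ⟨d0, h0⟩
    obtain ⟨c, hc, hc'⟩ := exists_between hd.2.1
    obtain ⟨e, he, he'⟩ := hex c (hd.1.trans hc) hc'
    exact absurd (hmax he' (hc.le.trans he)) (not_le.2 (hc.trans_le he))
  obtain ⟨p, q, hpq, h⟩ := (infinite_iff hB).1 hinf
  refine ⟨p, q, hpq, fun x y h1 h2 h3 => ?_⟩
  have hx := h x h1 (h2.trans h3)
  have hy := h y (h1.trans h2) h3
  exact ⟨hx.1, hy.2.1, hx.2.2 y h2 hy.2.1⟩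

theorem lemP {W : Set (M × M)} (hW : Def L M (· ∈ W)) (tot : ∀ x y, (x, y) ∈ W ∨ (y, x) ∈ W)
    (tr : ∀ x y z, (x, y) ∈ W → (y, z) ∈ W → (x, z) ∈ W) {a b : M} (hab : a < b)
    (h : ∀ x, a < x → x < b → ∀ᶠ y in RN x, (y, x) ∉ W) :
    ∃ p q, p < q ∧ ∀ x y, p < x → x < y → y < q → a < x ∧ y < b ∧ (y, x) ∉ W := by
  by_contra hcon
  have key : ∀ a' b', a ≤ a' → a' < b' → b' ≤ b → ∃ c, a' < c ∧ c < b' ∧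
      {y | c < y ∧ y < b' ∧ (y, c) ∈ W}.Infinite := by
    intro a' b' h1 h2 h3
    by_contra h4
    push Not at h4
    obtain ⟨p, q, hpq, h5⟩ := incr_of_finite hW tr h2 (fun c hc hc' => h4 c hc hc')
    exact hcon ⟨p, q, hpq, fun x y hx hy hz => ⟨h1.trans_lt (h5 x y hx hy hz).1, (h5 x y hx hy hz).2.1.trans_le h3, (h5 x y hx hy hz).2.2⟩⟩
  have hDown : Def L M (fun e : M => ∃ c, (∀ᶠ y in LN e, (y,c) ∉ W) ∧ ∀ᶠ y in RN e, (y,c) ∈ W) := md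
  have hD : ∀ a' b', a ≤ a' → a' < b' → b' ≤ b → ∃ e, a' < e ∧ e < b' ∧
      ∃ c, (∀ᶠ y in LN e, (y,c) ∉ W) ∧ ∀ᶠ y in RN e, (y,c) ∈ W := by
    intro a' b' h1 h2 h3
    obtain ⟨c, hc, hc', hi⟩ := key a' b' h1 h2 h3
    have hd : Def L M (fun y : M => c < y ∧ y < b' ∧ (y, c) ∈ W) := md
    obtain ⟨p, q, hpq, h4⟩ := (infinite_iff hd).1 hi
    obtain ⟨v, hv, hv'⟩ := exists_between hpq
    have hcv := (h4 v hv hv').1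
    obtain ⟨e, he1, he2, he3, he4⟩ := switch (hW.slice' c) hcv (h c (h1.trans_lt hc) (hc'.trans_le h3))
      (ln_of (fun y h5 h6 => (h4 y h5 h6).2.2) hv hv'.le)
    exact ⟨e, hc.trans he1, he2.trans (h4 v hv hv').2.1, c, he3, he4⟩
  have hinf := infinite_of_dense hab hDown hD
  obtain ⟨a2, b2, h22, hd2⟩ := (infinite_iff (hDown.and (Def.and (Def.lt (CM.const _) CM.id) (Def.lt CM.id (CM.const _))))).1 hinf
  have noUp : ∀ e, a2 < e → e < b2 → ∀ c', (∀ᶠ y in LN e, (y,c') ∈ W) → (∀ᶠ y in RN e, (y,c') ∉ W) → False := by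
    intro e he he' c' hl hr
    obtain ⟨⟨c, h1, h2⟩, -⟩ := hd2 e he he'
    obtain ⟨y, hy1, hy2⟩ := (hl.and h1).exists
    obtain ⟨z, hz1, hz2⟩ := (hr.and h2).exists
    rcases tot c c' with h | h
    · exact hz1 (tr _ _ _ hz2 h)
    · exact hy2 (tr _ _ _ hy1 h)
  have hleft : ∀ e, a2 < e → e < b2 → ∀ᶠ y in LN e, (y, e) ∉ W := by
    intro e he he'
    obtain ⟨⟨c, h1, h2⟩, h3, h4⟩ := hd2 e he he'
    obtain ⟨z, hz1, hz2⟩ := (h2.and (h e h3 h4)).exists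
    refine h1.mono fun y hy hy' => ?_
    rcases tot y c with h | h
    · exact hy h
    · exact hz2 (tr _ _ _ (tr _ _ _ hz1 h) hy')
  by_cases hfin : ∀ c, a2 < c → c < b2 → {y | y < c ∧ a2 < y ∧ (y, c) ∈ W}.Finite
  · obtain ⟨p, q, hpq, h5⟩ := @incr_of_finite L M _ (dualO M) dDense dMin dMax dOMin W hW tr b2 a2 h22
      (fun c h1 h2 => hfin c h2 h1)
    have hqp : q < p := hpq
    have h5 : ∀ x y, x < p → y < x → q < y → x < b2 ∧ a2 < y ∧ (y, x) ∉ W := h5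
    obtain ⟨x, hx, hx'⟩ := exists_between hqp
    obtain ⟨x2, hx2, hx2'⟩ := exists_between hx'
    have hxx := h5 x2 x hx2' hx2 hx
    have := hd2 x hxx.2.1 (hx2.trans hxx.1)
    obtain ⟨y, hy1, hy2, hy3⟩ := ((h x this.2.1 this.2.2).and ((rn_gt x).and (rn_lt hx'))).exists
    rcases tot x y with h6 | h6
    · exact (h5 y x hy3 hy2 hx).2.2 h6
    · exact hy1 h6
  · push Not at hfin
    obtain ⟨c, hc1, hc2, hi⟩ := hfin
    have hd : Def L M (fun y : M => y < c ∧ a2 < y ∧ (y, c) ∈ W) := md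
    obtain ⟨p, q, hpq, h4⟩ := (infinite_iff hd).1 hi
    obtain ⟨v, hv, hv'⟩ := exists_between hpq
    have hcv := (h4 v hv hv').1
    obtain ⟨e, he1, he2, he3, he4⟩ := switch' (hW.slice' c) hcv
      (rn_of (fun y h5 h6 => (h4 y h5 h6).2.2) hv.le hv') (hleft c hc1 hc2)
    exact noUp e ((h4 v hv hv').2.1.trans he1) (he2.trans hc2) c he3 he4

theorem lemQ {G : Set (M × M)} (hG : Def L M (· ∈ G))
    (hdis : ∀ x x' y, (x, y) ∈ G → (x', y) ∈ G → x = x') :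
    {x | {y | (x, y) ∈ G}.Infinite}.Finite := by
  by_contra hinf
  change {x | {y | (x, y) ∈ G}.Infinite}.Infinite at hinf
  have hE : Def L M (fun e : M => ∃ x, (∀ᶠ y in RN e, (x,y) ∈ G) ∧ ∀ᶠ y in LN e, (x,y) ∉ G) := md
  let X := {x | {y | (x, y) ∈ G}.Infinite}
  let X0 := {x | ∃ a, ∀ y, y < a → (x, y) ∈ G}
  have hX0 : X0.Finite := by
    refine Set.Subsingleton.finite ?_
    rintro x ⟨a, ha⟩ x' ⟨b, hb⟩
    obtain ⟨y, hy⟩ := exists_lt (min a b)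
    exact hdis x x' y (ha y (hy.trans_le (min_le_left _ _))) (hb y (hy.trans_le (min_le_right _ _)))
  have hX1 : (X \ X0).Infinite := Set.Infinite.sdiff hinf hX0
  have hex : ∀ x ∈ X \ X0, ∃ e, (∀ᶠ y in RN e, (x,y) ∈ G) ∧ ∀ᶠ y in LN e, (x,y) ∉ G := by
    rintro x ⟨hx, hx0⟩
    obtain ⟨p, q, hpq, h⟩ := (infinite_iff (hG.slice x)).1 hx
    rcases OMin.t4' {y | (x,y) ∈ G} (hG.slice x) with ⟨a, ha⟩ | ⟨a, ha⟩
    · exact absurd ⟨a, ha⟩ hx0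
    obtain ⟨u, hu⟩ := exists_lt (min a p)
    have hup : u < q := (hu.trans_le (min_le_right _ _)).trans hpq
    obtain ⟨e, he1, he2, he3, he4⟩ := switch (hG.slice x) hup
      (show ∀ᶠ y in RN u, (x,y) ∉ G from ⟨a, hu.trans_le (min_le_left _ _), fun y _ hy => ha y hy⟩)
      (ln_of h hpq le_rfl)
    exact ⟨e, he4, he3⟩
  choose! f hf using hex
  have hinj : Set.InjOn f (X \ X0) := by
    intro x hx x' hx' he
    have h1 := (hf x hx).1
    have h2 := (hf x' hx').1
    rw [← he] at h2
    obtain ⟨y, hy, hy'⟩ := (h1.and h2).exists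
    exact hdis _ _ _ hy hy'
  have hEi : {e | ∃ x, (∀ᶠ y in RN e, (x,y) ∈ G) ∧ ∀ᶠ y in LN e, (x,y) ∉ G}.Infinite :=
    Set.infinite_of_injOn_mapsTo hinj (fun x hx => ⟨x, hf x hx⟩) hX1
  obtain ⟨a, b, hab, h⟩ := (infinite_iff hE).1 hEi
  obtain ⟨e, he, he'⟩ := exists_between hab
  obtain ⟨x, hx, -⟩ := h e he he'
  obtain ⟨c, hc, hx⟩ := hx
  obtain ⟨e', h1, h2⟩ := exists_between (lt_min hc he')
  obtain ⟨x', hx1, hx2⟩ := h e' (he.trans h1) (h2.trans_le (min_le_right _ _))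
  have h3 : ∀ᶠ y in RN e', (x, y) ∈ G := rn_of hx h1.le (h2.trans_le (min_le_left _ _))
  have h4 : ∀ᶠ y in LN e', (x, y) ∈ G := ln_of hx h1 (h2.trans_le (min_le_left _ _)).le
  obtain ⟨y, hy, hy'⟩ := (h3.and hx1).exists
  obtain rfl := hdis _ _ _ hy hy'
  obtain ⟨z, hz, hz'⟩ := (h4.and hx2).exists
  exact hz' hz

theorem ccR {V : Set (M × M)} (hV : Def L M (· ∈ V))
    (hch : ∀ x x', (∀ y, (x, y) ∈ V → (x', y) ∈ V) ∨ (∀ y, (x', y) ∈ V → (x, y) ∈ V)) :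
    {x | {z | (x, z) ∈ V ∧ ∀ᶠ x' in RN x, (x', z) ∉ V}.Infinite}.Finite := by
  by_contra hinf
  change Set.Infinite _ at hinf
  have hd : Def L M (fun x : M => {z | (x, z) ∈ V ∧ ∀ᶠ x' in RN x, (x', z) ∉ V}.Infinite) := md
  obtain ⟨a, b, hab, h⟩ := (infinite_iff hd).1 hinf
  obtain ⟨W, hWd⟩ : ∃ W : Set (M × M), W = {p | ∀ y, (p.2, y) ∈ V → (p.1, y) ∈ V} := ⟨_, rfl⟩
  have hW : Def L M (· ∈ W) := by subst hWd; exact md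
  have hWm : ∀ x x', (x, x') ∈ W ↔ ∀ y, (x', y) ∈ V → (x, y) ∈ V := by subst hWd; intros; rfl
  obtain ⟨p, q, hpq, hinc⟩ := lemP hW (fun x y => by rw [hWm, hWm]; exact (hch x y).symm)
    (fun x y z h1 h2 => by rw [hWm] at *; exact fun w hw => h1 w (h2 w hw)) hab (fun x h1 h2 => by
      obtain ⟨z, hz, hz'⟩ := (h x h1 h2).nonempty
      refine hz'.mono fun y hy => ?_
      rw [hWm]; intro h3; exact hy (h3 z hz))
  let G : Set (M × M) := {g | p < g.1 ∧ g.1 < q ∧ g ∈ V ∧ ∀ x', g.1 < x' → x' < q → (x', g.2) ∉ V}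
  have hG : Def L M (· ∈ G) := md
  have := lemQ hG (by
    rintro x x' y ⟨h1, h2, h3, h4⟩ ⟨h1', h2', h3', h4'⟩
    rcases lt_trichotomy x x' with h5 | h5 | h5
    · exact absurd h3' (h4 _ h5 h2')
    · exact h5
    · exact absurd h3 (h4' _ h5 h2))
  refine (Set.Ioo_infinite hpq).mono ?_ this
  intro x hx
  obtain ⟨q', hq', hq''⟩ := exists_between hx.2
  have hax := hinc x q' hx.1 hq' hq''
  refine (h x hax.1 (hq'.trans hax.2.1)).mono ?_
  rintro z ⟨hz, hz'⟩
  refine ⟨hx.1, hx.2, hz, fun x' h1 h2 h3 => ?_⟩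
  obtain ⟨x'', h4, h5, h6⟩ := (hz'.and ((rn_gt x).and (rn_lt h1))).exists
  have h7 := (hinc x'' x' (hx.1.trans h5) h6 h2).2.2
  rw [hWm] at h7
  rcases hch x' x'' with h8 | h8
  · exact h4 (h8 _ h3)
  · exact h7 h8

theorem ccL {V : Set (M × M)} (hV : Def L M (· ∈ V))
    (hch : ∀ x x', (∀ y, (x, y) ∈ V → (x', y) ∈ V) ∨ (∀ y, (x', y) ∈ V → (x, y) ∈ V)) :
    {x | {z | (x, z) ∈ V ∧ ∀ᶠ x' in LN x, (x', z) ∉ V}.Infinite}.Finite :=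
  @ccR L M _ (dualO M) dDense dMin dMax dOMin V hV hch

/-- full neighbourhoods -/
def Nb (x : M) : Filter M := RN x ⊔ LN x ⊔ pure x

theorem ev_Nb {x : M} {P : M → Prop} :
    (∀ᶠ y in Nb x, P y) ↔ (∀ᶠ y in RN x, P y) ∧ (∀ᶠ y in LN x, P y) ∧ P x := by
  simp [Nb, eventually_sup, and_assoc]

theorem Def.evN {P : Γ → M → Prop} {f : Γ → M} (h : Def L M (fun p : Γ × M => P p.1 p.2)) (hf : CM L M f) :
    Def L M (fun g => ∀ᶠ y in Nb (f g), P g y) :=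
  ((Def.evR h hf).and ((Def.evL h hf).and (h.comp (CM.id.pair hf)))).congr fun g => ev_Nb

/-- continuity of a family of cuts -/
def CutCont (U : Set (M × M)) (x : M) : Prop :=
  ∀ y y', y < y' → ((x, y) ∈ U → ∀ᶠ x' in Nb x, (x', y') ∈ U) ∧
    ((x, y') ∉ U → ∀ᶠ x' in Nb x, (x', y) ∉ U)

theorem cutcont {U : Set (M × M)} (hU : Def L M (· ∈ U))
    (hup : ∀ x y y', y < y' → (x, y) ∈ U → (x, y') ∈ U) : {x | ¬ CutCont U x}.Finite := by
  have hch : ∀ x x', (∀ y, (x, y) ∈ U → (x', y) ∈ U) ∨ (∀ y, (x', y) ∈ U → (x, y) ∈ U) := by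
    intro x x'
    by_contra h
    push Not at h
    obtain ⟨⟨y, h1, h2⟩, z, h3, h4⟩ := h
    rcases lt_trichotomy y z with h | rfl | h
    · exact h4 (hup _ _ _ h h1)
    · exact h2 h3
    · exact h2 (hup _ _ _ h h3)
  have hU' : Def L M (· ∈ Uᶜ) := hU.not
  have hch' : ∀ x x', (∀ y, (x, y) ∈ Uᶜ → (x', y) ∈ Uᶜ) ∨ (∀ y, (x', y) ∈ Uᶜ → (x, y) ∈ Uᶜ) := by
    intro x x'
    rcases hch x x' with h | h
    · exact Or.inr fun y hy hy' => hy (h y hy')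
    · exact Or.inl fun y hy hy' => hy (h y hy')
  refine ((ccR hU hch).union ((ccL hU hch).union ((ccR hU' hch').union (ccL hU' hch')))).subset ?_
  intro x hx
  by_contra hno
  simp only [mem_union, mem_ofPred_eq, not_or, Set.not_infinite] at hno
  obtain ⟨n1, n2, n3, n4⟩ := hno
  apply hx
  intro y y' hyy
  constructor
  · intro hy
    rw [ev_Nb]
    refine ⟨?_, ?_, hup _ _ _ hyy hy⟩
    · rcases rnd (hU.slice' y') x with h | h
      · exact h
      · refine absurd n1 (((Set.Ioo_infinite hyy)).mono fun z hz => ⟨hup _ _ _ hz.1 hy, h.mono fun x' h' h'' => h' (hup _ _ _ hz.2 h'')⟩)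
    · rcases lnd (hU.slice' y') x with h | h
      · exact h
      · refine absurd n2 (((Set.Ioo_infinite hyy)).mono fun z hz => ⟨hup _ _ _ hz.1 hy, h.mono fun x' h' h'' => h' (hup _ _ _ hz.2 h'')⟩)
  · intro hy
    rw [ev_Nb]
    refine ⟨?_, ?_, fun h => hy (hup _ _ _ hyy h)⟩
    · rcases rnd (hU.slice' y) x with h | h
      · refine absurd n3 (((Set.Ioo_infinite hyy)).mono fun z hz => ⟨fun h' => hy (hup _ _ _ hz.2 h'), h.mono fun x' h' h'' => h'' (hup _ _ _ hz.1 h')⟩)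
      · exact h
    · rcases lnd (hU.slice' y) x with h | h
      · refine absurd n4 (((Set.Ioo_infinite hyy)).mono fun z hz => ⟨fun h' => hy (hup _ _ _ hz.2 h'), h.mono fun x' h' h'' => h'' (hup _ _ _ hz.1 h')⟩)
      · exact h
end
end OM

namespace OM
set_option linter.unusedSectionVars false
set_option linter.unusedSimpArgs false
set_option linter.unusedVariables false
section
variable {L : FirstOrder.Language.{u,u}} {M : Type u} [L.Structure M]
variable [LinearOrder M] [DenselyOrdered M] [NoMinOrder M] [NoMaxOrder M] [OMin L M]
variable {Γ Δ Θ : Type u} [Ctx M Γ] [Ctx M Δ] [Ctx M Θ]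
theorem nb_infinite {x : M} {P : M → Prop} (h : ∀ᶠ y in Nb x, P y) : {y | P y}.Infinite := by
  obtain ⟨b, hb, h⟩ := (ev_Nb.1 h).1
  exact (Set.Ioo_infinite hb).mono fun y hy => h y hy.1 hy.2

theorem two_d_aux {S : Set (M × M)} (hS : Def L M (· ∈ S))
    (h : {x | {y | (x, y) ∈ S}.Infinite}.Infinite) : ∃ y, {x | (x, y) ∈ S}.Infinite := by
  obtain ⟨U, hUd⟩ : ∃ U : Set (M × M), U = {p | ∃ y1 y2, y1 < y2 ∧ y2 ≤ p.2 ∧ ∀ y, y1 < y → y < y2 → (p.1, y) ∈ S} := ⟨_, rfl⟩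
  have hU : Def L M (· ∈ U) := by rw [hUd]; exact md
  obtain ⟨V, hVd⟩ : ∃ V : Set (M × M), V = {p | ∃ z, z ≤ p.2 ∧ (p.1, z) ∈ U ∧ (p.1, z) ∉ S} := ⟨_, rfl⟩
  have hV : Def L M (· ∈ V) := by rw [hVd]; exact md
  have hU1 : ∀ {x y1 y2 y}, y1 < y2 → y2 ≤ y → (∀ y, y1 < y → y < y2 → (x, y) ∈ S) → (x, y) ∈ U := by
    intro x y1 y2 y h1 h2 h3; rw [hUd]; exact ⟨y1, y2, h1, h2, h3⟩
  have cU := cutcont hU (by rw [hUd]; rintro x y y' hy ⟨a, b, h1, h2, h3⟩; exact ⟨a, b, h1, h2.trans hy.le, h3⟩)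
  have cV := cutcont hV (by rw [hVd]; rintro x y y' hy ⟨a, h2, h3⟩; exact ⟨a, h2.trans hy.le, h3⟩)
  obtain ⟨x, hx, hc⟩ := (h.sdiff (cU.union cV)).nonempty
  simp only [mem_union, mem_ofPred_eq, not_or, not_not] at hc
  suffices ∃ y1 y2, y1 < y2 ∧ (x, y1) ∈ U ∧ (x, y2) ∉ V by
    obtain ⟨y1, y2, h1, h2, h3⟩ := this
    obtain ⟨y, h4, h5⟩ := exists_between h1
    refine ⟨y, nb_infinite (x := x) ?_⟩
    filter_upwards [((hc.1 _ _ h4).1 h2), ((hc.2 _ _ h5).2 h3)] with x' h6 h7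
    by_contra h8
    apply h7
    rw [hVd]
    exact ⟨y, le_rfl, h6, h8⟩
  obtain ⟨a, b, hab, hI⟩ := (infinite_iff (hS.slice x)).1 hx
  have haU : ∀ y, a < y → y < b → (x, y) ∈ U := fun y h1 h2 => hU1 h1 le_rfl fun z h3 h4 => hI z h3 (h4.trans h2)
  by_cases hbd : BddBelow {y | (x, y) ∈ U}
  · obtain ⟨c, hcl⟩ := OMin.t3' {y | (x,y) ∈ U} (hU.slice x) (by
      obtain ⟨y, h1, h2⟩ := exists_between hab
      exact ⟨y, haU y h1 h2⟩) hbd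
    have key : ∀ y1 y2, y1 < y2 → (∀ y, y1 < y → y < y2 → (x, y) ∈ S) → c ≤ y1 := by
      intro y1 y2 h1 h2
      by_contra h3
      push Not at h3
      obtain ⟨y, h4, h5⟩ := exists_between (lt_min h1 h3)
      have : (x, y) ∈ U := hU1 h4 le_rfl fun z h6 h7 => h2 z h6 (h7.trans (h5.trans_le (min_le_left _ _)))
      exact absurd (hcl.1 this) (not_le.2 (h5.trans_le (min_le_right _ _)))
    have hr : ∀ᶠ y in RN c, (x, y) ∈ S := by
      rcases rnd (hS.slice x) c with h | ⟨d, hd, h⟩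
      · exact h
      · exfalso
        refine absurd (hcl.2 (show d ∈ lowerBounds _ from fun e he => ?_)) (not_le.2 hd)
        by_contra h3
        push Not at h3
        change (x, e) ∈ U at he
        rw [hUd] at he
        obtain ⟨y1, y2, h4, h5, h6⟩ := he
        obtain ⟨y, h7, h8⟩ := exists_between h4
        exact h y ((key _ _ h4 h6).trans_lt h7) (h8.trans (h5.trans_lt h3)) (h6 y h7 h8)
    obtain ⟨d, hd, hr⟩ := hr
    obtain ⟨y1, h1, h2⟩ := exists_between hd
    obtain ⟨y2, h3, h4⟩ := exists_between h2
    refine ⟨y1, y2, h3, hU1 h1 le_rfl fun z h5 h6 => hr z h5 (h6.trans h2), ?_⟩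
    rw [hVd]
    rintro ⟨z, h5, h6, h7⟩
    rcases (hcl.1 h6).lt_or_eq with h8 | h8
    · exact h7 (hr z h8 (h5.trans_lt h4))
    · subst h8
      rw [hUd] at h6
      obtain ⟨y1, y2, h4, h5, h6⟩ := h6
      exact absurd (key _ _ h4 h6) (not_le.2 (h4.trans_le h5))
  · have hlow : ∃ a, ∀ y, y < a → (x, y) ∈ S := by
      rcases OMin.t4' {y | (x, y) ∈ S} (hS.slice x) with h | ⟨d, h⟩
      · exact h
      · exfalso
        apply hbd
        refine ⟨d, fun e he => ?_⟩
        by_contra h3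
        push Not at h3
        change (x, e) ∈ U at he
        rw [hUd] at he
        obtain ⟨y1, y2, h4, h5, h6⟩ := he
        obtain ⟨y, h7, h8⟩ := exists_between h4
        exact h y (h8.trans (h5.trans_lt h3)) (h6 y h7 h8)
    obtain ⟨a, ha⟩ := hlow
    obtain ⟨y2, h2⟩ := exists_lt a
    obtain ⟨y1, h1⟩ := exists_lt y2
    obtain ⟨y0, h0⟩ := exists_lt y1
    refine ⟨y1, y2, h1, hU1 h0 le_rfl fun z h5 h6 => ha z (h6.trans (h1.trans h2)), ?_⟩
    rw [hVd]
    rintro ⟨z, h5, h6, h7⟩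
    exact h7 (ha z (h5.trans_lt h2))

/-- the two-dimensional lemma -/
theorem two_d {S : Set (M × M)} (hS : Def L M (· ∈ S))
    (h : {x | {y | (x, y) ∈ S}.Infinite}.Infinite) : {y | {x | (x, y) ∈ S}.Infinite}.Infinite := by
  intro hf
  obtain ⟨F, hFd⟩ : ∃ F : Set M, F = {y | {x | (x, y) ∈ S}.Infinite} := ⟨_, rfl⟩
  have hF : Def L M (· ∈ F) := by rw [hFd]; exact md
  obtain ⟨y, hy⟩ := two_d_aux (L := L) (S := {p | p ∈ S ∧ p.2 ∉ F}) md (h.mono fun x hx => by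
    rw [← hFd] at hf
    exact (hx.sdiff hf).mono fun y hy => ⟨hy.1, hy.2⟩)
  obtain ⟨x, hx⟩ := hy.nonempty
  apply hx.2
  rw [hFd]
  exact hy.mono fun x hx => hx.1
end
end OM

namespace OM
set_option linter.unusedSectionVars false
set_option linter.unusedSimpArgs false
set_option linter.unusedVariables false
section
variable {L : FirstOrder.Language.{u,u}} {M : Type u} [L.Structure M]
variable [LinearOrder M] [DenselyOrdered M] [NoMinOrder M] [NoMaxOrder M] [OMin L M]
variable {Γ Δ Θ : Type u} [Ctx M Γ] [Ctx M Δ] [Ctx M Θ]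
def DimGe : (n : ℕ) → Set (Tup M n) → ℕ → Prop
  | 0, Z, d => Z.Nonempty ∧ d = 0
  | n+1, Z, d => (∃ a : M, DimGe n {w | ((a, w) : M × Tup M n) ∈ (Z : Set (M × Tup M n))} d) ∨
      (∃ d', d = d' + 1 ∧ {a : M | DimGe n {w | ((a, w) : M × Tup M n) ∈ (Z : Set (M × Tup M n))} d'}.Infinite)

theorem DimGe.mono : ∀ {n d : ℕ} {Z Z' : Set (Tup M n)}, Z ⊆ Z' → DimGe n Z d → DimGe n Z' d
  | 0, d, Z, Z', h, h' => ⟨h'.1.mono h, h'.2⟩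
  | n+1, d, Z, Z', h, h' => by
    rcases h' with ⟨a, h'⟩ | ⟨d', rfl, h'⟩
    · exact Or.inl ⟨a, h'.mono fun w hw => h hw⟩
    · exact Or.inr ⟨d', rfl, h'.mono fun a ha => DimGe.mono (fun w hw => h hw) ha⟩

theorem DimGe.nonempty : ∀ {n d : ℕ} {Z : Set (Tup M n)}, DimGe n Z d → Z.Nonempty
  | 0, d, Z, h' => h'.1
  | n+1, d, Z, h' => by
    rcases h' with ⟨a, h'⟩ | ⟨d', rfl, h'⟩
    · obtain ⟨w, hw⟩ := h'.nonempty
      exact ⟨_, hw⟩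
    · obtain ⟨a, ha⟩ := h'.nonempty
      obtain ⟨w, hw⟩ := DimGe.nonempty ha
      exact ⟨_, hw⟩

theorem DimGe.le : ∀ {n d : ℕ} {Z : Set (Tup M n)}, DimGe n Z d → d ≤ n
  | 0, d, Z, h' => h'.2.le
  | n+1, d, Z, h' => by
    rcases h' with ⟨a, h'⟩ | ⟨d', rfl, h'⟩
    · exact h'.le.trans (Nat.le_succ _)
    · obtain ⟨a, ha⟩ := h'.nonempty
      exact Nat.succ_le_succ (DimGe.le ha)

theorem DimGe.zero : ∀ {n : ℕ} {Z : Set (Tup M n)}, Z.Nonempty → DimGe n Z 0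
  | 0, Z, h' => ⟨h', rfl⟩
  | n+1, Z, ⟨(a, w), h'⟩ => Or.inl ⟨a, DimGe.zero ⟨w, h'⟩⟩

theorem DimGe.pred : ∀ {n d : ℕ} {Z : Set (Tup M n)}, DimGe n Z (d+1) → DimGe n Z d
  | 0, d, Z, h' => absurd h'.2 (by simp)
  | n+1, d, Z, h' => by
    rcases h' with ⟨a, h'⟩ | ⟨d', hd, h'⟩
    · exact Or.inl ⟨a, h'.pred⟩
    · obtain ⟨a, ha⟩ := h'.nonempty
      obtain rfl : d = d' := by omega
      exact Or.inl ⟨a, ha⟩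

theorem DimGe.anti {n d d' : ℕ} {Z : Set (Tup M n)} (h : DimGe n Z d) (hd : d' ≤ d) : DimGe n Z d' := by
  induction d with
  | zero => obtain rfl : d' = 0 := by omega
            exact h
  | succ d ih =>
    rcases Nat.lt_or_ge d d' with h1 | h1
    · obtain rfl : d' = d + 1 := by omega
      exact h
    · exact ih h.pred h1

theorem DimGe.max {n : ℕ} {Z : Set (Tup M n)} (h : Z.Nonempty) : ∃ d, DimGe n Z d ∧ ¬ DimGe n Z (d+1) := by
  by_contra hc
  push Not at hc
  have : ∀ d, DimGe n Z d := fun d => by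
    induction d with
    | zero => exact DimGe.zero h
    | succ d ih => exact hc d ih
  exact absurd (this (n+1)).le (by omega)

theorem DimGe.union : ∀ {n d : ℕ} {Z Z' : Set (Tup M n)}, DimGe n (Z ∪ Z') d → DimGe n Z d ∨ DimGe n Z' d
  | 0, d, Z, Z', h => by
    obtain ⟨⟨x, hx | hx⟩, h⟩ := h
    · exact Or.inl ⟨⟨x, hx⟩, h⟩
    · exact Or.inr ⟨⟨x, hx⟩, h⟩
  | n+1, d, Z, Z', h => by
    rcases h with ⟨a, h⟩ | ⟨d', rfl, h⟩
    · rcases DimGe.union (n := n) (Z := {w | ((a, w) : M × Tup M n) ∈ (Z : Set (M × Tup M n))}) (Z' := {w | ((a, w) : M × Tup M n) ∈ (Z' : Set (M × Tup M n))}) h with h | h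
      · exact Or.inl (Or.inl ⟨a, h⟩)
      · exact Or.inr (Or.inl ⟨a, h⟩)
    · have : {a | DimGe n {w | ((a, w) : M × Tup M n) ∈ (Z : Set (M × Tup M n))} d'}.Infinite ∨ {a | DimGe n {w | ((a, w) : M × Tup M n) ∈ (Z' : Set (M × Tup M n))} d'}.Infinite := by
        rw [← Set.infinite_union]
        refine h.mono fun a ha => ?_
        exact DimGe.union (n := n) (Z := {w | ((a, w) : M × Tup M n) ∈ (Z : Set (M × Tup M n))}) (Z' := {w | ((a, w) : M × Tup M n) ∈ (Z' : Set (M × Tup M n))}) ha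
      rcases this with h | h
      · exact Or.inl (Or.inr ⟨d', rfl, h⟩)
      · exact Or.inr (Or.inr ⟨d', rfl, h⟩)

theorem Def.dim : ∀ {n d : ℕ} {Γ : Type u} [Ctx M Γ] {S : Set (Γ × Tup M n)}, Def L M (· ∈ S) →
    Def L M (fun g => DimGe n {w | (g, w) ∈ S} d)
  | 0, d, Γ, _, S, hS => by
    have h : Def L M (fun g : Γ => (∃ w, (g, w) ∈ S) ∧ d = 0) := md
    exact h
  | n+1, d, Γ, _, S, hS => by
    have hS' : Def L M (fun p : (Γ × M) × Tup M n => (p.1.1, (p.1.2, p.2)) ∈ S) :=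
      Def.mem hS ((CM.fst (CM.fst CM.id)).pair ((CM.snd (CM.fst CM.id)).pair (CM.snd CM.id)))
    have h : ∀ d', Def L M (fun p : Γ × M => DimGe n {w | (p, w) ∈ {p : (Γ × M) × Tup M n | (p.1.1, (p.1.2, p.2)) ∈ S}} d') :=
      fun d' => Def.dim hS'
    have h2 : Def L M (fun g : Γ => ∃ a : M, DimGe n {w | ((g,a), w) ∈ {p : (Γ × M) × Tup M n | (p.1.1, (p.1.2, p.2)) ∈ S}} d) :=
      Def.ex (h d)
    cases d with
    | zero => exact h2.congr fun g => by
                constructor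
                · rintro (h | ⟨d', h, -⟩)
                  · exact h
                  · simp at h
                · exact Or.inl
    | succ d =>
      have h3 : Def L M (fun g : Γ => {a : M | DimGe n {w | ((g,a), w) ∈ {p : (Γ × M) × Tup M n | (p.1.1, (p.1.2, p.2)) ∈ S}} d}.Infinite) :=
        Def.infi (h d)
      refine (h2.or h3).congr fun g => or_congr Iff.rfl ?_
      constructor
      · rintro ⟨d', h, h'⟩
        obtain rfl : d = d' := by omega
        exact h'
      · exact fun h => ⟨d, rfl, h⟩

theorem dim_step : ∀ {n d : ℕ} {Z : Set (M × Tup M n)}, Def L M (· ∈ Z) → (∀ w, {b | (b, w) ∈ Z}.Finite) →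
    {b | DimGe n {w | (b, w) ∈ Z} d}.Infinite → DimGe n {w | ∃ b, (b, w) ∈ Z} (d+1)
  | 0, d, Z, hZ, hf, hi => by
    exfalso
    refine hi ((hf PUnit.unit).subset ?_)
    rintro b ⟨⟨w, hw⟩, -⟩
    exact hw
  | n+1, d, Z, hZ, hf, hi => by
    change Set (M × M × Tup M n) at Z
    have hS' : Def L M (fun p : (M × M) × Tup M n => (p.1.1, (p.1.2, p.2)) ∈ Z) :=
      Def.mem hZ ((CM.fst (CM.fst CM.id)).pair ((CM.snd (CM.fst CM.id)).pair (CM.snd CM.id)))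
    have hq : ∀ d', Def L M (fun p : M × M => DimGe n {w | (p.1,p.2,w) ∈ Z} d') :=
      fun d' => Def.dim hS'
    have IH : ∀ a d', {b | DimGe n {w | (b, a, w) ∈ Z} d'}.Infinite → DimGe n {w | ∃ b, (b, a, w) ∈ Z} (d'+1) := by
      intro a d' h
      have hZa : Def L M (fun p : M × Tup M n => (p.1, a, p.2) ∈ Z) :=
        Def.mem hZ ((CM.fst CM.id).pair ((CM.const a).pair (CM.snd CM.id)))
      exact dim_step (Z := {p : M × Tup M n | (p.1, a, p.2) ∈ Z}) hZa (fun w => hf (a, w)) h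
    have : {b | ∃ a, DimGe n {w | (b, a, w) ∈ Z} d}.Infinite ∨
       {b | ∃ d', d = d' + 1 ∧ {a | DimGe n {w | (b, a, w) ∈ Z} d'}.Infinite}.Infinite := by
      rw [← Set.infinite_union]
      exact hi
    rcases this with h | h
    · by_cases hQ : ∃ a, {b | DimGe n {w | (b, a, w) ∈ Z} d}.Infinite
      · obtain ⟨a, ha⟩ := hQ
        exact Or.inl ⟨a, IH a d ha⟩
      · push Not at hQ
        refine Or.inr ⟨d, rfl, ?_⟩
        refine Set.Infinite.mono (s := {a | ∃ b, DimGe n {w | (b, a, w) ∈ Z} d}) ?_ ?_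
        · rintro a ⟨b, hb⟩
          exact hb.mono fun w hw => ⟨b, hw⟩
        · intro hfin
          refine h ((hfin.biUnion fun a _ => hQ a).subset ?_)
          rintro b ⟨a, hb⟩
          exact mem_biUnion (x := a) ⟨b, hb⟩ hb
    · obtain ⟨b, d', rfl, -⟩ := h.nonempty
      refine Or.inr ⟨d'+1, rfl, ?_⟩
      have h2 := two_d (S := {p : M × M | DimGe n {w | (p.1,p.2,w) ∈ Z} d'}) (hq d') (h.mono (by
        rintro b ⟨d'', h1, h2⟩
        obtain rfl : d' = d'' := by omega
        exact h2))
      exact h2.mono fun a ha => IH a d' ha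

theorem dim_top_finite {n : ℕ} {Z : Set (M × Tup M n)} (hZ : Def L M (· ∈ Z)) (hf : ∀ w, {b | (b, w) ∈ Z}.Finite) :
    {b | DimGe n {w | (b, w) ∈ Z} n}.Finite := by
  by_contra h
  exact absurd (dim_step hZ hf h).le (by omega)

end
end OM

namespace OM
set_option linter.unusedSectionVars false
set_option linter.unusedSimpArgs false
set_option linter.unusedVariables false
section
variable {L : FirstOrder.Language.{u,u}} {M : Type u} [L.Structure M]
variable [LinearOrder M] [DenselyOrdered M] [NoMinOrder M] [NoMaxOrder M] [OMin L M]
variable {Γ Δ Θ : Type u} [Ctx M Γ] [Ctx M Δ] [Ctx M Θ]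
theorem md2 {P : Γ → Prop} (h : Def L M P := by
    try simp +zetaDelta only [Set.mem_ofPred_eq, Set.mem_inter_iff, Set.mem_union, Set.mem_compl_iff, Set.mem_sdiff,
      Set.mem_Iio, Set.mem_Ioi, Set.mem_Iic, Set.mem_Ici, Set.mem_Ioo, Set.mem_Icc, Set.mem_Ico,
      Set.mem_Ioc, Set.mem_singleton_iff, Set.mem_univ, ne_eq, gt_iff_lt, ge_iff_le, Set.Nonempty, Set.subset_def]
    repeat' first
      | with_reducible assumption
      | with_reducible exact Def.cst _
      | with_reducible exact CM.id
      | with_reducible exact CM.const _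
      | with_reducible apply CM.fst
      | with_reducible apply CM.snd
      | with_reducible apply CM.pair
      | with_reducible apply Def.and
      | with_reducible apply Def.or
      | with_reducible apply Def.not
      | with_reducible apply Def.iff
      | with_reducible apply Def.ex
      | with_reducible apply Def.imp
      | with_reducible apply Def.all
      | with_reducible apply Def.lt
      | with_reducible apply Def.le
      | with_reducible apply Def.eq
      | (with_reducible refine Def.mem (by with_reducible assumption) ?_)
      | with_reducible apply Def.evR
      | with_reducible apply Def.evL
      | with_reducible apply Def.evN
      | with_reducible apply Def.infi
      | with_reducible apply Def.fini
      | (with_reducible refine Def.comp (by with_reducible assumption) ?_)) : Def L M P := h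

instance (x : M) : NeBot (Nb x) := by unfold Nb; infer_instance
theorem nb_gt {x a : M} (h : a < x) : ∀ᶠ y in Nb x, a < y :=
  ev_Nb.2 ⟨(rn_gt x).mono fun y hy => h.trans hy, ln_gt h, h⟩
theorem nb_lt {x a : M} (h : x < a) : ∀ᶠ y in Nb x, y < a :=
  ev_Nb.2 ⟨rn_lt h, (ln_lt x).mono fun y hy => hy.trans h, h⟩
theorem nb_self {x : M} {P : M → Prop} (h : ∀ᶠ y in Nb x, P y) : P x := (ev_Nb.1 h).2.2
theorem nb_iff {x : M} {P : M → Prop} : (∀ᶠ y in Nb x, P y) ↔ ∃ a b, a < x ∧ x < b ∧ ∀ y, a < y → y < b → P y := by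
  constructor
  · intro h
    obtain ⟨⟨b, hb, h1⟩, ⟨a, ha, h2⟩, h3⟩ := ev_Nb.1 h
    refine ⟨a, b, ha, hb, fun y h4 h5 => ?_⟩
    rcases lt_trichotomy y x with h | rfl | h
    · exact h2 y h h4
    · exact h3
    · exact h1 y h h5
  · rintro ⟨a, b, ha, hb, h⟩
    filter_upwards [nb_gt ha, nb_lt hb] with y h1 h2 using h y h1 h2

theorem bd_finite {P : M → Prop} (hP : Def L M P) : {x | ¬ ∀ᶠ y in Nb x, (P y ↔ P x)}.Finite := by
  by_contra h
  have hd : Def L M (fun x : M => ¬ ∀ᶠ y in Nb x, (P y ↔ P x)) := md2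
  obtain ⟨a, b, hab, h⟩ := (infinite_iff hd).1 h
  have h2 : {x | P x ∧ a < x ∧ x < b}.Infinite ∨ {x | ¬ P x ∧ a < x ∧ x < b}.Infinite := by
    rw [← Set.infinite_union]
    refine (Set.Ioo_infinite hab).mono fun x hx => ?_
    by_cases hp : P x
    · exact Or.inl ⟨hp, hx⟩
    · exact Or.inr ⟨hp, hx⟩
  rcases h2 with h2 | h2
  · obtain ⟨p, q, hpq, h3⟩ := (infinite_iff (L := L) md2).1 h2
    obtain ⟨x, h4, h5⟩ := exists_between hpq
    refine h x (h3 x h4 h5).2.1 (h3 x h4 h5).2.2 ?_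
    filter_upwards [nb_gt h4, nb_lt h5] with y h6 h7
    simp [(h3 x h4 h5).1, (h3 y h6 h7).1]
  · obtain ⟨p, q, hpq, h3⟩ := (infinite_iff (L := L) md2).1 h2
    obtain ⟨x, h4, h5⟩ := exists_between hpq
    refine h x (h3 x h4 h5).2.1 (h3 x h4 h5).2.2 ?_
    filter_upwards [nb_gt h4, nb_lt h5] with y h6 h7
    simp [(h3 x h4 h5).1, (h3 y h6 h7).1]

def Normal (S : Set (M × M)) (u0 y : M) : Prop := ∃ y1 y2, y1 < y ∧ y < y2 ∧
  ((∀ᶠ u in Nb u0, ∀ z, y1 < z → z < y2 → (u, z) ∉ S) ∨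
   ((u0, y) ∈ S ∧ (∀ᶠ u in Nb u0, ∀ z z', y1 < z → z < y2 → y1 < z' → z' < y2 → (u, z) ∈ S → (u, z') ∈ S → z = z') ∧
     ∀ z1 z2, z1 < y → y < z2 → ∀ᶠ u in Nb u0, ∃ z, z1 < z ∧ z < z2 ∧ (u, z) ∈ S))

def Good (S : Set (M × M)) (u0 : M) : Prop := (∀ y, Normal S u0 y) ∧
  (∃ y1, ∀ᶠ u in Nb u0, ∀ y, y < y1 → (u, y) ∉ S) ∧ (∃ y1, ∀ᶠ u in Nb u0, ∀ y, y1 < y → (u, y) ∉ S)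

theorem Def.good {S : Set (Γ × M × M)} (hS : Def L M (· ∈ S)) : Def L M (fun p : Γ × M => Good {q | (p.1, q) ∈ S} p.2) := by
  unfold Good Normal; exact md2

theorem normal_fun {S : Set (M × M)} (hS : Def L M (· ∈ S)) (hf : ∀ u, {y | (u, y) ∈ S}.Finite) {f : M → M}
    (hfd : Def L M (fun p : M × M => f p.1 = p.2)) : {u | ¬ Normal S u (f u)}.Finite := by
  have gR : ∀ u y, ∃ y2, y < y2 ∧ ∀ z, y < z → z ≤ y2 → (u, z) ∉ S := by
    intro u y
    rcases rnd (hS.slice u) y with ⟨b, hb, h⟩ | ⟨b, hb, h⟩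
    · exact absurd (hf u) ((Set.Ioo_infinite hb).mono fun z hz => h z hz.1 hz.2)
    · obtain ⟨c, h1, h2⟩ := exists_between hb
      exact ⟨c, h1, fun z h3 h4 => h z h3 (h4.trans_lt h2)⟩
  have gL : ∀ u y, ∃ y2, y2 < y ∧ ∀ z, z < y → y2 ≤ z → (u, z) ∉ S := by
    intro u y
    rcases lnd (hS.slice u) y with ⟨b, hb, h⟩ | ⟨b, hb, h⟩
    · exact absurd (hf u) ((Set.Ioo_infinite hb).mono fun z hz => h z hz.2 hz.1)
    · obtain ⟨c, h1, h2⟩ := exists_between hb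
      exact ⟨c, h2, fun z h3 h4 => h z h3 (h1.trans_le h4)⟩
  have c1 := cutcont (L := L) (U := {p : M × M | ∃ s t, f p.1 = t ∧ (p.1, s) ∈ S ∧ t < s ∧ s ≤ p.2}) (by
    have : Def L M (fun p : M × M => ∃ s t, (p.1, t) ∈ {p : M × M | f p.1 = p.2} ∧ (p.1, s) ∈ S ∧ t < s ∧ s ≤ p.2) := by
      refine Def.ex (Def.ex (Def.and ?_ md2))
      exact hfd.comp (f := fun p : ((M × M) × M) × M => (p.1.1.1, p.2)) ((CM.fst (CM.fst (CM.fst CM.id))).pair (CM.snd CM.id))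
    exact this) (by rintro x y y' hy ⟨s, t, h1, h2, h3, h4⟩; exact ⟨s, t, h1, h2, h3, h4.trans hy.le⟩)
  have c2 := cutcont (L := L) (U := {p : M × M | ∀ s t, f p.1 = t → (p.1, s) ∈ S → s < t → s < p.2}) (by
    have : Def L M (fun p : M × M => ∀ s t, (p.1, t) ∈ {p : M × M | f p.1 = p.2} → (p.1, s) ∈ S → s < t → s < p.2) := by
      refine Def.all (Def.all (Def.imp ?_ md2))
      exact hfd.comp (f := fun p : ((M × M) × M) × M => (p.1.1.1, p.2)) ((CM.fst (CM.fst (CM.fst CM.id))).pair (CM.snd CM.id))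
    exact this) (by rintro x y y' hy h s t h1 h2 h3; exact (h s t h1 h2 h3).trans hy)
  have c3 := cutcont (L := L) (U := {p : M × M | ∃ t, f p.1 = t ∧ t ≤ p.2}) (by
    have : Def L M (fun p : M × M => ∃ t, (p.1, t) ∈ {p : M × M | f p.1 = p.2} ∧ t ≤ p.2) := by
      refine (Def.ex (Def.and ?_ md2))
      exact hfd.comp (f := fun p : ((M × M) × M) => (p.1.1, p.2)) (((CM.fst (CM.fst CM.id))).pair (CM.snd CM.id))
    exact this) (by rintro x y y' hy ⟨s, h1, h2⟩; exact ⟨s, h1, h2.trans hy.le⟩)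
  have c4 := bd_finite (L := L) (P := fun u => ∃ t, f u = t ∧ (u, t) ∈ S) (by
    have : Def L M (fun p : M => ∃ t, (p, t) ∈ {p : M × M | f p.1 = p.2} ∧ (p, t) ∈ S) := by
      refine (Def.ex (Def.and ?_ md2))
      exact hfd
    exact this)
  refine (c1.union (c2.union (c3.union c4))).subset ?_
  intro u hu
  by_contra hno
  simp only [mem_union, mem_ofPred_eq, not_or, not_not] at hno
  obtain ⟨k1, k2, k3, k4⟩ := hno
  apply hu
  obtain ⟨y2, h2, g2⟩ := gR u (f u)
  obtain ⟨y1, h1, g1⟩ := gL u (f u)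
  obtain ⟨e2, e2a, e2b⟩ := exists_between h2
  obtain ⟨e1, e1a, e1b⟩ := exists_between h1
  have a1 := (k1 e2 y2 e2b).2 (by rintro ⟨s, t, rfl, p2, p3, p4⟩; exact g2 s p3 p4 p2)
  have a2 := (k2 y1 e1 e1a).1 (by
    rintro s t rfl p1 p2
    by_contra p3
    exact g1 s p2 (not_lt.1 p3) p1)
  have key : ∀ᶠ u' in Nb u, ∀ z, e1 < z → z < e2 → (u', z) ∈ S → z = f u' := by
    filter_upwards [a1, a2] with u' b1 b2 z q1 q2 q3
    rcases lt_trichotomy z (f u') with h | h | h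
    · exact absurd (b2 z _ rfl q3 h) (not_lt.2 q1.le)
    · exact h
    · exact absurd ⟨z, _, rfl, q3, h, q2.le⟩ b1
  refine ⟨e1, e2, e1b, e2a, ?_⟩
  by_cases hS0 : (u, f u) ∈ S
  · refine Or.inr ⟨hS0, ?_, ?_⟩
    · filter_upwards [key] with u' h3 z z' q1 q2 q3 q4 q5 q6
      rw [h3 z q1 q2 q5, h3 z' q3 q4 q6]
    · intro z1 z2 p1 p2
      obtain ⟨z3, p3, p4⟩ := exists_between p1
      obtain ⟨z4, p5, p6⟩ := exists_between p2
      have b1 := (k3 z3 (f u) p4)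
      have b1 := (k3 z1 z3 p3).2 (by rintro ⟨t, rfl, q⟩; exact absurd p4 (not_lt.2 q))
      have b2 := (k3 (f u) z4 p5).1 ⟨_, rfl, le_rfl⟩
      filter_upwards [b1, b2, k4] with u' q1 q2 q3
      obtain ⟨t, rfl, q2⟩ := q2
      refine ⟨f u', ?_, q2.trans_lt p6, ?_⟩
      · by_contra q4
        exact q1 ⟨_, rfl, not_lt.1 q4⟩
      · obtain ⟨t, rfl, h⟩ := q3.2 ⟨_, rfl, hS0⟩
        exact h
  · refine Or.inl ?_
    filter_upwards [key, k4] with u' h3 q3 z q1 q2 q5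
    have := h3 z q1 q2 q5
    subst this
    obtain ⟨t, rfl, h⟩ := q3.1 ⟨_, rfl, q5⟩
    exact hS0 h

theorem normal_all {S : Set (M × M)} (hS : Def L M (· ∈ S)) (hf : ∀ u, {y | (u, y) ∈ S}.Finite) :
    {u | ∃ y, ¬ Normal S u y}.Finite := by
  obtain ⟨Ab, hAb'⟩ : ∃ Ab : Set (M × M), Ab = {p | ¬ Normal S p.1 p.2} := ⟨_, rfl⟩
  have hAb : Def L M (· ∈ Ab) := by rw [hAb']; unfold Normal; exact md2
  have h1 : ∀ y, {u | (u, y) ∈ Ab}.Finite := by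
    intro y
    rw [hAb']
    exact normal_fun hS hf (f := fun _ => y) md2
  have h2 : {u | {y | (u, y) ∈ Ab}.Infinite}.Finite := by
    by_contra h
    obtain ⟨y, hy⟩ := (two_d hAb h).nonempty
    exact hy (h1 y)
  obtain ⟨G, hG'⟩ : ∃ G : Set (M × M), G = {p | (p ∈ Ab ∧ ∀ y, (p.1, y) ∈ Ab → p.2 ≤ y) ∨ ((¬ ∃ z, (p.1, z) ∈ Ab ∧ ∀ y, (p.1, y) ∈ Ab → z ≤ y) ∧ p.2 = p.1)} := ⟨_, rfl⟩
  have hG : Def L M (· ∈ G) := by rw [hG']; exact md2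
  have hfn : ∀ u, ∃ y, (u, y) ∈ G ∧ ∀ y', (u, y') ∈ G → y' = y := by
    intro u
    rw [hG']
    by_cases h : ∃ z, (u, z) ∈ Ab ∧ ∀ y, (u, y) ∈ Ab → z ≤ y
    · obtain ⟨z, h3, h4⟩ := h
      refine ⟨z, Or.inl ⟨h3, h4⟩, ?_⟩
      rintro y' (⟨h5, h6⟩ | ⟨h5, h6⟩)
      · exact le_antisymm (h6 _ h3) (h4 _ h5)
      · exact absurd ⟨z, h3, h4⟩ h5
    · refine ⟨u, Or.inr ⟨h, rfl⟩, ?_⟩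
      rintro y' (⟨h5, h6⟩ | ⟨h5, h6⟩)
      · exact absurd ⟨y', h5, h6⟩ h
      · exact h6
  choose f hf1 hf2 using hfn
  have h3 := normal_fun hS hf (f := f) (hG.congr fun p => ⟨fun h => by
      have := hf1 p.1; rw [h] at this; exact this, fun h => (hf2 p.1 p.2 h).symm⟩)
  refine (h2.union h3).subset ?_
  rintro u ⟨y, hy⟩
  by_cases hi : {y | (u, y) ∈ Ab}.Infinite
  · exact Or.inl hi
  · right
    obtain ⟨z, h5, h6⟩ := (Set.not_infinite.1 hi).exists_minimal ⟨y, by rw [hAb']; exact hy⟩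
    have h7 : (u, z) ∈ G := by
      rw [hG']
      refine Or.inl ⟨h5, fun y hy => ?_⟩
      rcases le_total z y with h | h
      · exact h
      · exact h6 hy h
    change ¬ Normal S u (f u)
    rw [← hf2 u z h7]
    rw [hAb'] at h5
    exact h5

theorem good_finite {S : Set (M × M)} (hS : Def L M (· ∈ S)) (hf : ∀ u, {y | (u, y) ∈ S}.Finite) :
    {u | ¬ Good S u}.Finite := by
  have c1 := cutcont (L := L) (U := {p : M × M | ∃ s, (p.1, s) ∈ S ∧ s ≤ p.2}) md2
    (by rintro x y y' hy ⟨s, h1, h2⟩; exact ⟨s, h1, h2.trans hy.le⟩)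
  have c2 := cutcont (L := L) (U := {p : M × M | ∀ s, (p.1, s) ∈ S → s ≤ p.2}) md2
    (by rintro x y y' hy h s h1; exact (h s h1).trans hy.le)
  refine ((normal_all hS hf).union (c1.union c2)).subset ?_
  intro u hu
  by_contra hno
  simp only [mem_union, mem_ofPred_eq, not_or, not_not, not_exists] at hno
  obtain ⟨k1, k2, k3⟩ := hno
  have : Nonempty M := ⟨u⟩
  refine hu ⟨k1, ?_, ?_⟩
  · obtain ⟨b, hb⟩ := (hf u).bddBelow
    obtain ⟨c, hc⟩ := exists_lt b
    obtain ⟨d, hd⟩ := exists_lt c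
    refine ⟨d, ?_⟩
    filter_upwards [(k2 d c hd).2 (by rintro ⟨s, h1, h2⟩; exact absurd (hb h1) (not_le.2 (h2.trans_lt hc)))] with u' h1 y hy hy'
    exact h1 ⟨y, hy', hy.le⟩
  · obtain ⟨b, hb⟩ := (hf u).bddAbove
    obtain ⟨c, hc⟩ := exists_gt b
    refine ⟨c, ?_⟩
    filter_upwards [(k3 b c hc).1 (fun s hs => hb hs)] with u' h1 y hy hy'
    exact absurd hy (not_lt.2 (h1 y hy'))
end
end OM

namespace OM
set_option linter.unusedSectionVars false
set_option linter.unusedSimpArgs false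
set_option linter.unusedVariables false
section
variable {L : FirstOrder.Language.{u,u}} {M : Type u} [L.Structure M]
variable [LinearOrder M] [DenselyOrdered M] [NoMinOrder M] [NoMaxOrder M] [OMin L M]
variable {Γ Δ Θ : Type u} [Ctx M Γ] [Ctx M Δ] [Ctx M Θ]
theorem clear_compact {S : Set (M × M)} (hS : Def L M (· ∈ S)) {u0 a b : M} (hn : ∀ y, Normal S u0 y) (hab : a ≤ b)
    (hc : ∀ y, a ≤ y → y ≤ b → (u0, y) ∉ S) : ∀ᶠ u in Nb u0, ∀ y, a ≤ y → y ≤ b → (u, y) ∉ S := by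
  have hbox : ∀ y, a ≤ y → y ≤ b → ∃ y1 y2, y1 < y ∧ y < y2 ∧ ∀ᶠ u in Nb u0, ∀ z, y1 < z → z < y2 → (u, z) ∉ S := by
    intro y h1 h2
    obtain ⟨y1, y2, h3, h4, h5 | ⟨h5, -⟩⟩ := hn y
    · exact ⟨y1, y2, h3, h4, h5⟩
    · exact absurd h5 (hc y h1 h2)
  let E : Set M := {c | a ≤ c ∧ c ≤ b ∧ ∀ᶠ u in Nb u0, ∀ y, a ≤ y → y ≤ c → (u, y) ∉ S}
  have haE : a ∈ E := by
    obtain ⟨y1, y2, h3, h4, h5⟩ := hbox a le_rfl hab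
    refine ⟨le_rfl, hab, h5.mono fun u h y h6 h7 => h y (h3.trans_le h6) (h7.trans_lt h4)⟩
  obtain ⟨c, hcE⟩ := OMin.t3 (L := L) E md2 ⟨a, haE⟩ ⟨b, fun x hx => hx.2.1⟩
  have hac := hcE.1 haE
  have hcb : c ≤ b := hcE.2 fun x hx => hx.2.1
  obtain ⟨y1, y2, h3, h4, h5⟩ := hbox c hac hcb
  obtain ⟨e, heE, he1⟩ : ∃ e ∈ E, y1 < e := by
    by_contra h
    push Not at h
    exact absurd (hcE.2 (show y1 ∈ upperBounds E from h)) (not_le.2 h3)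
  have key : ∀ d, d < y2 → ∀ᶠ u in Nb u0, ∀ y, a ≤ y → y ≤ d → (u, y) ∉ S := by
    intro d hd
    filter_upwards [heE.2.2, h5] with u q1 q2 y q3 q4
    rcases le_or_gt y e with q5 | q5
    · exact q1 y q3 q5
    · exact q2 y (he1.trans q5) (q4.trans_lt hd)
  rcases hcb.lt_or_eq with h | rfl
  · obtain ⟨d, hd1, hd2⟩ := exists_between (lt_min h4 h)
    have : d ∈ E := ⟨hac.trans hd1.le, hd2.le.trans (min_le_right _ _), key d (hd2.trans_le (min_le_left _ _))⟩
    exact absurd (hcE.1 this) (not_le.2 hd1)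
  · exact key c h4

theorem count_below {S : Set (M × M)} (hS : Def L M (· ∈ S)) (hf : ∀ u, {y | (u, y) ∈ S}.Finite) {u0 : M} (hg : Good S u0) :
    ∀ (k : ℕ) (c : M), (u0, c) ∉ S → {y | (u0, y) ∈ S ∧ y < c}.ncard = k →
      ∀ᶠ u in Nb u0, {y | (u, y) ∈ S ∧ y < c}.ncard = k := by
  intro k
  induction k with
  | zero =>
    intro c hc h0
    rw [Set.ncard_eq_zero ((hf u0).subset fun y hy => hy.1)] at h0
    obtain ⟨y1, h1⟩ := hg.2.1
    obtain ⟨e, he⟩ := exists_lt (min y1 c)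
    have h2 := clear_compact hS hg.1 (a := e) (b := c) (he.le.trans (min_le_right _ _)) (fun y h3 h4 h5 => by
      rcases h4.lt_or_eq with h4 | rfl
      · have : y ∈ (∅ : Set M) := by rw [← h0]; exact ⟨h5, h4⟩
        exact this
      · exact hc h5)
    filter_upwards [h1, h2] with u q1 q2
    rw [Set.ncard_eq_zero ((hf u).subset fun y hy => hy.1)]
    refine Set.eq_empty_of_forall_notMem ?_
    rintro y ⟨h3, h4⟩
    rcases le_or_gt e y with h | h
    · exact q2 y h h4.le h3
    · exact q1 y (h.trans (he.trans_le (min_le_left _ _))) h3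
  | succ k ih =>
    intro c hc hk
    have hfin : {y | (u0, y) ∈ S ∧ y < c}.Finite := (hf u0).subset fun y hy => hy.1
    obtain ⟨s, hs, hmax⟩ := hfin.exists_maximal (by
      rw [Set.nonempty_iff_ne_empty]; rintro h; rw [h] at hk; simp at hk)
    obtain ⟨y1, y2, h1, h2, h3 | ⟨-, h3, h4⟩⟩ := hg.1 s
    · exact absurd hs.1 (nb_self h3 s h1 h2)
    obtain ⟨e, e1, e2⟩ := exists_between h1
    obtain ⟨e', e3, e4⟩ := exists_between (lt_min h2 hs.2)
    have h5 := nb_self h3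
    have heS : (u0, e) ∉ S := fun h => absurd (h5 e s e1 (e2.trans h2) h1 h2 h hs.1) e2.ne
    have hset : {y | (u0, y) ∈ S ∧ y < c} = insert s {y | (u0, y) ∈ S ∧ y < e} := by
      ext y
      constructor
      · rintro ⟨p1, p2⟩
        rcases lt_or_ge y e with h | h
        · exact Or.inr ⟨p1, h⟩
        · left
          rcases lt_or_ge y y2 with h' | h'
          · exact h5 y s (e1.trans_le h) h' h1 h2 p1 hs.1
          · exact le_antisymm (hmax ⟨p1, p2⟩ (h2.le.trans h')) (h2.le.trans h')
      · rintro (rfl | ⟨p1, p2⟩)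
        · exact hs
        · exact ⟨p1, p2.trans (e2.trans hs.2)⟩
    rw [hset, Set.ncard_insert_of_notMem (fun h => absurd h.2 (not_lt.2 e2.le)) ((hf u0).subset fun y hy => hy.1)] at hk
    have hcl := clear_compact hS hg.1 (a := e') (b := c) (e4.le.trans (min_le_right _ _)) (fun y h3 h4 h5 => by
      rcases h4.lt_or_eq with h4 | rfl
      · exact absurd (hmax ⟨h5, h4⟩ (e3.le.trans h3)) (not_le.2 (e3.trans_le h3))
      · exact hc h5)
    filter_upwards [h3, h4 e e' e2 e3, hcl, ih e heS (by omega)] with u q1 q2 q3 q4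
    obtain ⟨z, z1, z2, z3⟩ := q2
    have hset : {y | (u, y) ∈ S ∧ y < c} = insert z {y | (u, y) ∈ S ∧ y < e} := by
      have e5 := e4.trans_le (min_le_left _ _)
      ext y
      constructor
      · rintro ⟨p1, p2⟩
        rcases lt_or_ge y e with h | h
        · exact Or.inr ⟨p1, h⟩
        · left
          rcases lt_or_ge y e' with h' | h'
          · exact q1 y z (e1.trans_le h) (h'.trans e5) (e1.trans z1) (z2.trans e5) p1 z3
          · exact absurd p1 (q3 y h' p2.le)
      · rintro (rfl | ⟨p1, p2⟩)
        · exact ⟨z3, z2.trans (e4.trans_le (min_le_right _ _))⟩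
        · exact ⟨p1, p2.trans (e2.trans hs.2)⟩
    rw [hset, Set.ncard_insert_of_notMem (fun h => absurd h.2 (not_lt.2 z1.le)) ((hf u).subset fun y hy => hy.1), q4]

theorem good_count {S : Set (M × M)} (hS : Def L M (· ∈ S)) (hf : ∀ u, {y | (u, y) ∈ S}.Finite) {u0 : M} (hg : Good S u0) :
    ∀ᶠ u in Nb u0, {y | (u, y) ∈ S}.ncard = {y | (u0, y) ∈ S}.ncard := by
  obtain ⟨y1, h1⟩ := hg.2.2
  obtain ⟨c, hc⟩ := exists_gt y1
  have h2 : ∀ {u}, (∀ y, y1 < y → (u, y) ∉ S) → {y | (u, y) ∈ S ∧ y < c} = {y | (u, y) ∈ S} := by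
    intro u h
    ext y
    refine ⟨fun h => h.1, fun h' => ⟨h', ?_⟩⟩
    by_contra h3
    exact h y (hc.trans_le (not_lt.1 h3)) h'
  have h3 := count_below hS hf hg _ c (nb_self h1 c hc) rfl
  filter_upwards [h3, h1] with u q1 q2
  rw [← h2 (nb_self h1), ← h2 q2, q1]
end
end OM

namespace OM
set_option linter.unusedSectionVars false
set_option linter.unusedSimpArgs false
set_option linter.unusedVariables false
section
variable {L : FirstOrder.Language.{u,u}} {M : Type u} [L.Structure M]
variable [LinearOrder M] [DenselyOrdered M] [NoMinOrder M] [NoMaxOrder M] [OMin L M]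
variable {Γ Δ Θ : Type u} [Ctx M Γ] [Ctx M Δ] [Ctx M Θ]
theorem Def.cardGe : ∀ {c : ℕ} {Γ : Type u} [Ctx M Γ] {S : Set (Γ × M)}, Def L M (· ∈ S) → (∀ g, {y | (g, y) ∈ S}.Finite) →
    Def L M (fun g => c ≤ {y | (g, y) ∈ S}.ncard)
  | 0, Γ, _, S, hS, hf => Def.tt.congr (by simp)
  | c+1, Γ, _, S, hS, hf => by
    have h1 : Def L M (· ∈ {p : (Γ × M) × M | (p.1.1, p.2) ∈ S ∧ p.2 ≠ p.1.2}) := md2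
    have h2 := Def.cardGe (c := c) h1 (fun g => (hf g.1).subset fun y hy => hy.1)
    have h3 : Def L M (fun g : Γ => ∃ y, (g, y) ∈ S ∧ (c ≤ {z | ((g, y), z) ∈ {p : (Γ × M) × M | (p.1.1, p.2) ∈ S ∧ p.2 ≠ p.1.2}}.ncard)) :=
      Def.ex (Def.and md2 h2)
    refine h3.congr fun g => ?_
    have hs : ∀ y, (g, y) ∈ S → {y | (g, y) ∈ S}.ncard = {z | ((g, y), z) ∈ {p : (Γ × M) × M | (p.1.1, p.2) ∈ S ∧ p.2 ≠ p.1.2}}.ncard + 1 := by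
      intro y hy
      rw [← Set.ncard_sdiff_singleton_add_one (show y ∈ {y | (g, y) ∈ S} from hy) (hf g)]
      rfl
    constructor
    · intro h
      have hne : {y | (g, y) ∈ S}.Nonempty := by
        rw [Set.nonempty_iff_ne_empty]; rintro h'; rw [h'] at h; simp at h
      obtain ⟨y, hy⟩ := hne
      refine ⟨y, hy, ?_⟩
      have := hs y hy
      omega
    · rintro ⟨y, hy, h⟩
      have := hs y hy
      omega

theorem Def.cardEq {c : ℕ} {S : Set (Γ × M)} (hS : Def L M (· ∈ S)) (hf : ∀ g, {y | (g, y) ∈ S}.Finite) :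
    Def L M (fun g => {y | (g, y) ∈ S}.ncard = c) :=
  ((Def.cardGe (c := c) hS hf).and (Def.cardGe (c := c+1) hS hf).not).congr fun g => by omega

theorem conn {P : M → Prop} (hP : Def L M P) {u1 u2 : M} (h12 : u1 ≤ u2)
    (hloc : ∀ u, u1 ≤ u → u ≤ u2 → ∀ᶠ u' in Nb u, (P u' ↔ P u)) (h1 : P u1) : P u2 := by
  let E : Set M := {c | u1 ≤ c ∧ c ≤ u2 ∧ P c}
  obtain ⟨c, hc⟩ := OMin.t3 (L := L) E md2 ⟨u1, le_rfl, h12, h1⟩ ⟨u2, fun x hx => hx.2.1⟩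
  have ha := hc.1 (show u1 ∈ E from ⟨le_rfl, h12, h1⟩)
  have hb : c ≤ u2 := hc.2 fun x hx => hx.2.1
  obtain ⟨p, q, hp, hq, h⟩ := nb_iff.1 (hloc c ha hb)
  obtain ⟨e, he, he'⟩ : ∃ e ∈ E, p < e := by
    by_contra h
    push Not at h
    exact absurd (hc.2 (show p ∈ upperBounds E from h)) (not_le.2 hp)
  have hPc : P c := (h e he' ((hc.1 he).trans_lt hq)).1 he.2.2
  rcases hb.lt_or_eq with h' | rfl
  · obtain ⟨d, hd1, hd2⟩ := exists_between (lt_min hq h')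
    have : d ∈ E := ⟨ha.trans hd1.le, hd2.le.trans (min_le_right _ _), (h d (hp.trans hd1) (hd2.trans_le (min_le_left _ _))).2 hPc⟩
    exact absurd (hc.1 this) (not_le.2 hd1)
  · exact hPc

variable (L M) in
def UFc (Γ : Type u) [Ctx M Γ] : Prop := ∀ S : Set (Γ × M), Def L M (· ∈ S) → (∀ g, {y | (g, y) ∈ S}.Finite) →
  ∃ N, ∀ g, {y | (g, y) ∈ S}.ncard ≤ N

variable (L M) in
def RR (Γ : Type u) [Ctx M Γ] (q : ℕ) : Prop := ∀ (S : Set ((Γ × Tup M q) × M)) (G : Set (Γ × Tup M q)),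
  Def L M (· ∈ S) → Def L M (· ∈ G) → (∀ g, {y | (g, y) ∈ S}.Finite) →
  (∀ z w w', (z, w) ∈ G → (z, w') ∈ G → {y | ((z, w), y) ∈ S}.ncard = {y | ((z, w'), y) ∈ S}.ncard) →
  (∀ z w, (z, w) ∈ G → DimGe q {w | (z, w) ∈ G} q) → ∃ N, ∀ p ∈ G, {y | (p, y) ∈ S}.ncard ≤ N

theorem CM.comp {f : Δ → Θ} {g : Γ → Δ} (hf : CM L M f) (hg : CM L M g) : CM L M (fun x => f (g x)) := by
  intro j
  have := DefinableFun.comp hg (hf j)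
  simpa using this

theorem UFc.surj (h : UFc L M Δ) {f : Δ → Γ} (hf : CM L M f) (hs : Function.Surjective f) : UFc L M Γ := by
  intro S hS hfin
  have hd : Def L M (fun p : Δ × M => (f p.1, p.2) ∈ S) :=
    Def.mem hS (CM.pair (hf.comp (CM.fst CM.id)) (CM.snd CM.id))
  obtain ⟨N, hN⟩ := h {p | (f p.1, p.2) ∈ S} hd (fun d => hfin (f d))
  refine ⟨N, fun g => ?_⟩
  obtain ⟨d, rfl⟩ := hs g
  exact hN d

theorem RR.step {q : ℕ} (h1 : UFc L M Γ) (h2 : UFc L M (Γ × Tup M q)) (h3 : RR L M Γ (q+1)) : RR L M (M × Γ) q := by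
  intro S G hS hG hf hconst hdim
  obtain ⟨Bd, hBd'⟩ : ∃ Bd : Set ((Γ × M) × Tup M q), Bd = {p | ¬ Good {r : M × M | (((r.1, p.1.1), p.2), r.2) ∈ S} p.1.2} := ⟨_, rfl⟩
  have hBd : Def L M (· ∈ Bd) := by
    rw [hBd']
    have a1 : Def L M (· ∈ {p : (Γ × Tup M q) × M × M | (((p.2.1, p.1.1), p.1.2), p.2.2) ∈ S}) := md2
    have a2 := (Def.good a1).not
    exact a2.comp (f := fun p : ((Γ × M) × Tup M q) => ((p.1.1, p.2), p.1.2))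
      (((CM.fst (CM.fst CM.id)).pair (CM.snd CM.id)).pair (CM.snd (CM.fst CM.id)))
  obtain ⟨F, hF'⟩ : ∃ F : Set ((Γ × M) × Tup M q), F = {p | ((p.1.2, p.1.1), p.2) ∈ G ∧ ¬ ∀ᶠ u' in Nb p.1.2, (((u', p.1.1), p.2) ∈ G ↔ ((p.1.2, p.1.1), p.2) ∈ G)} := ⟨_, rfl⟩
  have hF : Def L M (· ∈ F) := by rw [hF']; exact md2
  obtain ⟨U, hU'⟩ : ∃ U : Set (Γ × M), U = {p | ∃ w, ((p.2, p.1), w) ∈ G} := ⟨_, rfl⟩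
  have hU : Def L M (· ∈ U) := by rw [hU']; exact md2
  obtain ⟨E, hE'⟩ : ∃ E : Set (Γ × M), E = {p | DimGe q {w | (p, w) ∈ Bd} q ∨ DimGe q {w | (p, w) ∈ F} q ∨
     ¬ ∀ᶠ u' in Nb p.2, ((p.1, u') ∈ U ↔ (p.1, p.2) ∈ U)} := ⟨_, rfl⟩
  have hE : Def L M (· ∈ E) := by
    rw [hE']
    exact (Def.dim hBd).or ((Def.dim hF).or md2)
  have hsl : ∀ z w, Def L M (· ∈ {r : M × M | (((r.1, z), w), r.2) ∈ S}) := fun z w => md2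
  have hEf : ∀ z, {u | (z, u) ∈ E}.Finite := by
    intro z
    have d1 : Def L M (· ∈ {p : M × Tup M q | ((z, p.1), p.2) ∈ Bd}) := md2
    have d2 : Def L M (· ∈ {p : M × Tup M q | ((z, p.1), p.2) ∈ F}) := md2
    have b1 := dim_top_finite d1 (fun w => by
      rw [hBd']
      exact good_finite (hsl z w) (fun u => hf ((u, z), w)))
    have b2 := dim_top_finite d2 (fun w => by
      rw [hF']
      have d3 : Def L M (fun u : M => ((u, z), w) ∈ G) := md2
      exact (bd_finite d3).subset fun u hu => hu.2)
    have b3 := bd_finite (hU.slice z)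
    refine (b1.union (b2.union b3)).subset ?_
    intro u hu
    rw [hE'] at hu
    exact hu
  obtain ⟨N1, hN1⟩ := h1 E hE hEf
  -- the index of a point
  have hix : Def L M (· ∈ {p : (Γ × M) × M | (p.1.1, p.2) ∈ E ∧ p.2 < p.1.2}) := md2
  have hixf : ∀ g : Γ × M, {y | (g, y) ∈ {p : (Γ × M) × M | (p.1.1, p.2) ∈ E ∧ p.2 < p.1.2}}.Finite :=
    fun g => (hEf g.1).subset fun y hy => hy.1
  obtain ⟨ix, hix'⟩ : ∃ ix : Γ → M → ℕ, ∀ z u, ix z u = {y | (z, y) ∈ E ∧ y < u}.ncard := ⟨_, fun _ _ => rfl⟩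
  have hixd : ∀ i, Def L M (fun p : Γ × M => ix p.1 p.2 = i) := fun i =>
    (Def.cardEq (c := i) hix hixf).congr fun p => by rw [hix']; rfl
  have hixN : ∀ z u, ix z u ≤ N1 := fun z u => by
    rw [hix']
    exact (Set.ncard_le_ncard (fun y hy => hy.1) (hEf z)).trans (hN1 z)
  have hixeq : ∀ z u u', u ≤ u' → ix z u = ix z u' → ∀ e, u ≤ e → e < u' → (z, e) ∉ E := by
    intro z u u' hle h e he he' hee
    rw [hix', hix'] at h
    have := Set.eq_of_subset_of_ncard_le (s := {y | (z, y) ∈ E ∧ y < u}) (t := {y | (z, y) ∈ E ∧ y < u'})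
      (fun y hy => ⟨hy.1, hy.2.trans_le hle⟩) h.ge (hixf (z, u'))
    have h4 : e ∈ {y | (z, y) ∈ E ∧ y < u'} := ⟨hee, he'⟩
    rw [← this] at h4
    exact absurd h4.2 (not_lt.2 he)
  -- Local structure
  have hloc : ∀ z u w0, (z, u) ∉ E → ((u, z), w0) ∈ G → ∃ w, ((u, z), w) ∈ G ∧ ∀ᶠ u' in Nb u, ((u', z), w) ∈ G ∧
      {y | (((u', z), w), y) ∈ S}.ncard = {y | (((u, z), w), y) ∈ S}.ncard := by
    intro z u w0 hzE hw0
    by_contra hcon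
    simp only [not_exists, not_and] at hcon
    have hd := hdim _ _ hw0
    have : DimGe q ({w | ((z, u), w) ∈ Bd} ∪ {w | ((z, u), w) ∈ F}) q := by
      refine hd.mono fun w hw => ?_
      by_contra hno
      simp only [mem_union, mem_ofPred_eq, not_or] at hno
      obtain ⟨n1, n2⟩ := hno
      rw [hBd', mem_ofPred_eq, not_not] at n1
      rw [hF', mem_ofPred_eq, not_and, not_not] at n2
      refine hcon w hw ?_
      filter_upwards [n2 hw, good_count (hsl z w) (fun u => hf ((u, z), w)) n1] with u' q1 q2
      exact ⟨q1.2 hw, q2⟩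
    apply hzE
    rw [hE']
    rcases this.union with h | h
    · exact Or.inl h
    · exact Or.inr (Or.inl h)
  have hUloc : ∀ z u, (z, u) ∉ E → ∀ᶠ u' in Nb u, ((z, u') ∈ U ↔ (z, u) ∈ U) := by
    intro z u h
    rw [hE', mem_ofPred_eq, not_or, not_or, not_not] at h
    exact h.2.2
  have hlev : ∀ c, Def L M (fun p : Γ × M => ∃ w, ((p.2, p.1), w) ∈ G ∧ {y | (((p.2, p.1), w), y) ∈ S}.ncard = c) := by
    intro c
    have := Def.cardEq (c := c) hS hf
    refine Def.ex (Def.and md2 ?_)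
    exact this.comp (f := fun p : (Γ × M) × Tup M q => ((p.1.2, p.1.1), p.2)) (((CM.snd (CM.fst CM.id)).pair (CM.fst (CM.fst CM.id))).pair (CM.snd CM.id))
  have hgap : ∀ z u u' w w', u ≤ u' → (z, u) ∉ E → (z, u') ∉ E → ix z u = ix z u' → ((u, z), w) ∈ G → ((u', z), w') ∈ G →
      {y | (((u, z), w), y) ∈ S}.ncard = {y | (((u', z), w'), y) ∈ S}.ncard := by
    intro z u u' w w' hle huE huE' hixx hw hw'
    have hnoE : ∀ e, u ≤ e → e ≤ u' → (z, e) ∉ E := by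
      intro e h4 h5
      rcases h5.lt_or_eq with h5 | rfl
      · exact hixeq z u u' hle hixx e h4 h5
      · exact huE'
    obtain ⟨c, hc⟩ : ∃ c, c = {y | (((u, z), w), y) ∈ S}.ncard := ⟨_, rfl⟩
    have := conn (L := L) (P := fun v => ∃ w, ((v, z), w) ∈ G ∧ {y | (((v, z), w), y) ∈ S}.ncard = c)
      ((hlev c).comp ((CM.const z).pair CM.id)) hle (fun v h4 h5 => by
        have hvE := hnoE v h4 h5
        by_cases hvU : ∃ w0, ((v, z), w0) ∈ G
        · obtain ⟨w0, hw0⟩ := hvU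
          obtain ⟨w1, hw1, hw2⟩ := hloc z v w0 hvE hw0
          filter_upwards [hw2] with v' q1
          constructor
          · rintro ⟨w3, q2, q3⟩
            refine ⟨w1, hw1, ?_⟩
            rw [← q1.2, ← q3]
            exact hconst _ _ _ q1.1 q2
          · rintro ⟨w3, q2, q3⟩
            refine ⟨w1, q1.1, ?_⟩
            rw [q1.2, ← q3]
            exact hconst _ _ _ hw1 q2
        · have h6 : (z, v) ∉ U := by rw [hU']; exact hvU
          filter_upwards [hUloc z v hvE] with v' q1
          have h7 : (z, v') ∉ U := fun h => h6 (q1.1 h)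
          rw [hU'] at h6 h7
          constructor
          · rintro ⟨w3, q2, q3⟩; exact absurd ⟨w3, q2⟩ h7
          · rintro ⟨w3, q2, q3⟩; exact absurd ⟨w3, q2⟩ h6) ⟨w, hw, hc.symm⟩
    obtain ⟨w3, q2, q3⟩ := this
    rw [← hc, ← q3]
    exact hconst _ _ _ q2 hw'
  -- gaps
  have hA : ∀ i, ∃ N, ∀ z u w, (z, u) ∉ E → ix z u = i → ((u, z), w) ∈ G → {y | (((u, z), w), y) ∈ S}.ncard ≤ N := by
    intro i
    have hixi := hixd i
    have e1 : Def L M (· ∈ {p : (Γ × (M × Tup M q)) × M | (((p.1.2.1, p.1.1), p.1.2.2), p.2) ∈ S}) := md2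
    have e2 : Def L M (· ∈ {p : Γ × (M × Tup M q) | (((p.2.1, p.1), p.2.2) ∈ G ∧ (p.1, p.2.1) ∉ E) ∧ ix p.1 p.2.1 = i}) :=
      Def.and md2 (hixi.comp (f := fun p : Γ × (M × Tup M q) => (p.1, p.2.1)) ((CM.fst CM.id).pair (CM.fst (CM.snd CM.id))))
    obtain ⟨N, hN⟩ := h3 _ _ e1 e2 (fun g => hf ((g.2.1, g.1), g.2.2)) (by
      rintro z ⟨u, w⟩ ⟨u', w'⟩ ⟨⟨q1, q2⟩, q3⟩ ⟨⟨q4, q5⟩, q6⟩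
      rcases le_total u u' with h | h
      · exact hgap z u u' w w' h q2 q5 (q3.trans q6.symm) q1 q4
      · exact (hgap z u' u w' w h q5 q2 (q6.trans q3.symm) q4 q1).symm) (by
      rintro z ⟨u, w⟩ ⟨⟨q1, q2⟩, q3⟩
      refine Or.inr ⟨q, rfl, ?_⟩
      refine nb_infinite (x := u) ?_
      have hb := bd_finite (hE.slice z)
      have q3' : ∀ᶠ u' in Nb u, (z, u') ∉ E := by
        refine ev_Nb.2 ⟨?_, ?_, q2⟩
        · rcases rnd (hE.slice z) u with ⟨b, hb, h⟩ | h
          · exact absurd (hEf z) ((Set.Ioo_infinite hb).mono fun y hy => h y hy.1 hy.2)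
          · exact h
        · rcases lnd (hE.slice z) u with ⟨b, hb, h⟩ | h
          · exact absurd (hEf z) ((Set.Ioo_infinite hb).mono fun y hy => h y hy.2 hy.1)
          · exact h
      obtain ⟨a, b, ha, hb, hab⟩ := nb_iff.1 q3'
      filter_upwards [q3', hUloc z u q2, nb_gt ha, nb_lt hb] with u' r1 r2 r3 r4
      have hu'U : (z, u') ∈ U := r2.2 (by rw [hU']; exact ⟨w, q1⟩)
      rw [hU'] at hu'U
      obtain ⟨w', hw'⟩ := hu'U
      have hii : ix z u' = i := by
        rw [← q3]
        change ix z u' = ix z u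
        rw [hix', hix']
        congr 1
        ext y
        refine and_congr_right fun hy => ?_
        constructor
        · intro h
          by_contra h'
          exact hab y (ha.trans_le (not_lt.1 h')) (h.trans r4) hy
        · intro h
          by_contra h'
          exact hab y (r3.trans_le (not_lt.1 h')) (h.trans hb) hy
      exact (hdim _ _ hw').mono fun w hw => ⟨⟨hw, r1⟩, hii⟩)
    exact ⟨N, fun z u w q1 q2 q3 => hN (z, (u, w)) ⟨⟨q3, q1⟩, q2⟩⟩
  have hB : ∀ i, ∃ N, ∀ z u w, (z, u) ∈ E → ix z u = i → {y | (((u, z), w), y) ∈ S}.ncard ≤ N := by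
    intro i
    have hixi := hixd i
    have huniq : ∀ z u u', (z, u) ∈ E → (z, u') ∈ E → ix z u = ix z u' → u = u' := by
      intro z u u' q1 q2 q3
      rcases lt_trichotomy u u' with h | h | h
      · exact absurd q1 (hixeq z u u' h.le q3 u le_rfl h)
      · exact h
      · exact absurd q2 (hixeq z u' u h.le q3.symm u' le_rfl h)
    have e1 : Def L M (· ∈ {p : (Γ × Tup M q) × M | ∃ u, ((p.1.1, u) ∈ E ∧ (((u, p.1.1), p.1.2), p.2) ∈ S) ∧ ix p.1.1 u = i}) :=
      Def.ex (Def.and md2 (hixi.comp (f := fun p : ((Γ × Tup M q) × M) × M => (p.1.1.1, p.2)) ((CM.fst (CM.fst (CM.fst CM.id))).pair (CM.snd CM.id))))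
    have hsub : ∀ z u w, (z, u) ∈ E → ix z u = i → {y | ((z, w), y) ∈ {p : (Γ × Tup M q) × M | ∃ u, ((p.1.1, u) ∈ E ∧ (((u, p.1.1), p.1.2), p.2) ∈ S) ∧ ix p.1.1 u = i}} = {y | (((u, z), w), y) ∈ S} := by
      intro z u w q1 q2
      ext y
      constructor
      · rintro ⟨u', ⟨q3, q4⟩, q5⟩
        obtain rfl := huniq z u u' q1 q3 (q2.trans q5.symm)
        exact q4
      · intro h
        exact ⟨u, ⟨q1, h⟩, q2⟩
    obtain ⟨N, hN⟩ := h2 _ e1 (by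
      rintro ⟨z, w⟩
      by_cases hex : ∃ u, (z, u) ∈ E ∧ ix z u = i
      · obtain ⟨u, q1, q2⟩ := hex
        rw [hsub z u w q1 q2]
        exact hf _
      · convert Set.finite_empty
        refine Set.eq_empty_of_forall_notMem ?_
        rintro y ⟨u, ⟨q1, q2⟩, q3⟩
        exact hex ⟨u, q1, q3⟩)
    refine ⟨N, fun z u w q1 q2 => ?_⟩
    rw [← hsub z u w q1 q2]
    exact hN _
  choose NA hNA using hA
  choose NB hNB using hB
  refine ⟨(Finset.range (N1+1)).sup NA + (Finset.range (N1+1)).sup NB, ?_⟩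
  rintro ⟨⟨u, z⟩, w⟩ hp
  have hmem : ix z u ∈ Finset.range (N1+1) := by simpa using Nat.lt_succ_of_le (hixN z u)
  by_cases hzE : (z, u) ∈ E
  · have := hNB _ z u w hzE rfl
    have := Finset.le_sup (f := NB) hmem
    omega
  · have := hNA _ z u w hzE rfl hp
    have := Finset.le_sup (f := NA) hmem
    omega

theorem RR.zero (q : ℕ) : RR L M (Tup M 0) q := by
  intro S G hS hG hf hconst hdim
  by_cases h : ∃ w, ((PUnit.unit : Tup M 0), w) ∈ G
  · obtain ⟨w, hw⟩ := h
    exact ⟨_, fun p hp => (hconst PUnit.unit p.2 w hp hw).le⟩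
  · exact ⟨0, fun p hp => absurd ⟨p.2, hp⟩ h⟩

theorem uf_all (s : ℕ) : ∀ r q, r + q = s → UFc L M (Tup M r × Tup M q) := by
  induction s using Nat.strong_induction_on with
  | _ s IH =>
    have hr : ∀ r, r < s → UFc L M (Tup M r) := fun r h =>
      (IH r h r 0 rfl).surj (CM.fst CM.id) (fun x => ⟨(x, PUnit.unit), rfl⟩)
    have hRR : ∀ r q, r + q = s → RR L M (Tup M r) q := by
      intro r
      induction r with
      | zero => intro q _; exact RR.zero q
      | succ r ih =>
        intro q hq
        exact RR.step (hr r (by omega)) (IH (r+q) (by omega) r q rfl) (ih (q+1) (by omega))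
    intro r q
    induction q generalizing r with
    | zero =>
      intro hrs S hS hf
      obtain ⟨N, hN⟩ := hRR r 0 hrs S univ hS Def.tt hf (by
        intro z w w' _ _; rfl) (fun z w _ => ⟨⟨w, trivial⟩, rfl⟩)
      exact ⟨N, fun g => hN g trivial⟩
    | succ q ih =>
      intro hrs
      have h := ih (r+1) (by omega)
      exact UFc.surj (Δ := (M × Tup M r) × Tup M q) (Γ := Tup M r × (M × Tup M q)) h (f := fun p => (p.1.2, (p.1.1, p.2)))
        ((CM.snd (CM.fst CM.id)).pair ((CM.fst (CM.fst CM.id)).pair (CM.snd CM.id)))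
        (fun ⟨z, u, w⟩ => ⟨((u, z), w), rfl⟩)

theorem uf (r q : ℕ) : UFc L M (Tup M r × Tup M q) := uf_all _ r q rfl
end
end OM

namespace OM
set_option linter.unusedSectionVars false
set_option linter.unusedSimpArgs false
set_option linter.unusedVariables false
section small
variable {α β γ : Type u} {κ : Cardinal.{u}}
def Small (κ : Cardinal.{u}) (s : Set α) : Prop := #s ≤ κ

theorem Small.mono {s t : Set α} (h : Small κ t) (hs : s ⊆ t) : Small κ s :=
  (Cardinal.mk_le_mk_of_subset hs).trans h
theorem Small.image {s : Set α} (h : Small κ s) (f : α → β) : Small κ (f '' s) :=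
  Cardinal.mk_image_le.trans h
theorem Small.biUnion (hκ : ℵ₀ ≤ κ) {s : Set α} (h : Small κ s) {f : α → Set β}
    (hf : ∀ a ∈ s, Small κ (f a)) : Small κ {b | ∃ a ∈ s, b ∈ f a} := by
  have e : {b | ∃ a ∈ s, b ∈ f a} = ⋃ a ∈ s, f a := by ext; simp
  rw [e]
  refine (Cardinal.mk_biUnion_le f s).trans ?_
  refine (mul_le_mul' h (ciSup_le' (fun a : s => show #(f a.1) ≤ κ from hf a.1 a.2))).trans ?_
  rw [Cardinal.mul_eq_self hκ]
theorem Small.finite (hκ : ℵ₀ ≤ κ) {s : Set α} (h : s.Finite) : Small κ s :=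
  (Cardinal.lt_aleph0_iff_set_finite.2 h).le.trans hκ
theorem Small.iUnionNat (hκ : ℵ₀ ≤ κ) {f : ℕ → Set β}
    (hf : ∀ n, Small κ (f n)) : Small κ {b | ∃ n, b ∈ f n} := by
  have : Small κ (univ : Set (ULift.{u} ℕ)) := by
    unfold Small; rw [Cardinal.mk_univ]; simpa using hκ
  refine (Small.biUnion hκ this (f := fun n => f n.down) (fun n _ => hf n.down)).mono ?_
  rintro b ⟨n, hn⟩; exact ⟨⟨n⟩, trivial, hn⟩
theorem Small.union (hκ : ℵ₀ ≤ κ) {s t : Set α} (h : Small κ s) (h' : Small κ t) : Small κ (s ∪ t) := by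
  refine (Small.iUnionNat hκ (f := fun n => if n = 0 then s else t) ?_).mono ?_
  · intro n; by_cases hn : n = 0 <;> simp [hn, h, h']
  · rintro b (h | h)
    · exact ⟨0, by simpa using h⟩
    · exact ⟨1, by simpa using h⟩
theorem Small.image2 (hκ : ℵ₀ ≤ κ) {s : Set α} {t : Set β} (h : Small κ s) (h' : Small κ t)
    (f : α → β → γ) : Small κ {c | ∃ a ∈ s, ∃ b ∈ t, c = f a b} := by
  refine (Small.biUnion hκ h (f := fun a => f a '' t) (fun a _ => h'.image _)).mono ?_
  rintro c ⟨a, ha, b, hb, rfl⟩; exact ⟨a, ha, b, hb, rfl⟩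
def Pw {M : Type u} (A : Set M) : (n : ℕ) → Set (Tup M n)
  | 0 => univ
  | n+1 => {p : M × Tup M n | p.1 ∈ A ∧ p.2 ∈ Pw A n}

theorem pw_small {M : Type u} {A : Set M} (hκ : ℵ₀ ≤ κ) (hA : Small κ A) : ∀ n, Small κ (Pw A n)
  | 0 => Small.finite hκ (Set.toFinite (α := PUnit) _)
  | n+1 => by
    refine (Small.image2 hκ hA (pw_small hκ hA n) (fun a w => ((a, w) : M × Tup M n))).mono ?_
    rintro ⟨a, w⟩ ⟨h1, h2⟩; exact ⟨a, h1, w, h2, rfl⟩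
end small
section
variable {L : FirstOrder.Language.{u,u}} {M : Type u} [L.Structure M]
variable [LinearOrder M] [DenselyOrdered M] [NoMinOrder M] [NoMaxOrder M] [OMin L M]
variable {Γ Δ Θ : Type u} [Ctx M Γ] [Ctx M Δ] [Ctx M Θ]
theorem pw_def {A : Set M} (hA : Def L M (· ∈ A)) : ∀ n, Def L M (· ∈ Pw A n)
  | 0 => Def.tt
  | n+1 => by
    have := pw_def hA n
    have h : Def L M (fun p : M × Tup M n => p.1 ∈ A ∧ p.2 ∈ Pw A n) := md2
    exact h

theorem trace {A : Set M} (hA : Def L M (· ∈ A)) (c : M) :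
    (∀ x ∈ A, c < x) ∨ ∃ e, (e ∈ A ∨ ¬ ∀ᶠ y in Nb e, (y ∈ A ↔ e ∈ A)) ∧ ∀ x ∈ A, c < x ↔ e < x := by
  by_cases hc : c ∈ A ∨ ¬ ∀ᶠ y in Nb c, (y ∈ A ↔ c ∈ A)
  · exact Or.inr ⟨c, hc, fun _ _ => Iff.rfl⟩
  obtain ⟨hc, hb⟩ := not_or.1 hc
  rw [not_not, nb_iff] at hb
  obtain ⟨a, b, hac, hcb, hb⟩ := hb
  by_cases hE : ∃ x ∈ A, x < c
  · right
    obtain ⟨e, he⟩ := OMin.t3 (L := L) {x | x ∈ A ∧ x < c} md2 hE ⟨c, fun x hx => hx.2.le⟩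
    have hec : e ≤ c := he.2 fun x hx => hx.2.le
    refine ⟨e, ?_, fun x hx => ⟨fun h => hec.trans_lt h, fun h => ?_⟩⟩
    · by_contra! hn
      obtain ⟨h1, h2⟩ := hn
      rw [nb_iff] at h2
      obtain ⟨a', b', h3, h4, h5⟩ := h2
      have : e ≤ a' := he.2 fun x hx => by
        by_contra! hh
        have := he.1 hx
        exact h1 ((h5 x hh (this.trans_lt h4)).1 hx.1)
      exact absurd h3 this.not_gt
    · by_contra! hh
      have : x < c := lt_of_le_of_ne hh fun h => hc (h ▸ hx)
      exact absurd (he.1 ⟨hx, this⟩) h.not_ge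
  · left; intro x hx
    by_contra! hh
    exact hE ⟨x, hx, lt_of_le_of_ne hh fun h => hc (h ▸ hx)⟩

theorem traces_small {A : Set M} (hA : Def L M (· ∈ A)) {κ : Cardinal.{u}} (hκ : ℵ₀ ≤ κ)
    (hs : Small κ A) : Small κ {s | ∃ c, s = {x ∈ A | c < x}} := by
  have h1 := Small.finite hκ (bd_finite hA)
  refine (((Small.union hκ hs h1).image (fun e => {x ∈ A | e < x})).union hκ
    (Small.finite hκ (finite_singleton A))).mono ?_
  rintro s ⟨c, rfl⟩
  rcases trace hA c with h | ⟨e, he, h⟩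
  · right; rw [mem_singleton_iff]; ext x; simp only [mem_ofPred_eq]; exact ⟨And.left, fun hx => ⟨hx, h x hx⟩⟩
  · left; refine ⟨e, he, ?_⟩
    ext x; simp only [mem_ofPred_eq]; exact and_congr_right fun hx => (h x hx).symm

theorem traces_small' {A : Set M} (hA : Def L M (· ∈ A)) {κ : Cardinal.{u}} (hκ : ℵ₀ ≤ κ)
    (hs : Small κ A) : Small κ {s | ∃ c, s = {x ∈ A | x < c}} :=
  @traces_small L M _ (dualO M) dDense dMin dMax dOMin A hA κ hκ hs

theorem base (hM : IsOMinimal L M) {A : Set M} (hA : Def L M (· ∈ A)) {κ : Cardinal.{u}} (hκ : ℵ₀ ≤ κ)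
    (hs : Small κ A) : Small κ {s | Def L M (· ∈ s) ∧ s ⊆ A} := by
  have h1 := (traces_small hA hκ hs).union hκ (Small.finite hκ (finite_singleton A))
  have h2 := (traces_small' hA hκ hs).union hκ (Small.finite hκ (finite_singleton A))
  have h3 := Small.image2 hκ h1 h2 (fun s t => s ∩ t)
  have h4 := (h3.union hκ (hs.image (fun a => {a}))).union hκ (Small.finite hκ (finite_singleton ∅))
  set B := {c | ∃ a ∈ {s | ∃ c, s = {x | x ∈ A ∧ c < x}} ∪ {A}, ∃ b ∈ {s | ∃ c, s = {x | x ∈ A ∧ x < c}} ∪ {A}, c = a ∩ b} ∪ (fun a => {a}) '' A ∪ {∅} with hB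
  let gen : ℕ → Set (Set M) := fun n => Nat.rec {∅} (fun _ G => {c | ∃ a ∈ G, ∃ b ∈ B, c = a ∪ b}) n
  have hg : ∀ n, Small κ (gen n) := by
    intro n; induction n with
    | zero => exact Small.finite hκ (finite_singleton _)
    | succ n ih => exact Small.image2 hκ ih h4 (fun s t => s ∪ t)
  have hadd : ∀ n s m t, s ∈ gen n → t ∈ gen m → s ∪ t ∈ gen (n + m) := by
    intro n s m
    induction m with
    | zero => intro t hs ht; rw [show t = ∅ from ht, union_empty]; exact hs
    | succ m ih =>
      rintro t hs ⟨a, ha, b, hb, rfl⟩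
      exact ⟨s ∪ a, ih a hs ha, b, hb, (union_assoc _ _ _).symm⟩
  have hone : ∀ b ∈ B, b ∈ gen 1 := fun b hb => ⟨∅, rfl, b, hb, (empty_union b).symm⟩
  refine (Small.iUnionNat hκ hg).mono ?_
  rintro s ⟨hsd, hsA⟩
  have key := finU_ind (fun s => ∃ n, s ∩ A ∈ gen n) ⟨0, by simp [gen]⟩ ?_ ?_ ?_ (hM.tame s (def_iff₁.1 hsd))
  · rw [inter_eq_left.2 hsA] at key; exact key
  · rintro s t ⟨n, hn⟩ ⟨m, hm⟩
    exact ⟨n + m, by rw [union_inter_distrib_right]; exact hadd _ _ _ _ hn hm⟩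
  · intro a
    refine ⟨1, hone _ ?_⟩
    by_cases ha : a ∈ A
    · left; right; exact ⟨a, ha, by ext x; simp; rintro rfl; exact ha⟩
    · right; rw [mem_singleton_iff]; ext x; simp; rintro rfl; exact ha
  · rintro ⟨p, q⟩
    refine ⟨1, hone _ ?_⟩
    left; left
    have e : {x : M | p < (x : WithBot M) ∧ (x : WithTop M) < q} ∩ A =
      {x : M | x ∈ A ∧ p < (x : WithBot M)} ∩ {x : M | x ∈ A ∧ (x : WithTop M) < q} := by
      ext x; simp; tauto
    refine ⟨_, ?_, _, ?_, e⟩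
    · rcases p with _ | l
      · right; rw [mem_singleton_iff]; ext x; simp only [mem_ofPred_eq]; exact ⟨And.left, fun h => ⟨h, WithBot.bot_lt_coe x⟩⟩
      · left; refine ⟨l, ?_⟩
        ext x; simp only [mem_ofPred_eq]; exact and_congr_right fun _ => WithBot.coe_lt_coe
    · rcases q with _ | l
      · right; rw [mem_singleton_iff]; ext x; simp only [mem_ofPred_eq]; exact ⟨And.left, fun h => ⟨h, WithTop.coe_lt_top x⟩⟩
      · left; refine ⟨l, ?_⟩
        ext x; simp only [mem_ofPred_eq]; exact and_congr_right fun _ => WithTop.coe_lt_coe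
end
end OM

namespace OM
set_option linter.unusedSectionVars false
set_option linter.unusedSimpArgs false
set_option linter.unusedVariables false
section
variable {M : Type u} {E : Type u}
structure PO (X : Set E) (R : E → E → Prop) : Prop where
  refl : ∀ x ∈ X, R x x
  trans : ∀ x ∈ X, ∀ y ∈ X, ∀ z ∈ X, R x y → R y z → R x z
  total : ∀ x ∈ X, ∀ y ∈ X, R x y ∨ R y x
structure Dn (X : Set E) (R : E → E → Prop) (C : Set E) : Prop where
  sub : C ⊆ X
  down : ∀ x ∈ X, ∀ c ∈ C, R x c → x ∈ C
def Cof (π : E → M) (R : E → E → Prop) (C : Set E) (S : Set M) : Prop :=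
  ∀ c ∈ C, ∃ y ∈ C, π y ∈ S ∧ R c y
def HH [LE M] (π : E → M) (X : Set E) (R : E → E → Prop) (I : Set M) (b : M) (C : Set E) : Set E :=
  {y | y ∈ X ∧ (∀ x, x ∈ C → π x ∈ I → π x ≤ b → ¬ R y x) ∧
    (∀ x, x ∈ X → x ∉ C → π x ∈ I → π x ≤ b → ¬ R x y)}
variable [LinearOrder M] {π : E → M} {X : Set E} {R : E → E → Prop} {I : Set M}
theorem HH.anti {b b' : M} (h : b ≤ b') (C : Set E) : HH π X R I b' C ⊆ HH π X R I b C :=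
  fun _ hy => ⟨hy.1, fun x h1 h2 h3 => hy.2.1 x h1 h2 (h3.trans h), fun x h1 h2 h3 h4 => hy.2.2 x h1 h2 h3 (h4.trans h)⟩
theorem HH.det (hX : PO X R) {b : M} {C C' : Set E} {y : E} (hy : y ∈ HH π X R I b C)
    (hy' : y ∈ HH π X R I b C') {x : E} (hx : x ∈ X) (h1 : π x ∈ I) (h2 : π x ≤ b) (hC : x ∈ C) : x ∈ C' := by
  by_contra hn
  exact (hX.total x hx y hy.1).elim (hy'.2.2 x hx hn h1 h2) (hy.2.1 x hC h1 h2)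
theorem HH.eq (hX : PO X R) {b : M} {C C' : Set E} (hC : Dn X R C) (hC' : Dn X R C') {y : E} (hy : y ∈ HH π X R I b C)
    (hy' : y ∈ HH π X R I b C') : HH π X R I b C = HH π X R I b C' := by
  have h : ∀ x ∈ X, π x ∈ I → π x ≤ b → (x ∈ C ↔ x ∈ C') := fun x hx h1 h2 =>
    ⟨HH.det hX hy hy' hx h1 h2, HH.det hX hy' hy hx h1 h2⟩
  ext z
  constructor
  · rintro ⟨h0, h1, h2⟩
    exact ⟨h0, fun x a b c => h1 x ((h x (hC'.sub a) b c).2 a) b c, fun x a a' b c => h2 x a (fun hh => a' ((h x a b c).1 hh)) b c⟩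
  · rintro ⟨h0, h1, h2⟩
    exact ⟨h0, fun x a b c => h1 x ((h x (hC.sub a) b c).1 a) b c, fun x a a' b c => h2 x a (fun hh => a' ((h x a b c).2 hh)) b c⟩
theorem HH.ne {b : M} {C : Set E} (hC : Dn X R C) (h : ¬ Cof π R C {x | x ∈ I ∧ x ≤ b}) :
    ∃ y, y ∈ HH π X R I b C := by
  unfold Cof at h
  push Not at h
  obtain ⟨c, hc, h⟩ := h
  exact ⟨c, hC.sub hc, fun x h1 h2 h3 => h x h1 ⟨h2, h3⟩, fun x h1 h2 _ _ h5 => h2 (hC.down x h1 c hc h5)⟩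
theorem HH.disj_aux (hX : PO X R) {C C' : Set E} (hC : Dn X R C) (hC' : Dn X R C') (hI : Cof π R C I)
    (h : ¬ C ⊆ C') : ∃ b ∈ I, ∀ y, y ∈ HH π X R I b C → y ∈ HH π X R I b C' → False := by
  obtain ⟨z, hz, hz'⟩ := not_subset.1 h
  obtain ⟨y, hy, hyI, hzy⟩ := hI z hz
  refine ⟨π y, hyI, fun w hw hw' => hz' ?_⟩
  exact hC'.down z (hC.sub hz) y (HH.det hX hw hw' (hC.sub hy) hyI le_rfl hy) hzy
theorem HH.disj (hX : PO X R) {C C' : Set E} (hC : Dn X R C) (hC' : Dn X R C') (hI : Cof π R C I) (hI' : Cof π R C' I)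
    (h : C ≠ C') : ∃ b ∈ I, ∀ y, y ∈ HH π X R I b C → y ∈ HH π X R I b C' → False := by
  by_cases h1 : C ⊆ C'
  · have h2 : ¬ C' ⊆ C := fun h2 => h (h1.antisymm h2)
    obtain ⟨b, hb, hh⟩ := HH.disj_aux hX hC' hC hI' h2
    exact ⟨b, hb, fun y h h' => hh y h' h⟩
  · exact HH.disj_aux hX hC hC' hI h1
end
section
variable {L : FirstOrder.Language.{u,u}} {M : Type u} [L.Structure M]
variable [LinearOrder M] [DenselyOrdered M] [NoMinOrder M] [NoMaxOrder M] [OMin L M]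
variable {Γ Δ Θ : Type u} [Ctx M Γ] [Ctx M Δ] [Ctx M Θ]
theorem core2 {k : ℕ} {π : Tup M k → M} (hπ : CM L M π) {X : Set (Tup M k)} {R : Tup M k → Tup M k → Prop}
    (hXd : Def L M (· ∈ X)) (hRd : Def L M (fun p : Tup M k × Tup M k => R p.1 p.2)) (hX : PO X R)
    {I : Set M} (hId : Def L M (· ∈ I)) {κ : Cardinal.{u}} (hκ : ℵ₀ ≤ κ) (hIs : Small κ I) (hXs : Small κ X) :
    Small κ {C | Def L M (· ∈ C) ∧ Dn X R C ∧ C.Nonempty ∧ Cof π R C I ∧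
      ∀ b ∈ I, ¬ Cof π R C {x | x ∈ I ∧ x ≤ b}} := by
  obtain ⟨G, hG⟩ : ∃ G : Set (Set (Tup M k)), G = {C | Def L M (· ∈ C) ∧ Dn X R C ∧ C.Nonempty ∧ Cof π R C I ∧
      ∀ b ∈ I, ¬ Cof π R C {x | x ∈ I ∧ x ≤ b}} := ⟨_, rfl⟩
  rw [← hG]
  have gd : ∀ {C}, C ∈ G → Def L M (· ∈ C) := fun h => by rw [hG] at h; exact h.1
  have gD : ∀ {C}, C ∈ G → Dn X R C := fun h => by rw [hG] at h; exact h.2.1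
  have gI : ∀ {C}, C ∈ G → Cof π R C I := fun h => by rw [hG] at h; exact h.2.2.2.1
  have gb : ∀ {C}, C ∈ G → ∀ b ∈ I, ¬ Cof π R C {x | x ∈ I ∧ x ≤ b} := fun h => by rw [hG] at h; exact h.2.2.2.2
  have gn : ∀ {C}, C ∈ G → C.Nonempty := fun h => by rw [hG] at h; exact h.2.2.1
  have hne : ∀ {C}, C ∈ G → ∀ b ∈ I, ∃ y, y ∈ HH π X R I b C := fun h b hb => HH.ne (gD h) (gb h b hb)
  obtain ⟨H, hH⟩ : ∃ H : M → Set (Tup M k) → Set (Tup M k), H = HH π X R I := ⟨_, rfl⟩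
  rw [← hH] at hne
  have hanti : ∀ {b b'} C, b ≤ b' → H b' C ⊆ H b C := by rw [hH]; exact fun C h => HH.anti h C
  have heq : ∀ {C C'}, C ∈ G → C' ∈ G → ∀ {b y}, y ∈ H b C → y ∈ H b C' → H b C = H b C' := by
    rw [hH]; exact fun h h' b y hy hy' => HH.eq hX (gD h) (gD h') hy hy'
  have hdisj : ∀ {C C'}, C ∈ G → C' ∈ G → C ≠ C' → ∃ b ∈ I, ∀ y, y ∈ H b C → y ∈ H b C' → False := by
    rw [hH]; exact fun h h' hn => HH.disj hX (gD h) (gD h') (gI h) (gI h') hn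
  have hHd : ∀ {C}, C ∈ G → Def L M (fun p : M × Tup M k => p.2 ∈ H p.1 C) := by
    intro C hC
    have hCd := gd hC
    rw [hH]; unfold HH
    simp only [mem_ofPred_eq]
    have h1 : Def L M (fun q : (M × Tup M k) × Tup M k => q.2 ∈ C) := Def.mem hCd (CM.snd CM.id)
    have h2 : Def L M (fun q : (M × Tup M k) × Tup M k => π q.2 ∈ I) := Def.mem hId (CM.comp hπ (CM.snd CM.id))
    have h3 : Def L M (fun q : (M × Tup M k) × Tup M k => π q.2 ≤ q.1.1) := Def.le (CM.comp hπ (CM.snd CM.id)) (CM.fst (CM.fst CM.id))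
    have h4 : Def L M (fun q : (M × Tup M k) × Tup M k => R q.1.2 q.2) := Def.comp hRd (CM.pair (CM.snd (CM.fst CM.id)) (CM.snd CM.id))
    have h5 : Def L M (fun q : (M × Tup M k) × Tup M k => R q.2 q.1.2) := Def.comp hRd (CM.pair (CM.snd CM.id) (CM.snd (CM.fst CM.id)))
    have h6 : Def L M (fun q : (M × Tup M k) × Tup M k => q.2 ∈ X) := Def.mem hXd (CM.snd CM.id)
    have h7 : Def L M (fun q : (M × Tup M k) => q.2 ∈ X) := Def.mem hXd (CM.snd CM.id)
    exact h7.and ((Def.all (h1.imp (h2.imp (h3.imp h4.not)))).and (Def.all (h6.imp (h1.not.imp (h2.imp (h3.imp h5.not))))))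
  have hHX : ∀ {b C y}, y ∈ H b C → y ∈ X := by rw [hH]; exact fun h => h.1
  clear hH
  obtain ⟨G1, hG1⟩ : ∃ G1 : Set (Set (Tup M k)), G1 = {C ∈ G | ∃ a ∈ I, Small κ {C' ∈ G | H a C' = H a C}} := ⟨_, rfl⟩
  have hG1s : Small κ G1 := by
    have := Small.biUnion hκ hIs (f := fun a => {C | ∃ y ∈ X, C ∈ {C' ∈ G | y ∈ H a C' ∧ Small κ {C'' ∈ G | y ∈ H a C''}}}) (fun a ha => by
      refine Small.biUnion hκ hXs (f := fun y => {C' ∈ G | y ∈ H a C' ∧ Small κ {C'' ∈ G | y ∈ H a C''}}) (fun y _ => ?_)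
      by_cases h : Small κ {C'' ∈ G | y ∈ H a C''}
      · exact h.mono fun C hC => ⟨hC.1, hC.2.1⟩
      · exact (Small.finite hκ finite_empty).mono fun C hC => h hC.2.2)
    refine this.mono ?_
    rw [hG1]
    rintro C ⟨hC, a, ha, hs⟩
    obtain ⟨y, hy⟩ := hne hC a ha
    refine ⟨a, ha, y, hHX hy, hC, hy, hs.mono ?_⟩
    rintro C' ⟨h1, h2⟩
    exact ⟨h1, heq h1 hC h2 hy⟩
  by_cases hrest : ∃ C, C ∈ G ∧ C ∉ G1
  swap
  · refine hG1s.mono fun C hC => ?_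
    by_contra hh; exact hrest ⟨C, hC, hh⟩
  exfalso
  have hI0 : ∃ a, a ∈ I := by
    obtain ⟨C, hC, -⟩ := hrest
    obtain ⟨c, hc⟩ := gn hC
    obtain ⟨y, _, hy, _⟩ := gI hC c hc
    exact ⟨_, hy⟩
  have hex : ∃ d, ∃ C, C ∈ G ∧ C ∉ G1 ∧ ∃ a ∈ I, ¬ DimGe k (H a C) d := by
    obtain ⟨C, hC, hC1⟩ := hrest
    obtain ⟨a, ha⟩ := hI0
    obtain ⟨d, -, hd⟩ := DimGe.max (Z := H a C) (hne hC a ha)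
    exact ⟨d+1, C, hC, hC1, a, ha, hd⟩
  classical
  obtain ⟨e, he, hmin⟩ : ∃ e, (∃ C, C ∈ G ∧ C ∉ G1 ∧ ∃ a ∈ I, ¬ DimGe k (H a C) (e+1)) ∧
      ∀ C, C ∈ G → C ∉ G1 → ∀ a ∈ I, DimGe k (H a C) e := by
    have h1 := Nat.find_spec hex
    have h2 := fun m => Nat.find_min hex (m := m)
    cases hf : Nat.find hex with
    | zero =>
      rw [hf] at h1
      obtain ⟨C, hC, _, a, ha, h⟩ := h1
      exact absurd (DimGe.zero (hne hC a ha)) h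
    | succ e =>
      rw [hf] at h1 h2
      refine ⟨e, h1, fun C hC hC1 a ha => ?_⟩
      by_contra hh
      exact h2 e (Nat.lt_succ_self e) ⟨C, hC, hC1, a, ha, hh⟩
  obtain ⟨C, hC, hC1, a, ha, hdim⟩ := he
  obtain ⟨Z, hZ⟩ : ∃ Z : Set (M × Tup M k), Z = {p | p.2 ∈ H a C ∧ (∀ b, b < p.1 → p.2 ∈ H b C) ∧ (∀ b, p.1 < b → p.2 ∉ H b C)} := ⟨_, rfl⟩
  have hCd := hHd hC
  have hZd : Def L M (· ∈ Z) := by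
    rw [hZ]
    have h1 : Def L M (fun q : (M × Tup M k) × M => q.1.2 ∈ H q.2 C) :=
      Def.comp (f := fun q : (M × Tup M k) × M => ((q.2, q.1.2) : M × Tup M k)) hCd (CM.pair (CM.snd CM.id) (CM.snd (CM.fst CM.id)))
    have h2 : Def L M (fun q : M × Tup M k => q.2 ∈ H a C) :=
      Def.comp (f := fun q : M × Tup M k => ((a, q.2) : M × Tup M k)) hCd (CM.pair (CM.const a) (CM.snd CM.id))
    exact h2.and ((Def.all (Def.imp (Def.lt (CM.snd CM.id) (CM.fst (CM.fst CM.id))) h1)).and (Def.all (Def.imp (Def.lt (CM.fst (CM.fst CM.id)) (CM.snd CM.id)) h1.not)))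
  apply hdim
  have hsub : {w | ∃ b, (b, w) ∈ Z} ⊆ H a C := by
    rintro w ⟨b, hb⟩; rw [hZ] at hb; exact hb.1
  refine DimGe.mono hsub (dim_step (L := L) (Z := Z) (d := e) hZd ?_ ?_)
  · intro w
    refine Set.Subsingleton.finite fun b hb b' hb' => ?_
    rw [hZ] at hb hb'
    rcases lt_trichotomy b b' with h | h | h
    · obtain ⟨c, h1, h2⟩ := exists_between h
      exact absurd (hb'.2.1 c h2) (hb.2.2 c h1)
    · exact h
    · obtain ⟨c, h1, h2⟩ := exists_between h
      exact absurd (hb.2.1 c h2) (hb'.2.2 c h1)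
  have key : ∀ a' ∈ I, ∃ β, a' ≤ β ∧ (∃ b0 ∈ I, β ≤ b0) ∧ DimGe k {w | (β, w) ∈ Z} e := by
    intro a1 ha1
    obtain ⟨a', ha', haa', h1a⟩ : ∃ a' ∈ I, a ≤ a' ∧ a1 ≤ a' := by
      rcases le_total a a1 with h | h
      · exact ⟨a1, ha1, h, le_rfl⟩
      · exact ⟨a, ha, le_rfl, h⟩
    have hns : ¬ Small κ {C' ∈ G | H a' C' = H a' C} := fun h => hC1 (by rw [hG1]; exact ⟨hC, a', ha', h⟩)
    obtain ⟨C', hC', hC1', hne', hHe⟩ : ∃ C', C' ∈ G ∧ C' ∉ G1 ∧ C' ≠ C ∧ H a' C' = H a' C := by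
      by_contra! hh
      apply hns
      refine (hG1s.union hκ (Small.finite hκ (finite_singleton C))).mono ?_
      rintro C' ⟨h1, h2⟩
      by_contra h3
      exact hh C' h1 (fun h => h3 (Or.inl h)) (fun h => h3 (Or.inr h)) h2
    obtain ⟨b0, hb0, hd0⟩ := hdisj hC hC' hne'.symm
    have hCd' := hHd hC'
    have hDub : ∀ b, (∃ y, y ∈ H b C ∧ y ∈ H b C') → b ≤ b0 := by
      rintro b ⟨y, h1, h2⟩
      by_contra! hh
      exact hd0 y (hanti _ hh.le h1) (hanti _ hh.le h2)
    have haD : ∃ y, y ∈ H a' C ∧ y ∈ H a' C' := by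
      obtain ⟨y, hy⟩ := hne hC a' ha'
      exact ⟨y, hy, by rw [hHe]; exact hy⟩
    obtain ⟨β, hβ⟩ := OMin.t3 (L := L) {b | ∃ y, y ∈ H b C ∧ y ∈ H b C'} (by
      exact Def.ex (hCd.and hCd')) ⟨a', haD⟩ ⟨b0, hDub⟩
    have h1 : a' ≤ β := hβ.1 haD
    have h2 : β ≤ b0 := hβ.2 hDub
    refine ⟨β, h1a.trans h1, ⟨b0, hb0, h2⟩, (hmin C' hC' hC1' b0 hb0).mono ?_⟩
    intro y hy
    rw [hZ]
    refine ⟨hanti _ haa' (hHe ▸ hanti _ (h1.trans h2) hy), fun b hb => ?_, fun b hb hyb => ?_⟩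
    · obtain ⟨b', hb', hbb'⟩ := (lt_isLUB_iff hβ).1 hb
      obtain ⟨z, hz, hz'⟩ := hb'
      rw [heq hC hC' (hanti _ hbb'.le hz) (hanti _ hbb'.le hz')]
      exact hanti _ (hb.le.trans h2) hy
    · have h3 : min b b0 ≤ β := hβ.1 ⟨y, hanti _ (min_le_left _ _) hyb, hanti _ (min_le_right _ _) hy⟩
      rcases min_le_iff.1 h3 with h3 | h3
      · exact absurd hb h3.not_gt
      · exact hd0 y (hanti _ (h3.trans hb.le) hyb) hy
  intro hfin
  obtain ⟨β, ⟨hβ1, b0, hb0, hβ2⟩, hmax⟩ := Set.Finite.exists_maximal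
    (s := {b | DimGe k {w | (b, w) ∈ Z} e ∧ ∃ b0 ∈ I, b ≤ b0}) (hfin.subset fun b hb => hb.1) (by
      obtain ⟨a', ha'⟩ := hI0
      obtain ⟨β, _, h1, h2⟩ := key a' ha'
      exact ⟨β, h2, h1⟩)
  obtain ⟨b1, hb1, hlt⟩ : ∃ b1 ∈ I, b0 < b1 := by
    by_contra! hh
    apply gb hC b0 hb0
    have : {x | x ∈ I ∧ x ≤ b0} = I := by ext x; exact ⟨And.left, fun h => ⟨h, hh x h⟩⟩
    rw [this]; exact gI hC
  obtain ⟨β', h1, h2, h3⟩ := key b1 hb1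
  have h4 : β < β' := (hβ2.trans_lt hlt).trans_le h1
  exact absurd (hmax ⟨h3, h2⟩ h4.le) h4.not_ge
end
end OM

namespace OM
set_option linter.unusedSectionVars false
set_option linter.unusedSimpArgs false
set_option linter.unusedVariables false
section
variable {L : FirstOrder.Language.{u,u}} {M : Type u} [L.Structure M]
variable [LinearOrder M] [DenselyOrdered M] [NoMinOrder M] [NoMaxOrder M] [OMin L M]
variable {Γ Δ Θ : Type u} [Ctx M Γ] [Ctx M Δ] [Ctx M Θ]
theorem cofI {C : Set Γ} (hC : Def L M (· ∈ C)) (hne : C.Nonempty) {V : Set (Γ × M)} (hV : Def L M (· ∈ V))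
    (hnest : ∀ c ∈ C, ∀ c' ∈ C, (∀ x, (c, x) ∈ V → (c', x) ∈ V) ∨ (∀ x, (c', x) ∈ V → (c, x) ∈ V))
    (hpt : ∀ a, ∃ c ∈ C, (c, a) ∉ V) (htop : ∀ c ∈ C, ∃ x, (c, x) ∈ V) :
    ∃ I : Set M, Def L M (· ∈ I) ∧ (∀ c ∈ C, ∃ x ∈ I, (c, x) ∈ V) ∧
      ((∀ b ∈ I, ∃ c ∈ C, ∀ x ∈ I, x ≤ b → (c, x) ∉ V) ∨ (∀ b ∈ I, ∃ c ∈ C, ∀ x ∈ I, b ≤ x → (c, x) ∉ V)) := by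
  obtain ⟨K, hK⟩ : ∃ K : Set M → Prop, ∀ S, K S ↔ ∀ c ∈ C, ∃ x ∈ S, (c, x) ∈ V := ⟨_, fun _ => Iff.rfl⟩
  have Kmono : ∀ {S S'}, S ⊆ S' → K S → K S' := fun hs h => by
    rw [hK] at h ⊢
    intro c hc; obtain ⟨x, hx, h⟩ := h c hc; exact ⟨x, hs hx, h⟩
  have Kunion : ∀ {S S'}, K (S ∪ S') → K S ∨ K S' := fun {S S'} h => by
    by_contra! hn
    simp only [hK] at h hn
    push Not at hn
    obtain ⟨⟨c, hc, h1⟩, ⟨c', hc', h2⟩⟩ := hn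
    rcases hnest c hc c' hc' with hh | hh
    · obtain ⟨x, hx, hxV⟩ := h c hc
      exact hx.elim (fun hx => h1 x hx hxV) (fun hx => h2 x hx (hh x hxV))
    · obtain ⟨x, hx, hxV⟩ := h c' hc'
      exact hx.elim (fun hx => h1 x hx (hh x hxV)) (fun hx => h2 x hx hxV)
  have Kpt : ∀ a, ¬ K {a} := fun a h => by
    rw [hK] at h
    obtain ⟨c, hc, hh⟩ := hpt a
    obtain ⟨x, hx, hxV⟩ := h c hc
    rw [mem_singleton_iff.1 hx] at hxV; exact hh hxV
  have Kempty : ¬ K ∅ := fun h => by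
    rw [hK] at h
    obtain ⟨c, hc⟩ := hne
    obtain ⟨x, hx, _⟩ := h c hc; exact hx
  have hVs : ∀ c, Def L M (fun x => (c, x) ∈ V) := fun c => hV.slice c
  obtain ⟨Bad, hBad⟩ : ∃ Bad : Set M, ∀ x, x ∈ Bad ↔ ∀ p q, p < x → x < q → K (Ioo p q) := ⟨{x | _}, fun _ => Iff.rfl⟩
  have hBadd : Def L M (· ∈ Bad) := by
    simp only [hBad, hK]
    exact md2
  have hBf : {x | x ∈ Bad}.Finite := by
    by_contra hinf
    change {x | x ∈ Bad}.Infinite at hinf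
    rw [infinite_iff (L := L) hBadd] at hinf
    obtain ⟨α, β, hab, hB⟩ := hinf
    have hKI : ∀ p q, α ≤ p → p < q → q ≤ β → K (Ioo p q) := by
      intro p q h1 h2 h3
      obtain ⟨x, hx, hx'⟩ := exists_between h2
      exact (hBad x).1 (hB x (h1.trans_lt hx) (hx'.trans_le h3)) p q hx hx'
    obtain ⟨S, hS⟩ : ∃ S : Set (M × M), S = {p | (α < p.1 ∧ p.1 < β) ∧ (α < p.2 ∧ p.2 < β) ∧
      ∀ c, c ∈ C → (c, p.2) ∉ V → (c, p.1) ∉ V} := ⟨_, rfl⟩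
    have hSd : Def L M (· ∈ S) := by rw [hS]; exact md2
    have hfin : ∀ y, {x | (x, y) ∈ S}.Finite := by
      intro y
      obtain ⟨c, hc, hcy⟩ := hpt y
      by_contra hinf
      have hinf : {x | (x, y) ∈ S}.Infinite := hinf
      rw [infinite_iff (L := L) (hSd.slice' y)] at hinf
      obtain ⟨p, q, hpq, hh⟩ := hinf
      simp only [hS, mem_ofPred_eq] at hh
      obtain ⟨z, hz, hz'⟩ := exists_between hpq
      obtain ⟨z2, hz2, hz2'⟩ := exists_between hz'
      have h1 := (hh z hz hz').1
      have h2 := (hh z2 (hz.trans hz2) hz2').1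
      have := hKI z z2 h1.1.le hz2 h2.2.le
      rw [hK] at this
      obtain ⟨x, hx, hxV⟩ := this c hc
      exact (hh x (hz.trans hx.1) (hx.2.trans hz2')).2.2 c hc hcy hxV
    have hinf : ∀ x, α < x → x < β → {y | (x, y) ∈ S}.Infinite := by
      intro x h1 h2
      have h3 : {y | α < y ∧ y < β}.Infinite := by
        rw [infinite_iff (L := L) md2]; exact ⟨α, β, hab, fun y h h' => ⟨h, h'⟩⟩
      refine (h3.sdiff (hfin x)).mono ?_
      rintro y ⟨hy, hy'⟩
      simp only [hS, mem_ofPred_eq] at hy' ⊢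
      refine ⟨⟨h1, h2⟩, hy, fun c hc hcy => ?_⟩
      by_contra hcx
      apply hy'
      refine ⟨hy, ⟨h1, h2⟩, fun c' hc' hcx' hcy' => ?_⟩
      rcases hnest c hc c' hc' with hh | hh
      · exact hcx' (hh x hcx)
      · exact hcy (hh y hcy')
    have := two_d (L := L) hSd (by
      rw [infinite_iff (L := L) md2]; exact ⟨α, β, hab, hinf⟩)
    obtain ⟨y, hy⟩ := this.nonempty
    exact hy (hfin y)
  have hicc : ∀ p q, p ≤ q → (∀ x, p ≤ x → x ≤ q → x ∉ Bad) → ¬ K (Icc p q) := by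
    intro p q hpq hh
    refine conn (L := L) (P := fun t => ¬ K (Icc p t)) (by simp only [hK]; exact md2) hpq ?_ (by rw [Icc_self]; exact Kpt p)
    intro t h1 h2
    have := hh t h1 h2
    rw [hBad] at this
    push Not at this
    obtain ⟨l, r, hl, hr, hlr⟩ := this
    rw [nb_iff]
    refine ⟨l, r, hl, hr, fun t' h3 h4 => not_congr ⟨fun h => ?_, fun h => ?_⟩⟩
    · have : K (Icc p t ∪ Ioo l r) := Kmono (fun x hx => by
        rcases le_or_gt x t with h | h
        · exact Or.inl ⟨hx.1, h⟩
        · exact Or.inr ⟨hl.trans h, hx.2.trans_lt h4⟩) h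
      exact (Kunion this).resolve_right hlr
    · have : K (Icc p t' ∪ Ioo l r) := Kmono (fun x hx => by
        rcases le_or_gt x t' with h | h
        · exact Or.inl ⟨hx.1, h⟩
        · exact Or.inr ⟨h3.trans h, hx.2.trans_lt hr⟩) h
      exact (Kunion this).resolve_right hlr
  have hO : ∃ O : Set M, Def L M (· ∈ O) ∧ K O ∧ (∀ x ∈ O, ∀ z ∈ O, ∀ y, x ≤ y → y ≤ z → y ∈ O) ∧ ∀ b ∈ Bad, b ∉ O := by
    have : ∀ B : Finset M, ∃ O : Set M, Def L M (· ∈ O) ∧ K O ∧ (∀ x ∈ O, ∀ z ∈ O, ∀ y, x ≤ y → y ≤ z → y ∈ O) ∧ ∀ b ∈ B, b ∉ O := by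
      classical
      intro B
      induction B using Finset.induction_on with
      | empty =>
        refine ⟨univ, Def.tt, ?_, fun _ _ _ _ _ _ _ => trivial, by simp⟩
        rw [hK]; intro c hc; obtain ⟨x, hx⟩ := htop c hc; exact ⟨x, trivial, hx⟩
      | insert b B _ ih =>
        obtain ⟨O, h1, h2, h3, h4⟩ := ih
        have : K (({x | x ∈ O ∧ x < b} ∪ {x | x ∈ O ∧ b < x}) ∪ {b}) := Kmono (fun x hx => by
          rcases lt_trichotomy x b with h | h | h
          · exact Or.inl (Or.inl ⟨hx, h⟩)
          · exact Or.inr h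
          · exact Or.inl (Or.inr ⟨hx, h⟩)) h2
        rcases Kunion ((Kunion this).resolve_right (Kpt b)) with h | h
        · refine ⟨_, md2, h, fun x hx z hz y h h' => ⟨h3 x hx.1 z hz.1 y h h', h'.trans_lt hz.2⟩, fun c hc hc' => ?_⟩
          rcases Finset.mem_insert.1 hc with rfl | hc
          · exact lt_irrefl _ hc'.2
          · exact h4 c hc hc'.1
        · refine ⟨_, md2, h, fun x hx z hz y h h' => ⟨h3 x hx.1 z hz.1 y h h', hx.2.trans_le h⟩, fun c hc hc' => ?_⟩
          rcases Finset.mem_insert.1 hc with rfl | hc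
          · exact lt_irrefl _ hc'.2
          · exact h4 c hc hc'.1
    obtain ⟨O, h1, h2, h3, h4⟩ := this hBf.toFinset
    exact ⟨O, h1, h2, h3, fun b hb => h4 b (hBf.mem_toFinset.2 hb)⟩
  obtain ⟨O, h1, h2, h3, h4⟩ := hO
  have hOn : ∃ c, c ∈ O := by
    by_contra! hh
    apply Kempty
    exact Kmono (fun x hx => hh x hx) h2
  obtain ⟨c, hc⟩ := hOn
  have : K ({x | x ∈ O ∧ c ≤ x} ∪ {x | x ∈ O ∧ x ≤ c}) := Kmono (fun x hx => by
    rcases le_total c x with h | h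
    · exact Or.inl ⟨hx, h⟩
    · exact Or.inr ⟨hx, h⟩) h2
  rcases Kunion this with h | h
  · refine ⟨_, md2, (hK _).1 h, Or.inl fun b hb => ?_⟩
    have := hicc c b hb.2 (fun x hx hx' hxB => h4 x hxB (h3 c hc b hb.1 x hx hx'))
    rw [hK] at this
    push Not at this
    obtain ⟨e, he, h⟩ := this
    exact ⟨e, he, fun x hx hxb => h x ⟨hx.2, hxb⟩⟩
  · refine ⟨_, md2, (hK _).1 h, Or.inr fun b hb => ?_⟩
    have := hicc b c hb.2 (fun x hx hx' hxB => h4 x hxB (h3 b hb.1 c hc x hx hx'))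
    rw [hK] at this
    push Not at this
    obtain ⟨e, he, h⟩ := this
    exact ⟨e, he, fun x hx hxb => h x ⟨hxb, hx.2⟩⟩
end
end OM

namespace OM
set_option linter.unusedSectionVars false
set_option linter.unusedSimpArgs false
set_option linter.unusedVariables false
section
variable {L : FirstOrder.Language.{u,u}} {M : Type u} [L.Structure M]
variable [LinearOrder M] [DenselyOrdered M] [NoMinOrder M] [NoMaxOrder M] [OMin L M]
variable {Γ Δ Θ : Type u} [Ctx M Γ] [Ctx M Δ] [Ctx M Θ]
theorem core (hM : IsOMinimal L M) {A : Set M} (hA : Def L M (· ∈ A)) {κ : Cardinal.{u}} (hκ : ℵ₀ ≤ κ)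
    (hs : Small κ A) : ∀ (n : ℕ) (X : Set (Tup M n)) (R : Tup M n → Tup M n → Prop), X ⊆ Pw A n →
    Def L M (· ∈ X) → Def L M (fun p : Tup M n × Tup M n => R p.1 p.2) → PO X R →
    Small κ {C | Def L M (· ∈ C) ∧ Dn X R C} := by
  intro n
  induction n with
  | zero =>
    intro X R _ _ _ _
    exact Small.finite hκ (Set.toFinite (α := Set PUnit) _)
  | succ n ih =>
    intro X R hXA hXd hRd hX
    change Set (M × Tup M n) at X
    change M × Tup M n → M × Tup M n → Prop at R
    have hXs : Small κ X := (pw_small hκ hs (n+1)).mono hXA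
    have hπ : CM L M (fun p : M × Tup M n => p.1) := CM.fst CM.id
    have hXA1 : ∀ p ∈ X, p.1 ∈ A := fun p hp => (hXA hp).1
    have hXA2 : ∀ p ∈ X, p.2 ∈ Pw A n := fun p hp => (hXA hp).2
    -- the family with a cofinal slice
    have s0 : Small κ {C : Set (M × Tup M n) | ∃ a ∈ A, C ∈ (fun D : Set (Tup M n) => {x | x ∈ X ∧ ∃ w ∈ D, R x (a, w)}) ''
        {D | Def L M (· ∈ D) ∧ Dn {w | (a, w) ∈ X} (fun w w' => R (a, w) (a, w')) D}} := by
      refine Small.biUnion hκ hs fun a ha => Small.image (ih _ _ ?_ ?_ ?_ ?_) _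
      · intro w hw; exact hXA2 _ hw
      · exact Def.slice (Γ := M) (Δ := Tup M n) hXd a
      · exact Def.comp (f := fun p : Tup M n × Tup M n => (((a, p.1), (a, p.2)) : (M × Tup M n) × (M × Tup M n))) hRd
          (CM.pair (CM.pair (CM.const a) (CM.fst CM.id)) (CM.pair (CM.const a) (CM.snd CM.id)))
      · exact ⟨fun w hw => hX.refl _ hw, fun w hw w' hw' w'' hw'' => hX.trans _ hw _ hw' _ hw'',
          fun w hw w' hw' => hX.total _ hw _ hw'⟩
    have sb := base (L := L) hM hA hκ hs
    have s1 : Small κ {C : Set (M × Tup M n) | ∃ I ∈ {s | Def L M (· ∈ s) ∧ s ⊆ A},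
        C ∈ {C : Set (M × Tup M n) | Def L M (· ∈ C) ∧ Dn X R C ∧ C.Nonempty ∧ Cof Prod.fst R C I ∧
      ∀ b ∈ I, ¬ Cof Prod.fst R C {x | x ∈ I ∧ x ≤ b}}} := Small.biUnion hκ sb fun I hI =>
        core2 (k := n+1) (π := fun p : M × Tup M n => p.1) hπ hXd hRd hX hI.1 hκ (hs.mono hI.2) hXs
    have s2 : Small κ {C : Set (M × Tup M n) | ∃ I ∈ {s | Def L M (· ∈ s) ∧ s ⊆ A},
        C ∈ {C : Set (M × Tup M n) | Def L M (· ∈ C) ∧ Dn X R C ∧ C.Nonempty ∧ Cof Prod.fst R C I ∧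
      ∀ b ∈ I, ¬ Cof Prod.fst R C {x | x ∈ I ∧ b ≤ x}}} := Small.biUnion hκ sb fun I hI =>
        @core2 L M _ (dualO M) dDense dMin dMax dOMin (n+1) (fun p : M × Tup M n => p.1) hπ X R hXd hRd hX I hI.1 κ hκ (hs.mono hI.2) hXs
    refine ((s0.union hκ (Small.finite hκ (finite_singleton ∅))).union hκ (s1.union hκ s2)).mono ?_
    rintro C ⟨hCd, hC⟩
    change Set (M × Tup M n) at C
    change Dn X R C at hC
    rcases C.eq_empty_or_nonempty with rfl | hne
    · exact Or.inl (Or.inr rfl)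
    by_cases hcof : ∃ a, Cof Prod.fst R C {a}
    · left; left
      obtain ⟨a, ha⟩ := hcof
      have haA : a ∈ A := by
        obtain ⟨c, hc⟩ := hne
        obtain ⟨y, hy, hya, _⟩ := ha c hc
        rw [← mem_singleton_iff.1 hya]; exact hXA1 y (hC.sub hy)
      refine ⟨a, haA, {w | (a, w) ∈ C}, ⟨Def.slice (Γ := M) (Δ := Tup M n) hCd a, fun w hw => hC.sub hw,
        fun w hw w' hw' => hC.down _ hw _ hw'⟩, ?_⟩
      ext x
      constructor
      · rintro ⟨hx, w, hw, hR⟩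
        exact hC.down x hx _ hw hR
      · intro hx
        obtain ⟨⟨y1, y2⟩, hy, hya, hR⟩ := ha x hx
        rw [mem_singleton_iff] at hya
        dsimp only at hya
        subst hya
        exact ⟨hC.sub hx, y2, hy, hR⟩
    right
    obtain ⟨I, hI, hK, hI2⟩ := cofI (L := L) (M := M) (Γ := M × Tup M n) (C := C) hCd hne
      (V := {p | ∃ w, (p.2, w) ∈ C ∧ R p.1 (p.2, w)}) (by
        have h1 : Def L M (fun q : ((M × Tup M n) × M) × Tup M n => (q.1.2, q.2) ∈ C) :=
          Def.mem hCd (CM.pair (CM.snd (CM.fst CM.id)) (CM.snd CM.id))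
        have h2 : Def L M (fun q : ((M × Tup M n) × M) × Tup M n => R q.1.1 (q.1.2, q.2)) :=
          Def.comp (f := fun q : ((M × Tup M n) × M) × Tup M n => ((q.1.1, (q.1.2, q.2)) : (M × Tup M n) × (M × Tup M n))) hRd
            (CM.pair (CM.fst (CM.fst CM.id)) (CM.pair (CM.snd (CM.fst CM.id)) (CM.snd CM.id)))
        exact Def.ex (h1.and h2)) (by
        intro c hc c' hc'
        rcases hX.total c (hC.sub hc) c' (hC.sub hc') with h | h
        · right; rintro x ⟨w, hw, hR⟩
          exact ⟨w, hw, hX.trans _ (hC.sub hc) _ (hC.sub hc') _ (hC.sub hw) h hR⟩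
        · left; rintro x ⟨w, hw, hR⟩
          exact ⟨w, hw, hX.trans _ (hC.sub hc') _ (hC.sub hc) _ (hC.sub hw) h hR⟩) (by
        intro a
        by_contra! hh
        apply hcof
        refine ⟨a, fun c hc => ?_⟩
        obtain ⟨w, hw, hR⟩ := hh c hc
        exact ⟨(a, w), hw, rfl, hR⟩) (by
        intro c hc
        exact ⟨c.1, c.2, hc, hX.refl c (hC.sub hc)⟩)
    have hKA : Cof Prod.fst R C (I ∩ A) := by
      intro c hc
      obtain ⟨x, hx, w, hw, hR⟩ := hK c hc
      exact ⟨(x, w), hw, ⟨hx, hXA1 _ (hC.sub hw)⟩, hR⟩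
    have hIA : (I ∩ A) ∈ {s | Def L M (· ∈ s) ∧ s ⊆ A} := ⟨hI.and hA, inter_subset_right⟩
    rcases hI2 with hI2 | hI2
    · left
      refine ⟨I ∩ A, hIA, hCd, hC, hne, hKA, fun b hb hh => ?_⟩
      obtain ⟨c, hc, h⟩ := hI2 b hb.1
      obtain ⟨y, hy, hyb, hR⟩ := hh c hc
      exact h y.1 hyb.1.1 hyb.2 ⟨y.2, hy, hR⟩
    · right
      refine ⟨I ∩ A, hIA, hCd, hC, hne, hKA, fun b hb hh => ?_⟩
      obtain ⟨c, hc, h⟩ := hI2 b hb.1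
      obtain ⟨y, hy, hyb, hR⟩ := hh c hc
      exact h y.1 hyb.1.1 hyb.2 ⟨y.2, hy, hR⟩
end
end OM

namespace OM
set_option linter.unusedSectionVars false
set_option linter.unusedSimpArgs false
set_option linter.unusedVariables false
section app
variable {M : Type u} {k : ℕ}
def app : (n : ℕ) → Tup M n → Tup M k → Tup M (k + n)
  | 0, _, w => w
  | n+1, v, w => ((v.1, app n v.2 w) : M × Tup M (k+n))
def tk : (n : ℕ) → Tup M (k + n) → Tup M n
  | 0, _ => PUnit.unit
  | n+1, v => ((v.1, tk n v.2) : M × Tup M n)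
def dr : (n : ℕ) → Tup M (k + n) → Tup M k
  | 0, v => v
  | n+1, v => dr n v.2
theorem tk_app : ∀ (n : ℕ) (v : Tup M n) (w : Tup M k), tk n (app n v w) = v
  | 0, _, _ => rfl
  | n+1, v, w => by
    change ((v.1, tk n (app n v.2 w)) : M × Tup M n) = v
    rw [tk_app n]; rfl
theorem dr_app : ∀ (n : ℕ) (v : Tup M n) (w : Tup M k), dr n (app n v w) = w
  | 0, _, _ => rfl
  | n+1, v, w => dr_app n v.2 w
theorem app_pw {A : Set M} : ∀ (n : ℕ) (v : Tup M n) (w : Tup M k), v ∈ Pw A n → w ∈ Pw A k → app n v w ∈ Pw A (k + n)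
  | 0, _, _, _, h => h
  | n+1, v, w, h, h' => ⟨h.1, app_pw n v.2 w h.2 h'⟩
end app
section
variable {L : FirstOrder.Language.{u,u}} {M : Type u} [L.Structure M]
variable [LinearOrder M] [DenselyOrdered M] [NoMinOrder M] [NoMaxOrder M] [OMin L M]
variable {Γ Δ Θ : Type u} [Ctx M Γ] [Ctx M Δ] [Ctx M Θ]
theorem app_cm {k : ℕ} : ∀ (n : ℕ) {f : Γ → Tup M n} {g : Γ → Tup M k}, CM L M f → CM L M g → CM L M (fun x => app n (f x) (g x))
  | 0, _, _, _, h => h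
  | n+1, f, g, hf, hg => by
    have h1 : CM L M (fun x => ((f x : M × Tup M n)).1) := CM.fst (Δ := M) (Θ := Tup M n) hf
    have h2 : CM L M (fun x => ((f x : M × Tup M n)).2) := CM.snd (Δ := M) (Θ := Tup M n) hf
    exact CM.pair h1 (app_cm n h2 hg)
theorem tk_cm {k : ℕ} : ∀ (n : ℕ) {f : Γ → Tup M (k + n)}, CM L M f → CM L M (fun x => tk n (f x))
  | 0, _, _ => CM.const _
  | n+1, f, hf => by
    have h1 : CM L M (fun x => ((f x : M × Tup M (k+n))).1) := CM.fst (Δ := M) (Θ := Tup M (k+n)) hf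
    have h2 : CM L M (fun x => ((f x : M × Tup M (k+n))).2) := CM.snd (Δ := M) (Θ := Tup M (k+n)) hf
    exact CM.pair h1 (tk_cm n h2)
theorem dr_cm {k : ℕ} : ∀ (n : ℕ) {f : Γ → Tup M (k + n)}, CM L M f → CM L M (fun x => dr n (f x))
  | 0, _, h => h
  | n+1, f, hf => by
    have h2 : CM L M (fun x => ((f x : M × Tup M (k+n))).2) := CM.snd (Δ := M) (Θ := Tup M (k+n)) hf
    exact dr_cm n h2

variable (L M Γ) in
/-- definable ultrafilters -/
structure DUlt where
  mem : Set Γ → Prop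
  univ : mem univ
  compl : ∀ s : Set Γ, Def L M (· ∈ s) → (mem sᶜ ↔ ¬ mem s)
  mono : ∀ s t : Set Γ, Def L M (· ∈ s) → Def L M (· ∈ t) → s ⊆ t → mem s → mem t
  inter : ∀ s t : Set Γ, Def L M (· ∈ s) → Def L M (· ∈ t) → mem s → mem t → mem (s ∩ t)
  fam : ∀ {Δ : Type u} [Ctx M Δ] (S : Set (Γ × Δ)), Def L M (· ∈ S) → Def L M (fun d => mem {x | (x, d) ∈ S})

def DUlt.push (p : DUlt L M (Δ × Γ)) : DUlt L M Γ where
  mem s := p.mem {q | q.2 ∈ s}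
  univ := p.univ
  compl s hs := p.compl {q | q.2 ∈ s} (hs.mem (CM.snd CM.id))
  mono s t hs ht h := p.mono {q | q.2 ∈ s} {q | q.2 ∈ t} (hs.mem (CM.snd CM.id)) (ht.mem (CM.snd CM.id)) fun _ hx => h hx
  inter s t hs ht := p.inter {q | q.2 ∈ s} {q | q.2 ∈ t} (hs.mem (CM.snd CM.id)) (ht.mem (CM.snd CM.id))
  fam S hS := p.fam {q | (q.1.2, q.2) ∈ S} (hS.mem (CM.pair (CM.snd (CM.fst CM.id)) (CM.snd CM.id)))

theorem DUlt.mem_inter (p : DUlt L M Γ) {s t : Set Γ} (hs : Def L M (· ∈ s)) (ht : Def L M (· ∈ t)) :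
    p.mem (s ∩ t) ↔ p.mem s ∧ p.mem t :=
  ⟨fun h => ⟨p.mono _ _ (hs.and ht) hs inter_subset_left h, p.mono _ _ (hs.and ht) ht inter_subset_right h⟩,
    fun h => p.inter _ _ hs ht h.1 h.2⟩
theorem DUlt.mem_union (p : DUlt L M Γ) {s t : Set Γ} (hs : Def L M (· ∈ s)) (ht : Def L M (· ∈ t)) :
    p.mem (s ∪ t) ↔ p.mem s ∨ p.mem t := by
  have h := p.mem_inter (s := sᶜ) (t := tᶜ) hs.not ht.not
  rw [p.compl s hs, p.compl t ht, ← compl_union, p.compl (s ∪ t) (hs.or ht)] at h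
  tauto

variable (L M Γ) in
def TT (κ : Cardinal.{u}) (A : Set M) {n : ℕ} (S : Set (Γ × Tup M n)) : Prop :=
  Small κ {D | ∃ p : DUlt L M Γ, D = {b | b ∈ Pw A n ∧ p.mem {x | (x, b) ∈ S}}}

section
variable {κ : Cardinal.{u}} {A : Set M} {n : ℕ} {S S' : Set (Γ × Tup M n)}
theorem TT.inter (hκ : ℵ₀ ≤ κ) (hS : Def L M (· ∈ S)) (hS' : Def L M (· ∈ S')) (h : TT L M Γ κ A S) (h' : TT L M Γ κ A S') :
    TT L M Γ κ A {q | q ∈ S ∧ q ∈ S'} := by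
  refine (Small.image2 hκ h h' (fun s t => s ∩ t)).mono ?_
  rintro D ⟨p, rfl⟩
  refine ⟨_, ⟨p, rfl⟩, _, ⟨p, rfl⟩, ?_⟩
  ext b
  have := p.mem_inter (hS.slice' b) (hS'.slice' b) (s := {x | (x, b) ∈ S}) (t := {x | (x, b) ∈ S'})
  simp only [mem_ofPred_eq, mem_inter_iff]
  rw [show {x | (x, b) ∈ S ∧ (x, b) ∈ S'} = {x | (x, b) ∈ S} ∩ {x | (x, b) ∈ S'} from rfl, this]
  tauto
theorem TT.union (hκ : ℵ₀ ≤ κ) (hS : Def L M (· ∈ S)) (hS' : Def L M (· ∈ S')) (h : TT L M Γ κ A S) (h' : TT L M Γ κ A S') :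
    TT L M Γ κ A {q | q ∈ S ∨ q ∈ S'} := by
  refine (Small.image2 hκ h h' (fun s t => s ∪ t)).mono ?_
  rintro D ⟨p, rfl⟩
  refine ⟨_, ⟨p, rfl⟩, _, ⟨p, rfl⟩, ?_⟩
  ext b
  have := p.mem_union (hS.slice' b) (hS'.slice' b) (s := {x | (x, b) ∈ S}) (t := {x | (x, b) ∈ S'})
  simp only [mem_ofPred_eq, mem_union]
  rw [show {x | (x, b) ∈ S ∨ (x, b) ∈ S'} = {x | (x, b) ∈ S} ∪ {x | (x, b) ∈ S'} from rfl, this]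
  tauto
theorem TT.compl (hS : Def L M (· ∈ S)) (h : TT L M Γ κ A S) :
    TT L M Γ κ A {q | q ∉ S} := by
  refine (Small.image h (fun s => {b ∈ Pw A n | b ∉ s})).mono ?_
  rintro D ⟨p, rfl⟩
  refine ⟨_, ⟨p, rfl⟩, ?_⟩
  ext b
  have := p.compl {x | (x, b) ∈ S} (hS.slice' b)
  simp only [mem_ofPred_eq]
  rw [show {x | (x, b) ∉ S} = {x | (x, b) ∈ S}ᶜ from rfl, this]
  tauto
theorem TT.pull {m : ℕ} {S : Set (Tup M m × Tup M n)} (h : TT L M (Tup M m) κ A S) :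
    TT L M (M × Tup M m) κ A {q | (q.1.2, q.2) ∈ S} := by
  refine Small.mono h ?_
  rintro D ⟨p, rfl⟩
  exact ⟨p.push, rfl⟩
end

theorem tt_fun (hM : IsOMinimal L M) {A : Set M} (hA : Def L M (· ∈ A)) {κ : Cardinal.{u}} (hκ : ℵ₀ ≤ κ)
    (hs : Small κ A) {m n : ℕ} (ih : ∀ n (S : Set (Tup M m × Tup M n)), Def L M (· ∈ S) → TT L M (Tup M m) κ A S)
    {F : Set ((Tup M m × Tup M n) × M)} (hF : Def L M (· ∈ F)) (hfun : ∀ z s s', (z, s) ∈ F → (z, s') ∈ F → s = s')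
    (Q : M → M → Prop) (hQd : Def L M (fun p : M × M => Q p.1 p.2)) (hQ : ∀ x y z, x ≤ y → Q y z → Q x z) :
    TT L M (M × Tup M m) κ A {q : (M × Tup M m) × Tup M n | ∃ s, ((q.1.2, q.2), s) ∈ F ∧ Q s q.1.1} := by
  obtain ⟨S1, hS1⟩ : ∃ S1 : Set (Tup M m × Tup M n), S1 = {z | ∃ s, (z, s) ∈ F} := ⟨_, rfl⟩
  obtain ⟨S2, hS2⟩ : ∃ S2 : Set (Tup M m × Tup M (n+n)), S2 = {z | ∃ s s', ((z.1, tk n z.2), s) ∈ F ∧ ((z.1, dr n z.2), s') ∈ F ∧ s ≤ s'} := ⟨_, rfl⟩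
  have hd1 : Def L M (· ∈ S1) := by rw [hS1]; exact Def.ex hF
  have hd2 : Def L M (· ∈ S2) := by
    rw [hS2]
    have h1 : Def L M (fun q : ((Tup M m × Tup M (n+n)) × M) × M => ((q.1.1.1, tk n q.1.1.2), q.1.2) ∈ F) :=
      Def.mem hF (CM.pair (CM.pair (CM.fst (CM.fst (CM.fst CM.id))) (tk_cm n (CM.snd (CM.fst (CM.fst CM.id))))) (CM.snd (CM.fst CM.id)))
    have h2 : Def L M (fun q : ((Tup M m × Tup M (n+n)) × M) × M => ((q.1.1.1, dr n q.1.1.2), q.2) ∈ F) :=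
      Def.mem hF (CM.pair (CM.pair (CM.fst (CM.fst (CM.fst CM.id))) (dr_cm n (CM.snd (CM.fst (CM.fst CM.id))))) (CM.snd CM.id))
    exact Def.ex (Def.ex (h1.and (h2.and md2)))
  have t1 := ih n S1 hd1
  have t2 := ih (n+n) S2 hd2
  have hpw := pw_def hA
  obtain ⟨R, hR⟩ : ∃ R : Set (Tup M (n+n)) → Tup M n → Tup M n → Prop, R = fun D b b' => app n b b' ∈ D := ⟨_, rfl⟩
  have hsm : Small κ {C : Set (Tup M n) | ∃ D1 ∈ {D | ∃ p : DUlt L M (Tup M m), D = {b | b ∈ Pw A n ∧ p.mem {x | (x, b) ∈ S1}}},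
      C ∈ {C | ∃ D2 ∈ {D | ∃ p : DUlt L M (Tup M m), D = {b | b ∈ Pw A (n+n) ∧ p.mem {x | (x, b) ∈ S2}}},
      C ∈ {C | PO D1 (R D2) ∧ Def L M (· ∈ C) ∧ Dn D1 (R D2) C}}} := by
    refine Small.biUnion hκ t1 ?_
    rintro D1 ⟨p, hp⟩
    refine Small.biUnion hκ t2 ?_
    rintro D2 ⟨p', hp'⟩
    by_cases hPO : PO D1 (R D2)
    · refine (core (L := L) hM hA hκ hs n D1 (R D2) ?_ ?_ ?_ hPO).mono fun C hC => hC.2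
      · rw [hp]; exact fun b hb => hb.1
      · rw [hp]; exact (hpw n).and (p.fam S1 hd1)
      · have : Def L M (· ∈ D2) := by rw [hp']; exact (hpw _).and (p'.fam S2 hd2)
        rw [hR]; exact Def.mem this (app_cm n (CM.fst CM.id) (CM.snd CM.id))
    · exact (Small.finite hκ finite_empty).mono fun C hC => hPO hC.1
  refine hsm.mono ?_
  rintro C ⟨p, hC⟩
  have key : ∀ b b', b ∈ Pw A n → b' ∈ Pw A n → (R {b | b ∈ Pw A (n+n) ∧ p.push.mem {x | (x, b) ∈ S2}} b b' ↔
      p.push.mem {x | ∃ s s', ((x, b), s) ∈ F ∧ ((x, b'), s') ∈ F ∧ s ≤ s'}) := by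
    intro b b' hb hb'
    rw [hR, hS2]
    simp only [mem_ofPred_eq, tk_app, dr_app, app_pw n b b' hb hb', true_and]
  have hFb : ∀ b, Def L M (fun q : Tup M m × M => ((q.1, b), q.2) ∈ F) := fun b =>
    Def.mem hF (CM.pair (CM.pair (CM.fst CM.id) (CM.const b)) (CM.snd CM.id))
  have hFb1 : ∀ b, Def L M (fun q : (Tup M m × M) × M => ((q.1.1, b), q.1.2) ∈ F) := fun b =>
    Def.mem hF (CM.pair (CM.pair (CM.fst (CM.fst CM.id)) (CM.const b)) (CM.snd (CM.fst CM.id)))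
  have hFb2 : ∀ b, Def L M (fun q : (Tup M m × M) × M => ((q.1.1, b), q.2) ∈ F) := fun b =>
    Def.mem hF (CM.pair (CM.pair (CM.fst (CM.fst CM.id)) (CM.const b)) (CM.snd CM.id))
  have hle : ∀ b b', Def L M (fun x : Tup M m => ∃ s s', ((x, b), s) ∈ F ∧ ((x, b'), s') ∈ F ∧ s ≤ s') := fun b b' =>
    Def.ex (Def.ex ((hFb1 b).and ((hFb2 b').and md2)))
  have hdf : ∀ b, Def L M (fun x : Tup M m => ∃ s, ((x, b), s) ∈ F) := fun b => Def.ex (hFb b)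
  refine ⟨_, ⟨p.push, rfl⟩, _, ⟨p.push, rfl⟩, ⟨?_, ?_, ?_⟩, ?_, ?_⟩
  · rintro b ⟨hb, hb'⟩
    rw [key b b hb hb]
    refine p.push.mono _ _ ?_ (hle b b) ?_ hb'
    · exact hd1.slice' b
    · intro x hx; rw [hS1] at hx; obtain ⟨s, hs⟩ := hx; exact ⟨s, s, hs, hs, le_rfl⟩
  · rintro b1 ⟨hb1, -⟩ b2 ⟨hb2, -⟩ b3 ⟨hb3, -⟩
    rw [key _ _ hb1 hb2, key _ _ hb2 hb3, key _ _ hb1 hb3]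
    intro h1 h2
    refine p.push.mono _ _ ((hle b1 b2).and (hle b2 b3)) (hle b1 b3) ?_ (p.push.inter _ _ (hle b1 b2) (hle b2 b3) h1 h2)
    rintro x ⟨⟨s1, s2, h1, h2, h12⟩, ⟨s2', s3, h2', h3, h23⟩⟩
    rw [hfun _ _ _ h2' h2] at h23
    exact ⟨s1, s3, h1, h3, h12.trans h23⟩
  · rintro b1 ⟨hb1, hb1'⟩ b2 ⟨hb2, hb2'⟩
    rw [key _ _ hb1 hb2, key _ _ hb2 hb1]
    refine (p.push.mem_union (hle b1 b2) (hle b2 b1)).1 ?_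
    refine p.push.mono _ _ ((hd1.slice' b1).and (hd1.slice' b2)) ((hle b1 b2).or (hle b2 b1)) ?_ (p.push.inter _ _ (hd1.slice' b1) (hd1.slice' b2) hb1' hb2')
    rintro x ⟨h1, h2⟩
    simp only [hS1, mem_ofPred_eq] at h1 h2
    obtain ⟨s1, h1⟩ := h1
    obtain ⟨s2, h2⟩ := h2
    rcases le_total s1 s2 with h | h
    · exact Or.inl ⟨s1, s2, h1, h2, h⟩
    · exact Or.inr ⟨s2, s1, h2, h1, h⟩
  · rw [hC]
    refine (hpw n).and (p.fam {q : (M × Tup M m) × Tup M n | ∃ s, ((q.1.2, q.2), s) ∈ F ∧ Q s q.1.1} ?_)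
    have h1 : Def L M (fun q : ((M × Tup M m) × Tup M n) × M => ((q.1.1.2, q.1.2), q.2) ∈ F) :=
      Def.mem hF (CM.pair (CM.pair (CM.snd (CM.fst (CM.fst CM.id))) (CM.snd (CM.fst CM.id))) (CM.snd CM.id))
    have h2 : Def L M (fun q : ((M × Tup M m) × Tup M n) × M => Q q.2 q.1.1.1) :=
      Def.comp (f := fun q : ((M × Tup M m) × Tup M n) × M => ((q.2, q.1.1.1) : M × M)) hQd (CM.pair (CM.snd CM.id) (CM.fst (CM.fst (CM.fst CM.id))))
    exact Def.ex (h1.and h2)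
  · have hCd : ∀ b, Def L M (fun q : M × Tup M m => ∃ s, ((q.2, b), s) ∈ F ∧ Q s q.1) := fun b => by
      have h1 : Def L M (fun q : (M × Tup M m) × M => ((q.1.2, b), q.2) ∈ F) :=
        Def.mem hF (CM.pair (CM.pair (CM.snd (CM.fst CM.id)) (CM.const b)) (CM.snd CM.id))
      have h2 : Def L M (fun q : (M × Tup M m) × M => Q q.2 q.1.1) :=
        Def.comp (f := fun q : (M × Tup M m) × M => ((q.2, q.1.1) : M × M)) hQd (CM.pair (CM.snd CM.id) (CM.fst (CM.fst CM.id)))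
      exact Def.ex (h1.and h2)
    subst hC
    constructor
    · rintro b ⟨hb, hb'⟩
      refine ⟨hb, p.mono _ _ (hCd b) ((hd1.slice' b).mem (S := {x | (x, b) ∈ S1}) (f := fun q : M × Tup M m => q.2) (CM.snd CM.id)) ?_ hb'⟩
      rintro q ⟨s, hs, _⟩
      rw [hS1]; exact ⟨s, hs⟩
    · rintro b ⟨hb, -⟩ c ⟨hc, hc'⟩ hbc
      rw [key b c hb hc] at hbc
      have hle' : Def L M (fun q : M × Tup M m => ∃ s s', ((q.2, b), s) ∈ F ∧ ((q.2, c), s') ∈ F ∧ s ≤ s') :=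
        Def.comp (P := fun x : Tup M m => ∃ s s', ((x, b), s) ∈ F ∧ ((x, c), s') ∈ F ∧ s ≤ s')
          (f := fun q : M × Tup M m => q.2) (hle b c) (CM.snd CM.id)
      refine ⟨hb, p.mono _ _ ((hCd c).and hle') (hCd b) ?_ (p.inter _ _ (hCd c) hle' hc' hbc)⟩
      rintro q ⟨⟨s, hs, hQs⟩, ⟨s1, s', h1, h2, h12⟩⟩
      rw [hfun _ _ _ h2 hs] at h12
      exact ⟨s1, h1, hQ _ _ _ h12 hQs⟩
end
end OM

namespace OM
set_option linter.unusedSectionVars false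
set_option linter.unusedSimpArgs false
set_option linter.unusedVariables false
section
variable {L : FirstOrder.Language.{u,u}} {M : Type u} [L.Structure M]
variable [LinearOrder M] [DenselyOrdered M] [NoMinOrder M] [NoMaxOrder M] [OMin L M]
variable {Γ Δ Θ : Type u} [Ctx M Γ] [Ctx M Δ] [Ctx M Θ]
theorem low_iff {P : M → Prop} (hP : Def L M P) {t : M} (h : ∀ t', t' ≤ t → ∀ᶠ y in Nb t', (P y ↔ P t')) :
    P t ↔ ∃ a, ∀ y, y < a → P y := by
  have key : ∀ t1, t1 ≤ t → (P t1 ↔ P t) := fun t1 h1 => by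
    constructor
    · exact fun hh => conn (L := L) hP h1 (fun u _ hu => h u hu) hh
    · intro hh
      by_contra hn
      exact conn (L := L) (P := fun y => ¬ P y) hP.not h1 (fun u _ hu => (h u hu).mono fun y hy => not_congr hy) hn hh
  constructor
  · intro hh; exact ⟨t, fun y hy => (key y hy.le).2 hh⟩
  · rintro ⟨a, ha⟩
    obtain ⟨t1, h1⟩ := exists_lt (min a t)
    exact (key t1 (h1.le.trans (min_le_right _ _))).1 (ha t1 (h1.trans_le (min_le_left _ _)))

theorem bd_drop {P P' : M → Prop} (hP : Def L M P) {f : M}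
    (hP' : ∀ t, P' t ↔ (f < t ∧ P t) ∨ (t ≤ f ∧ ∀ᶠ y in RN f, P y)) :
    {t | ¬ ∀ᶠ y in Nb t, (P' y ↔ P' t)} ⊆ {t | ¬ ∀ᶠ y in Nb t, (P y ↔ P t)} \ {f} := by
  have h1 : ∀ t, f < t → (P' t ↔ P t) := fun t h => by rw [hP']; simp [h, h.not_ge]
  have h2 : ∀ t, t ≤ f → (P' t ↔ ∀ᶠ y in RN f, P y) := fun t h => by rw [hP']; simp [h, h.not_gt]
  have h3 : ∀ t, t ≤ f → ∀ᶠ y in Nb t, (P' y ↔ P' t) := by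
    intro t ht
    rcases lt_or_eq_of_le ht with h | rfl
    · refine (nb_lt h).mono fun y hy => ?_
      rw [h2 y hy.le, h2 t ht]
    · rw [ev_Nb]
      refine ⟨?_, (ln_lt t).mono fun y hy => by rw [h2 y hy.le, h2 t le_rfl], Iff.rfl⟩
      rcases OMin.t1 (L := L) {y | P y} hP t with h | h
      · have h : ∀ᶠ y in RN t, P y := h
        refine (h.and (rn_gt t)).mono fun y hy => ?_
        rw [h1 y hy.2, h2 t le_rfl]
        exact iff_of_true hy.1 h
      · have h : ∀ᶠ y in RN t, ¬ P y := h
        refine (h.and (rn_gt t)).mono fun y hy => ?_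
        rw [h1 y hy.2, h2 t le_rfl]
        refine iff_of_false hy.1 fun h' => ?_
        obtain ⟨b, hb, hh⟩ := ev_RN.1 (h.and h')
        obtain ⟨y, hy, hy'⟩ := exists_between hb
        exact (hh y hy hy').1 (hh y hy hy').2
  intro t ht
  have hft : f < t := by by_contra! h; exact ht (h3 t h)
  refine ⟨fun h => ht ((h.and (nb_gt hft)).mono fun y hy => ?_), fun h => hft.ne' h⟩
  rw [h1 y hy.2, h1 t hft]; exact hy.1

theorem tt_step (hM : IsOMinimal L M) {A : Set M} (hA : Def L M (· ∈ A)) {κ : Cardinal.{u}} (hκ : ℵ₀ ≤ κ)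
    (hs : Small κ A) {m n : ℕ} (ih : ∀ n (S : Set (Tup M m × Tup M n)), Def L M (· ∈ S) → TT L M (Tup M m) κ A S) :
    ∀ (N : ℕ) (S : Set ((M × Tup M m) × Tup M n)), Def L M (· ∈ S) →
    (∀ z : Tup M m × Tup M n, {t | ¬ ∀ᶠ y in Nb t, (((y, z.1), z.2) ∈ S ↔ ((t, z.1), z.2) ∈ S)}.ncard ≤ N) →
    TT L M (M × Tup M m) κ A S := by
  intro N
  induction N with
  | zero =>
    intro S hS hN
    have hS' : Def L M (fun q : (Tup M m × Tup M n) × M => ((q.2, q.1.1), q.1.2) ∈ S) :=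
      Def.mem hS (CM.pair (CM.pair (CM.snd CM.id) (CM.fst (CM.fst CM.id))) (CM.snd (CM.fst CM.id)))
    have hsl : ∀ z : Tup M m × Tup M n, Def L M (fun t => ((t, z.1), z.2) ∈ S) := fun z =>
      Def.mem hS (CM.pair (CM.pair CM.id (CM.const z.1)) (CM.const z.2))
    have hlo : Def L M (fun z : Tup M m × Tup M n => ∃ a, ∀ y, y < a → ((y, z.1), z.2) ∈ S) := md2
    have := TT.pull (ih n {z | ∃ a, ∀ y, y < a → ((y, z.1), z.2) ∈ S} hlo)
    convert this using 1
    ext ⟨⟨t, x⟩, b⟩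
    refine low_iff (L := L) (P := fun t => ((t, x), b) ∈ S) (hsl (x, b)) ?_
    intro t' _
    by_contra hh
    have h0 := (Set.ncard_eq_zero (bd_finite (hsl (x, b)))).1 (Nat.le_zero.1 (hN (x, b)))
    exact (h0 ▸ (show t' ∈ {t | ¬ ∀ᶠ y in Nb t, (((y, x), b) ∈ S ↔ ((t, x), b) ∈ S)} from hh) : t' ∈ (∅ : Set M))
  | succ N ihN =>
    intro S hS hN
    have hS' : Def L M (fun q : (Tup M m × Tup M n) × M => ((q.2, q.1.1), q.1.2) ∈ S) :=
      Def.mem hS (CM.pair (CM.pair (CM.snd CM.id) (CM.fst (CM.fst CM.id))) (CM.snd (CM.fst CM.id)))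
    have hsl : ∀ z : Tup M m × Tup M n, Def L M (fun t => ((t, z.1), z.2) ∈ S) := fun z =>
      Def.mem hS (CM.pair (CM.pair CM.id (CM.const z.1)) (CM.const z.2))
    obtain ⟨B, hB⟩ : ∃ B : Set ((Tup M m × Tup M n) × M), B = {q | ¬ ∀ᶠ y in Nb q.2, (((y, q.1.1), q.1.2) ∈ S ↔ ((q.2, q.1.1), q.1.2) ∈ S)} := ⟨_, rfl⟩
    have hBd : Def L M (· ∈ B) := by rw [hB]; exact md2
    have hBf : ∀ z, {t | (z, t) ∈ B}.Finite := fun z => by rw [hB]; exact bd_finite (hsl z)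
    have hBN : ∀ z, {t | (z, t) ∈ B}.ncard ≤ N + 1 := fun z => by rw [hB]; exact hN z
    obtain ⟨F, hF⟩ : ∃ F : Set ((Tup M m × Tup M n) × M), F = {q | q ∈ B ∧ ∀ t', (q.1, t') ∈ B → q.2 ≤ t'} := ⟨_, rfl⟩
    have hFd : Def L M (· ∈ F) := by rw [hF]; exact md2
    have hFB : ∀ z s, (z, s) ∈ F → (z, s) ∈ B := fun z s h => by rw [hF] at h; exact h.1
    have hFle : ∀ z s, (z, s) ∈ F → ∀ t', (z, t') ∈ B → s ≤ t' := fun z s h => by rw [hF] at h; exact h.2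
    have hfun : ∀ z s s', (z, s) ∈ F → (z, s') ∈ F → s = s' := fun z s s' h h' =>
      le_antisymm (hFle z s h s' (hFB z s' h')) (hFle z s' h' s (hFB z s h))
    have hFex : ∀ z t, (z, t) ∈ B → ∃ s, (z, s) ∈ F := by
      intro z t ht
      obtain ⟨s, hs, hmin⟩ := (hBf z).exists_minimal ⟨t, ht⟩
      refine ⟨s, ?_⟩
      rw [hF]
      refine ⟨hs, fun t' ht' => ?_⟩
      rcases le_total s t' with h | h
      · exact h
      · exact hmin ht' h
    have hge := tt_fun hM hA hκ hs ih hFd hfun (fun s t => s ≤ t) md2 (fun x y z h h' => h.trans h')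
    have hgt := tt_fun hM hA hκ hs ih hFd hfun (fun s t => s < t) md2 (fun x y z h h' => h.trans_lt h')
    obtain ⟨Ge, hGe⟩ : ∃ Ge : Set ((M × Tup M m) × Tup M n), Ge = {q | ∃ s, ((q.1.2, q.2), s) ∈ F ∧ s ≤ q.1.1} := ⟨_, rfl⟩
    obtain ⟨Gt, hGt⟩ : ∃ Gt : Set ((M × Tup M m) × Tup M n), Gt = {q | ∃ s, ((q.1.2, q.2), s) ∈ F ∧ s < q.1.1} := ⟨_, rfl⟩
    have hge : TT L M (M × Tup M m) κ A Ge := by rw [hGe]; exact hge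
    have hgt : TT L M (M × Tup M m) κ A Gt := by rw [hGt]; exact hgt
    have hGed : Def L M (· ∈ Ge) := by rw [hGe]; exact md2
    have hGtd : Def L M (· ∈ Gt) := by rw [hGt]; exact md2
    have hlo : Def L M (fun z : Tup M m × Tup M n => ∃ a, ∀ y, y < a → ((y, z.1), z.2) ∈ S) := md2
    have hat : Def L M (fun z : Tup M m × Tup M n => ∃ s, (z, s) ∈ F ∧ ((s, z.1), z.2) ∈ S) := md2
    have tlo := TT.pull (ih n {z | ∃ a, ∀ y, y < a → ((y, z.1), z.2) ∈ S} hlo)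
    have tat := TT.pull (ih n {z | ∃ s, (z, s) ∈ F ∧ ((s, z.1), z.2) ∈ S} hat)
    obtain ⟨Lo, hLo⟩ : ∃ Lo : Set ((M × Tup M m) × Tup M n), Lo = {q | ∃ a, ∀ y, y < a → ((y, q.1.2), q.2) ∈ S} := ⟨_, rfl⟩
    obtain ⟨At, hAt⟩ : ∃ At : Set ((M × Tup M m) × Tup M n), At = {q | ∃ s, ((q.1.2, q.2), s) ∈ F ∧ ((s, q.1.2), q.2) ∈ S} := ⟨_, rfl⟩
    have tlo : TT L M (M × Tup M m) κ A Lo := by rw [hLo]; exact tlo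
    have tat : TT L M (M × Tup M m) κ A At := by rw [hAt]; exact tat
    have hLod : Def L M (· ∈ Lo) := by rw [hLo]; exact md2
    have hAtd : Def L M (· ∈ At) := by rw [hAt]; exact md2
    obtain ⟨S', hS2⟩ : ∃ S' : Set ((M × Tup M m) × Tup M n), S' = {q | ∃ s, ((q.1.2, q.2), s) ∈ F ∧
      ((s < q.1.1 ∧ ((q.1.1, q.1.2), q.2) ∈ S) ∨ (q.1.1 ≤ s ∧ ∀ᶠ y in RN s, ((y, q.1.2), q.2) ∈ S))} := ⟨_, rfl⟩
    have hSd2 : Def L M (· ∈ S') := by rw [hS2]; exact md2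
    have tS' : TT L M (M × Tup M m) κ A S' := by
      refine ihN S' hSd2 fun z => ?_
      by_cases hz : ∃ s, (z, s) ∈ F
      · obtain ⟨s, hs⟩ := hz
        have := bd_drop (L := L) (P := fun t => ((t, z.1), z.2) ∈ S) (P' := fun t => ((t, z.1), z.2) ∈ S') (hsl z) (f := s) (by
          intro t
          rw [hS2]
          constructor
          · rintro ⟨s', hs', h⟩
            rw [hfun _ _ _ hs' hs] at h; exact h
          · intro h; exact ⟨s, hs, h⟩)
        have h1 : {t | (z, t) ∈ B} = {t | ¬ ∀ᶠ y in Nb t, (((y, z.1), z.2) ∈ S ↔ ((t, z.1), z.2) ∈ S)} := by rw [hB]; rfl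
        rw [← h1] at this
        have h2 := Set.ncard_le_ncard this ((hBf z).subset sdiff_subset)
        have h3 := Set.ncard_sdiff_singleton_add_one (s := {t | (z, t) ∈ B}) (a := s) (hFB z s hs) (hBf z)
        have h4 := hBN z
        omega
      · have : {t | ¬ ∀ᶠ y in Nb t, (((y, z.1), z.2) ∈ S' ↔ ((t, z.1), z.2) ∈ S')} = ∅ := by
          apply Set.eq_empty_of_forall_notMem
          intro t ht
          apply ht
          have hn : ∀ y, ((y, z.1), z.2) ∉ S' := fun y hy => by
            rw [hS2] at hy; obtain ⟨s, hs, _⟩ := hy; exact hz ⟨s, hs⟩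
          exact Eventually.of_forall fun y => iff_of_false (hn y) (hn t)
        rw [this]; simp
    have hx1 := TT.inter hκ hGed.not hLod (TT.compl hGed hge) tlo
    have hx2 := TT.inter hκ (hGed.and hGtd.not) hAtd (TT.inter hκ hGed hGtd.not hge (TT.compl hGtd hgt)) tat
    have hx3 := TT.inter hκ hGtd hSd2 hgt tS'
    have hx := TT.union hκ ((hGed.not.and hLod).or ((hGed.and hGtd.not).and hAtd)) (hGtd.and hSd2)
      (TT.union hκ (hGed.not.and hLod) ((hGed.and hGtd.not).and hAtd) hx1 hx2) hx3
    convert hx using 1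
    ext ⟨⟨t, x⟩, b⟩
    change ((t, x), b) ∈ S ↔ (((((t, x), b) ∉ Ge) ∧ ((t, x), b) ∈ Lo) ∨ ((((t, x), b) ∈ Ge ∧ ((t, x), b) ∉ Gt) ∧ ((t, x), b) ∈ At)) ∨
      (((t, x), b) ∈ Gt ∧ ((t, x), b) ∈ S')
    by_cases h1 : ((t, x), b) ∈ Ge
    · by_cases h2 : ((t, x), b) ∈ Gt
      · simp only [h1, h2, not_true, false_and, and_false, or_false, false_or, true_and]
        rw [hGt] at h2
        obtain ⟨s, hs, hst⟩ := h2
        rw [hS2]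
        constructor
        · intro h; exact ⟨s, hs, Or.inl ⟨hst, h⟩⟩
        · rintro ⟨s', hs', h | h⟩
          · exact h.2
          · rw [hfun _ _ _ hs' hs] at h; exact absurd hst h.1.not_gt
      · simp only [h1, h2, not_true, not_false_eq_true, false_and, and_false, or_false, false_or, true_and, and_true]
        rw [hGe] at h1
        obtain ⟨s, hs, hst⟩ := h1
        have : s = t := by
          rcases lt_or_eq_of_le hst with h | h
          · exact absurd (by rw [hGt]; exact ⟨s, hs, h⟩) h2
          · exact h
        subst this
        rw [hAt]
        constructor
        · intro h; exact ⟨s, hs, h⟩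
        · rintro ⟨s', hs', h⟩
          rw [hfun _ _ _ hs' hs] at h; exact h
    · have h2 : ((t, x), b) ∉ Gt := fun h => h1 (by
        rw [hGt] at h; rw [hGe]; obtain ⟨s, hs, h⟩ := h; exact ⟨s, hs, h.le⟩)
      simp only [h1, h2, not_true, not_false_eq_true, false_and, and_false, or_false, false_or, true_and, and_true]
      rw [hLo]
      refine low_iff (L := L) (P := fun t => ((t, x), b) ∈ S) (hsl (x, b)) ?_
      intro t' ht'
      by_contra hh
      have hb : ((x, b), t') ∈ B := by rw [hB]; exact hh
      obtain ⟨s, hs⟩ := hFex _ _ hb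
      exact h1 (by rw [hGe]; exact ⟨s, hs, (hFle _ _ hs _ hb).trans ht'⟩)

theorem tt_all (hM : IsOMinimal L M) {A : Set M} (hA : Def L M (· ∈ A)) {κ : Cardinal.{u}} (hκ : ℵ₀ ≤ κ)
    (hs : Small κ A) : ∀ (m n : ℕ) (S : Set (Tup M m × Tup M n)), Def L M (· ∈ S) → TT L M (Tup M m) κ A S := by
  intro m
  induction m with
  | zero =>
    intro n S hS
    refine (Small.finite hκ (finite_singleton {b | b ∈ Pw A n ∧ ((PUnit.unit : PUnit.{u+1}), b) ∈ S})).mono ?_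
    rintro D ⟨p, rfl⟩
    rw [mem_singleton_iff]
    ext b
    simp only [mem_ofPred_eq]
    refine and_congr_right fun _ => ?_
    by_cases h : ((PUnit.unit : PUnit.{u+1}), b) ∈ S
    · have : {x | (x, b) ∈ S} = (Set.univ : Set (Tup M 0)) := by ext x; exact ⟨fun _ => trivial, fun _ => h⟩
      rw [this]; exact iff_of_true p.univ h
    · have : {x | (x, b) ∈ S} = (Set.univ : Set (Tup M 0))ᶜ := by ext x; exact ⟨fun h' => absurd h' h, fun h => absurd trivial h⟩
      rw [this, p.compl Set.univ Def.tt]; exact iff_of_false (fun h => h p.univ) h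
  | succ m ih =>
    intro n S hS
    change Set ((M × Tup M m) × Tup M n) at S
    have hS2 : Def L M (fun q : (M × Tup M m) × Tup M n => q ∈ S) := hS
    clear hS
    have hS' : Def L M (fun q : (Tup M m × Tup M n) × M => ((q.2, q.1.1), q.1.2) ∈ S) :=
      Def.mem (Δ := (M × Tup M m) × Tup M n) hS2 (CM.pair (CM.pair (CM.snd CM.id) (CM.fst (CM.fst CM.id))) (CM.snd (CM.fst CM.id)))
    have hsl : ∀ z : Tup M m × Tup M n, Def L M (fun t => ((t, z.1), z.2) ∈ S) := fun z =>
      Def.mem (Δ := (M × Tup M m) × Tup M n) hS2 (CM.pair (CM.pair CM.id (CM.const z.1)) (CM.const z.2))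
    obtain ⟨N, hN⟩ := uf (L := L) (M := M) m n {q | ¬ ∀ᶠ y in Nb q.2, (((y, q.1.1), q.1.2) ∈ S ↔ ((q.2, q.1.1), q.1.2) ∈ S)} md2
      (fun z => bd_finite (hsl z))
    exact tt_step hM hA hκ hs ih N S hS2 hN
end
end OM

namespace OM
set_option linter.unusedSectionVars false
set_option linter.unusedSimpArgs false
set_option linter.unusedVariables false
section
variable {L : FirstOrder.Language.{u,u}} {M : Type u} [L.Structure M]

theorem fparam {ι : Type} {s : Set (ι → M)} (h : (Set.univ : Set M).Definable L s) :
    ∃ (k : ℕ) (φ : L.Formula (ι ⊕ Fin k)) (c : Fin k → M), s = {x | φ.Realize (Sum.elim x c)} := by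
  obtain ⟨A0, _, h0⟩ := definable_iff_finitely_definable.1 h
  obtain ⟨φ, hφ⟩ := definable_iff_exists_formula_sum.1 h0
  let e := Finite.equivFin (A0 : Set M)
  refine ⟨_, φ.relabel (Sum.elim (fun a => Sum.inr (e a)) Sum.inl), fun i => (e.symm i : M), ?_⟩
  rw [hφ]
  ext x
  simp only [mem_ofPred_eq, Formula.realize_relabel]
  refine iff_of_eq ?_
  congr 1
  funext a
  rcases a with a | a <;> simp

theorem fdef {ι : Type} {k : ℕ} (φ : L.Formula (ι ⊕ Fin k)) (c : Fin k → M) :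
    (Set.univ : Set M).Definable L {x : ι → M | φ.Realize (Sum.elim x c)} := by
  refine definable_iff_exists_formula_sum.2 ⟨φ.relabel (Sum.elim Sum.inr (fun i => Sum.inl ⟨c i, Set.mem_univ _⟩)), ?_⟩
  ext x
  simp only [mem_ofPred_eq, Formula.realize_relabel]
  refine iff_of_eq ?_
  congr 1
  funext a
  rcases a with a | a <;> simp

noncomputable def fm {m n : ℕ} (φ : L.Formula (Fin m ⊕ Fin n)) (b : Fin n → M) : L[[M]].Formula (Fin m) :=
  ((L.lhomWithConstants M).onFormula φ).subst
      (Sum.elim Term.var fun j => (L.con (b j)).term)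

theorem fm_real {m n : ℕ} (φ : L.Formula (Fin m ⊕ Fin n)) (b : Fin n → M) (x : Fin m → M) :
    (fm φ b).Realize x ↔ φ.Realize (Sum.elim x b) := by
  unfold fm Formula.Realize
  rw [BoundedFormula.realize_subst]
  change Formula.Realize _ _ ↔ _
  rw [LHom.realize_onFormula]
  refine iff_of_eq ?_
  unfold Formula.Realize
  congr 1
  funext a
  rcases a with a | a
  · simp
  · simp [Term.realize_constants]; rfl

variable [Nonempty M] {m : ℕ} (p : (L[[M]].completeTheory M).CompleteType (Fin m))

theorem mono_mem (F G : L[[M]].Formula (Fin m)) (h : ∀ x : Fin m → M, F.Realize x → G.Realize x)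
    (hF : Formula.equivSentence F ∈ p) : Formula.equivSentence G ∈ p := by
  obtain ⟨N, v, rfl⟩ := Theory.exists_modelType_is_realized_in _ p
  rw [Theory.CompleteType.formula_mem_typeOf] at hF ⊢
  let σ : L[[M]].Sentence := Formula.iAlls (α := Empty) (Fin m) (Formula.relabel Sum.inr (F.imp G))
  have hσ : M ⊨ σ := by
    simp only [σ, Sentence.Realize, Formula.realize_iAlls, Formula.realize_relabel, Formula.realize_imp]
    intro x hx
    exact h x hx
  have : N ⊨ σ := N.is_model.realize_of_mem σ hσ
  simp only [σ, Sentence.Realize, Formula.realize_iAlls, Formula.realize_relabel, Formula.realize_imp] at this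
  exact this v hF

theorem not_mem (F : L[[M]].Formula (Fin m)) : Formula.equivSentence F.not ∈ p ↔ ¬ Formula.equivSentence F ∈ p := by
  obtain ⟨N, v, rfl⟩ := Theory.exists_modelType_is_realized_in _ p
  simp only [Theory.CompleteType.formula_mem_typeOf, Formula.realize_not]

theorem inf_mem (F G : L[[M]].Formula (Fin m)) (hF : Formula.equivSentence F ∈ p) (hG : Formula.equivSentence G ∈ p) :
    Formula.equivSentence (F ⊓ G) ∈ p := by
  obtain ⟨N, v, rfl⟩ := Theory.exists_modelType_is_realized_in _ p
  simp only [Theory.CompleteType.formula_mem_typeOf, Formula.realize_inf] at *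
  exact ⟨hF, hG⟩

theorem top_mem : Formula.equivSentence (⊤ : L[[M]].Formula (Fin m)) ∈ p := by
  obtain ⟨N, v, rfl⟩ := Theory.exists_modelType_is_realized_in _ p
  rw [Theory.CompleteType.formula_mem_typeOf]
  exact Formula.realize_top.2 trivial

def Mem (s : Set (Fin m → M)) : Prop := ∃ F : L[[M]].Formula (Fin m), s = {x | F.Realize x} ∧ Formula.equivSentence F ∈ p

theorem Mem_iff {s : Set (Fin m → M)} (F : L[[M]].Formula (Fin m)) (hs : ∀ x, x ∈ s ↔ F.Realize x) :
    Mem p s ↔ Formula.equivSentence F ∈ p := by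
  constructor
  · rintro ⟨G, rfl, hG⟩
    exact mono_mem p G F (fun x hx => (hs x).1 hx) hG
  · intro h
    exact ⟨F, Set.ext hs, h⟩

theorem exF {s : Set (Fin m → M)} (h : (Set.univ : Set M).Definable L s) :
    ∃ F : L[[M]].Formula (Fin m), ∀ x, x ∈ s ↔ F.Realize x := by
  obtain ⟨k, φ, c, rfl⟩ := fparam h
  exact ⟨fm φ c, fun x => (fm_real φ c x).symm⟩

variable {Γ : Type u} [Ctx M Γ]

theorem toDUlt (hp : IsDefinableType p) (e : Ctx.idx M Γ ≃ Fin m) :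
    ∃ q : DUlt L M Γ, ∀ s : Set Γ, q.mem s ↔ Mem p {x : Fin m → M | Ctx.eqv.symm (x ∘ e) ∈ s} := by
  have key : ∀ s : Set Γ, Def L M (· ∈ s) → ∃ F : L[[M]].Formula (Fin m),
      ∀ x : Fin m → M, Ctx.eqv.symm (x ∘ e) ∈ s ↔ F.Realize x := by
    intro s hs
    exact exF (s := {x : Fin m → M | Ctx.eqv.symm (x ∘ e) ∈ s}) (Definable.preimage_comp e hs)
  refine ⟨⟨fun s => Mem p {x : Fin m → M | Ctx.eqv.symm (x ∘ e) ∈ s}, ?_, ?_, ?_, ?_, ?_⟩, fun s => Iff.rfl⟩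
  · exact (Mem_iff p ⊤ (fun x => iff_of_true trivial (Formula.realize_top.2 trivial))).2 (top_mem p)
  · intro s hs
    obtain ⟨F, hF⟩ := key s hs
    refine Iff.trans ?_ ((not_mem p F).trans (not_congr (Mem_iff p F hF).symm))
    refine Mem_iff p F.not fun x => ?_
    rw [Formula.realize_not]
    exact not_congr (hF x)
  · intro s t hs ht hst h
    obtain ⟨F, hF⟩ := key s hs
    obtain ⟨G, hG⟩ := key t ht
    replace h := (Mem_iff p F hF).1 h
    refine (Mem_iff p G hG).2 ?_
    exact mono_mem p F G (fun x hx => (hG x).1 (hst ((hF x).2 hx))) h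
  · intro s t hs ht h h'
    obtain ⟨F, hF⟩ := key s hs
    obtain ⟨G, hG⟩ := key t ht
    replace h := (Mem_iff p F hF).1 h
    replace h' := (Mem_iff p G hG).1 h'
    refine (Mem_iff p (F ⊓ G) fun x => ?_).2 (inf_mem p F G h h')
    rw [Formula.realize_inf]
    exact and_congr (hF x) (hG x)
  · intro Δ _ S hS
    obtain ⟨k, φ, c, hφ⟩ := fparam hS
    let eD := Finite.equivFin (Ctx.idx M Δ)
    let d := Nat.card (Ctx.idx M Δ)
    let φ' : L.Formula (Fin m ⊕ Fin (d + k)) := φ.relabel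
      (Sum.elim (Sum.elim (fun i => Sum.inl (e i)) (fun j => Sum.inr (Fin.castAdd k (eD j)))) (fun i => Sum.inr (Fin.natAdd d i)))
    let B : (Ctx.idx M Δ → M) → Fin (d + k) → M := fun w => Fin.append (w ∘ eD.symm) c
    have h1 : ∀ w : Ctx.idx M Δ → M, Mem p {x : Fin m → M | Ctx.eqv.symm (x ∘ e) ∈ {x : Γ | (x, Ctx.eqv.symm w) ∈ S}} ↔
        paramSentence φ' (B w) ∈ p := by
      intro w
      refine Mem_iff p (fm φ' (B w)) fun x => ?_
      rw [fm_real]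
      have h2 := Set.ext_iff.1 hφ (Sum.elim (x ∘ e) w)
      simp only [mem_ofPred_eq, φ', Formula.realize_relabel] at h2 ⊢
      refine Iff.trans ?_ (h2.trans (iff_of_eq ?_))
      · exact Iff.rfl
      · congr 1
        funext a
        rcases a with (a | a) | a <;> simp [B]
    obtain ⟨k', ψ, c', hψ⟩ := hp _ φ'
    have h3 : (Set.univ : Set M).Definable L {w : Ctx.idx M Δ → M | paramSentence φ' (B w) ∈ p} := by
      have h4 : (Set.univ : Set M).Definable L {b : Fin (d + k) → M | paramSentence φ' b ∈ p} := by
        rw [hψ]; exact fdef ψ c'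
      refine Definable.preimage_map (F := B) ?_ h4
      intro j
      refine Fin.addCases (fun i => ?_) (fun i => ?_) j
      · simp only [B, Fin.append_left]
        exact DefinableFun.proj L
      · simp only [B, Fin.append_right]
        exact definableFun_const L _ (Set.mem_univ _)
    unfold Def
    convert h3 using 1
    ext w
    exact h1 w

end

/-- index equivalence -/
def tupIdx (M : Type u) : (n : ℕ) → (Ctx.idx M (Tup M n) ≃ Fin n)
  | 0 => (Equiv.equivEmpty (Fin 0)).symm
  | n+1 => ((Equiv.sumCongr (Equiv.refl Unit) (tupIdx M n)).trans (Equiv.sumComm _ _)).trans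
      ((Equiv.sumCongr (Equiv.refl (Fin n)) (Equiv.ofUnique Unit (Fin 1))).trans finSumFinEquiv)

theorem mem_pw {M : Type u} (A : Set M) : ∀ (n : ℕ) (b : Tup M n), b ∈ Pw A n ↔ ∀ i, Ctx.eqv (M := M) b i ∈ A
  | 0, b => ⟨fun _ i => (i : Empty).elim, fun _ => trivial⟩
  | n+1, b => by
    constructor
    · rintro ⟨h1, h2⟩ (i | i)
      · exact h1
      · exact (mem_pw A n b.2).1 h2 i
    · intro h
      exact ⟨h (Sum.inl ()), (mem_pw A n b.2).2 fun i => h (Sum.inr i)⟩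

theorem final {L : FirstOrder.Language.{u, u}} {M : Type u}
    [L.Structure M] [LinearOrder M] (hM : IsOMinimal L M) (A : Set M)
    (hAdef : (Set.univ : Set M).Definable₁ L A) (hAinf : A.Infinite)
    {m n : ℕ} (φ : L.Formula (Fin m ⊕ Fin n)) :
    #{q : Set ((L[[M]])[[Fin m]].Sentence) |
        ∃ p : (L[[M]].completeTheory M).CompleteType (Fin m),
          IsDefinableType p ∧ q = restrictTo A φ p} ≤ #A := by
  have := hM.denselyOrdered
  have := hM.noMinOrder
  have := hM.noMaxOrder
  have : Nonempty M := hAinf.nonempty.elim fun a _ => ⟨a⟩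
  have : OMin L M := omin_of hM
  have := hAinf.to_subtype
  have hκ : ℵ₀ ≤ #A := Cardinal.infinite_iff.1 inferInstance
  let em := tupIdx M m
  let en := tupIdx M n
  let S : Set (Tup M m × Tup M n) := {z | φ.Realize (Sum.elim (Ctx.eqv (M := M) z.1 ∘ em.symm) (Ctx.eqv (M := M) z.2 ∘ en.symm))}
  have hS : Def L M (· ∈ S) := by
    have h0 : (Set.univ : Set M).Definable L {w : Fin m ⊕ Fin n → M | φ.Realize w} :=
      Definable.mono (empty_definable_iff.2 ⟨φ, rfl⟩) (Set.empty_subset _)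
    have h1 := Definable.preimage_comp (Sum.map em.symm en.symm) h0
    refine (iff_of_eq (congrArg ((Set.univ : Set M).Definable L) (Set.ext fun w => iff_of_eq ?_))).1 h1
    change Formula.Realize φ _ = Formula.Realize φ _
    congr 1
    funext a
    rcases a with a | a
    · exact (congrFun (Equiv.apply_symm_apply (Ctx.eqv (M := M) (Γ := Tup M m)) (fun i => w (Sum.inl i))) (em.symm a)).symm
    · exact (congrFun (Equiv.apply_symm_apply (Ctx.eqv (M := M) (Γ := Tup M n)) (fun i => w (Sum.inr i))) (en.symm a)).symm
  have hT := tt_all (κ := #A) hM (def_iff₁.2 hAdef) hκ (le_refl _) m n S hS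
  refine (Small.image (f := fun D : Set (Tup M n) => (fun b : Tup M n => paramSentence φ (Ctx.eqv (M := M) b ∘ en.symm)) '' D) hT).mono ?_
  rintro q ⟨p, hp, rfl⟩
  obtain ⟨P, hP⟩ := toDUlt p hp em
  refine ⟨_, ⟨P, rfl⟩, ?_⟩
  have key : ∀ b : Tup M n, P.mem {x | (x, b) ∈ S} ↔ paramSentence φ (Ctx.eqv (M := M) b ∘ en.symm) ∈ p := by
    intro b
    rw [hP]
    refine Mem_iff p (fm φ _) fun x => ?_
    rw [fm_real]
    simp only [mem_ofPred_eq, S]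
    refine iff_of_eq ?_
    congr 1
    funext a
    rcases a with a | a <;> simp
  ext σ
  constructor
  · rintro ⟨b, ⟨hb, hb'⟩, rfl⟩
    exact ⟨_, fun i => (mem_pw A n b).1 hb _, rfl, (key b).1 hb'⟩
  · rintro ⟨b, hb, rfl, hσ⟩
    have e1 : Ctx.eqv (M := M) (Ctx.eqv.symm (b ∘ en) : Tup M n) ∘ en.symm = b := by
      funext i; simp
    refine ⟨(Ctx.eqv.symm (b ∘ en) : Tup M n), ⟨(mem_pw A n _).2 fun i => ?_, (key _).2 ?_⟩, ?_⟩
    · simpa using hb _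
    · rw [e1]; exact hσ
    · simp only [e1]
end OM

/-- If `M` is o-minimal, `A ⊆ M` is an infinite definable set and `φ(x;y)` is a formula, then
the set `{p|_{φ,A} : p ∈ S_x^def(M)}` of restrictions of definable types over `M` has
cardinality at most `|A|`. -/
theorem card_restrictions_of_definable_types_le {L : FirstOrder.Language.{u, u}} {M : Type u}
    [L.Structure M] [LinearOrder M] (hM : IsOMinimal L M) (A : Set M)
    (hAdef : (Set.univ : Set M).Definable₁ L A) (hAinf : A.Infinite)
    {m n : ℕ} (φ : L.Formula (Fin m ⊕ Fin n)) :
    #{q : Set ((L[[M]])[[Fin m]].Sentence) |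
        ∃ p : (L[[M]].completeTheory M).CompleteType (Fin m),
          IsDefinableType p ∧ q = restrictTo A φ p} ≤ #A := by
  exact OM.final hM A hAdef hAinf φ
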